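/- arXiv:2412.18002 — 3 statements merged into one kernel-verified Lean document; each statement's English description precedes it below -/
import Mathlib

section
/- For every integer k ≥ 385, the maximum size of a k-nice subset of ℤ² is: k+4 if k ≡ 2 (mod 6); k+3 if k mod 6 ∈ {1,3,5}; and k+2 if k mod 6 ∈ {0,4}. That is, every k-nice set has at most this many elements, and there exists a k-nice set with exactly this many elements. -/
/-- A set `Q ⊆ ℤ²` is `k`-nice if every element is a nonzero coprime pair,
`Q` does not contain both a pair and its negation, and all cross determinants
are bounded by `k` in absolute value. -/
def IsKNice (k : ℕ) (Q : Set (ℤ × ℤ)) : Prop :=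
  (∀ p ∈ Q, p ≠ (0, 0) ∧ Int.gcd p.1 p.2 = 1) ∧
  (∀ p ∈ Q, -p ∉ Q) ∧
  (∀ p ∈ Q, ∀ q ∈ Q, |p.1 * q.2 - q.1 * p.2| ≤ (k : ℤ))

/-- `Q` is y-non-negative: all second coordinates are non-negative. -/
def YNonneg (Q : Set (ℤ × ℤ)) : Prop := ∀ p ∈ Q, 0 ≤ p.2

/-- The height of `Q` is at most `h`. -/
def HeightLe (Q : Set (ℤ × ℤ)) (h : ℕ) : Prop := ∀ p ∈ Q, |p.2| ≤ (h : ℤ)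

/-- The height of `Q` is exactly `h`: the maximum of `|n|` over `(m, n) ∈ Q` is `h`. -/
def HeightEq (Q : Set (ℤ × ℤ)) (h : ℕ) : Prop :=
  HeightLe Q h ∧ ∃ p ∈ Q, |p.2| = (h : ℤ)

/-- The claimed maximum size of a `k`-nice set for large `k`. -/
def targetSize (k : ℕ) : ℕ :=
  if k % 6 = 2 then k + 4
  else if k % 6 = 1 ∨ k % 6 = 3 ∨ k % 6 = 5 then k + 3
  else k + 2

/-!
After a transformation in `SL₂(ℤ)` and changes of sign, a `k`-nice set has minimal height among the
`k`-nice sets of its size and lies in the upper half plane. Minimality gives `3 h² ≤ 4 k` for its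
height `h`, since a shear or rotation would lower the height otherwise.

If the points at height `a` have first coordinates in `[-left a, right a]`, then the determinant
bound reads `b * right a + a * left b ≤ k`. There are at most as many of them as integers coprime to
`a` in that interval, a quasi-linear function of the two ends. Optimizing these counts is elementary
for `h ≤ 3`, where the sizes beyond `k + 2` come from. For larger `h` the bound is `k + 2`: the
count of a level is about `φ(a) / a` times its length, and pairing short levels with long ones
leaves a margin that outweighs the rounding errors. The remaining small `k` with `4 ≤ h ≤ 51` are
settled by eliminating the levels exactly, modulo their heights; for `h ≥ 4700` the estimate only
needs the densities of the weights `φ(gcd(a, 2310)) / gcd(a, 2310)` on four blocks of levels.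
-/

/-! ### Normal form -/

/-- The determinant of the matrix with rows `p` and `q`. -/
def crossDet (p q : ℤ × ℤ) : ℤ := p.1 * q.2 - q.1 * p.2

/-- The action of the integer matrix `!![a, b; c, d]` on pairs. -/
def matrixMap (a b c d : ℤ) (z : ℤ × ℤ) : ℤ × ℤ := (a * z.1 + b * z.2, c * z.1 + d * z.2)

lemma eq_or_eq_neg_of_crossDet_eq_zero {p q : ℤ × ℤ} (hp : IsCoprime p.1 p.2)
    (hq : IsCoprime q.1 q.2) (h : crossDet p q = 0) : q = p ∨ q = -p := by
  obtain ⟨a, b⟩ := p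
  obtain ⟨c, d⟩ := q
  obtain ⟨u, v, huv⟩ := hp
  simp only [crossDet] at h hq huv
  obtain ⟨t, rfl, rfl⟩ : ∃ t, c = t * a ∧ d = t * b :=
    ⟨u * c + v * d, by linear_combination -c * huv - v * h, by linear_combination -d * huv + u * h⟩
  have ht : IsUnit t := hq.isUnit_of_dvd' ⟨a, rfl⟩ ⟨b, rfl⟩
  rcases Int.isUnit_iff.mp ht with rfl | rfl <;> simp

lemma crossDet_matrixMap (a b c d : ℤ) (z w : ℤ × ℤ) :
    crossDet (matrixMap a b c d z) (matrixMap a b c d w) = (a * d - b * c) * crossDet z w := by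
  simp only [crossDet, matrixMap]; ring

lemma matrixMap_injective {a b c d : ℤ} (hdet : a * d - b * c = 1) :
    Function.Injective (matrixMap a b c d) := by
  apply Function.LeftInverse.injective (g := matrixMap d (-b) (-c) a)
  rintro ⟨x, y⟩
  ext
  · simp only [matrixMap]; linear_combination x * hdet
  · simp only [matrixMap]; linear_combination y * hdet

lemma isCoprime_matrixMap {a b c d : ℤ} (hdet : a * d - b * c = 1) {z : ℤ × ℤ}
    (hz : IsCoprime z.1 z.2) :
    IsCoprime (matrixMap a b c d z).1 (matrixMap a b c d z).2 := by
  obtain ⟨u, v, huv⟩ := hz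
  refine ⟨u * d - v * c, v * a - u * b, ?_⟩
  simp only [matrixMap]
  linear_combination huv + (u * z.1 + v * z.2) * hdet

namespace IsKNice

variable {k : ℕ} {Q : Set (ℤ × ℤ)}

lemma of_isCoprime (hcop : ∀ p ∈ Q, IsCoprime p.1 p.2) (hneg : ∀ p ∈ Q, -p ∉ Q)
    (hdet : ∀ p ∈ Q, ∀ q ∈ Q, |crossDet p q| ≤ (k : ℤ)) : IsKNice k Q := by
  refine ⟨fun p hp => ⟨?_, Int.isCoprime_iff_gcd_eq_one.mp (hcop p hp)⟩, hneg, hdet⟩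
  rintro rfl
  exact not_isCoprime_zero_zero (hcop _ hp)

lemma isCoprime (hQ : IsKNice k Q) {p : ℤ × ℤ} (hp : p ∈ Q) : IsCoprime p.1 p.2 :=
  Int.isCoprime_iff_gcd_eq_one.mpr (hQ.1 p hp).2

lemma abs_crossDet_le (hQ : IsKNice k Q) {p q : ℤ × ℤ} (hp : p ∈ Q) (hq : q ∈ Q) :
    |crossDet p q| ≤ k :=
  hQ.2.2 p hp q hq

lemma eq_of_crossDet_eq_zero (hQ : IsKNice k Q) {p q : ℤ × ℤ} (hp : p ∈ Q) (hq : q ∈ Q)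
    (h : crossDet p q = 0) : q = p := by
  rcases eq_or_eq_neg_of_crossDet_eq_zero (hQ.isCoprime hp) (hQ.isCoprime hq) h with e | e
  · exact e
  · exact absurd (e ▸ hq) (hQ.2.1 p hp)

lemma finite (hQ : IsKNice k Q) : Q.Finite := by
  by_cases hsub : Q.Subsingleton
  · exact hsub.finite
  obtain ⟨p, hp, q, hq, hpq⟩ := Set.not_subsingleton_iff.mp hsub
  have hne : crossDet p q ≠ 0 := fun h => hpq (hQ.eq_of_crossDet_eq_zero hp hq h).symm
  have hinj : Function.Injective fun z => (crossDet p z, crossDet q z) := by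
    intro z w h
    simp only [crossDet, Prod.mk.injEq] at h hne
    have h₁ : (p.1 * q.2 - q.1 * p.2) * (z.1 - w.1) = 0 := by
      linear_combination q.1 * h.1 - p.1 * h.2
    have h₂ : (p.1 * q.2 - q.1 * p.2) * (z.2 - w.2) = 0 := by
      linear_combination q.2 * h.1 - p.2 * h.2
    exact Prod.ext (sub_eq_zero.mp ((mul_eq_zero.mp h₁).resolve_left hne))
      (sub_eq_zero.mp ((mul_eq_zero.mp h₂).resolve_left hne))
  refine Set.Finite.of_finite_image (Set.Finite.subset
    ((Set.finite_Icc (-(k : ℤ)) k).prod (Set.finite_Icc (-(k : ℤ)) k)) ?_) hinj.injOn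
  rintro _ ⟨z, hz, rfl⟩
  exact ⟨abs_le.mp (hQ.abs_crossDet_le hp hz), abs_le.mp (hQ.abs_crossDet_le hq hz)⟩

lemma image_matrixMap (hQ : IsKNice k Q) {a b c d : ℤ} (hdet : a * d - b * c = 1) :
    IsKNice k (matrixMap a b c d '' Q) := by
  refine of_isCoprime ?_ ?_ ?_
  · rintro _ ⟨z, hz, rfl⟩
    exact isCoprime_matrixMap hdet (hQ.isCoprime hz)
  · rintro _ ⟨z, hz, rfl⟩ ⟨w, hw, h⟩
    have hwz : w = -z := matrixMap_injective hdet (h.trans (by ext <;> simp [matrixMap] <;> ring))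
    exact hQ.2.1 z hz (hwz ▸ hw)
  · rintro _ ⟨z, hz, rfl⟩ _ ⟨w, hw, rfl⟩
    rw [crossDet_matrixMap, hdet, one_mul]
    exact hQ.abs_crossDet_le hz hw

lemma injOn_of_eq_or_eq_neg (hQ : IsKNice k Q) {f : ℤ × ℤ → ℤ × ℤ}
    (hf : ∀ z, f z = z ∨ f z = -z) : Set.InjOn f Q := by
  intro z hz w hw h
  have hzw : z = w ∨ z = -w := by
    rcases hf z with hz' | hz' <;> rcases hf w with hw' | hw' <;> rw [hz', hw'] at h
    · exact .inl h
    · exact .inr h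
    · exact .inr (neg_eq_iff_eq_neg.mp h)
    · exact .inl (neg_injective h)
  exact hzw.resolve_right fun e => hQ.2.1 w hw (e ▸ hz)

lemma image_of_eq_or_eq_neg (hQ : IsKNice k Q) {f : ℤ × ℤ → ℤ × ℤ}
    (hf : ∀ z, f z = z ∨ f z = -z) : IsKNice k (f '' Q) := by
  have hdet (z w) : |crossDet (f z) (f w)| = |crossDet z w| := by
    have hneg (p q : ℤ × ℤ) : crossDet (-p) q = -crossDet p q ∧
        crossDet p (-q) = -crossDet p q := by
      constructor <;> simp only [crossDet, Prod.fst_neg, Prod.snd_neg] <;> ring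
    rcases hf z with hz | hz <;> rcases hf w with hw | hw <;> simp only [hz, hw, hneg, abs_neg]
  refine of_isCoprime ?_ ?_ ?_
  · rintro _ ⟨z, hz, rfl⟩
    rcases hf z with e | e <;> rw [e]
    · exact hQ.isCoprime hz
    · exact (hQ.isCoprime hz).neg_neg
  · rintro _ ⟨z, hz, rfl⟩ ⟨w, hw, h⟩
    have hwz : w = z := hQ.eq_of_crossDet_eq_zero hz hw <| by
      rw [← abs_eq_zero, ← hdet, h, abs_eq_zero, crossDet, Prod.fst_neg, Prod.snd_neg]
      ring
    have hz0 : f z = 0 := self_eq_neg.mp (hwz ▸ h)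
    have : z = 0 := by rcases hf z with e | e <;> simpa [e] using hz0
    exact (hQ.1 z hz).1 this
  · rintro _ ⟨z, hz, rfl⟩ _ ⟨w, hw, rfl⟩
    exact (hdet z w).trans_le (hQ.abs_crossDet_le hz hw)

end IsKNice

/-- The representative of `±z` in the upper half plane. -/
def upperRep (z : ℤ × ℤ) : ℤ × ℤ := if z.2 < 0 then -z else z

lemma upperRep_eq_or_eq_neg (z : ℤ × ℤ) : upperRep z = z ∨ upperRep z = -z := by
  unfold upperRep; split_ifs <;> simp

lemma upperRep_snd (z : ℤ × ℤ) : (upperRep z).2 = |z.2| := by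
  unfold upperRep
  split_ifs with h
  · exact (abs_of_neg h).symm
  · exact (abs_of_nonneg (not_lt.mp h)).symm

/-- `Q` is `k`-nice of height at most `h`, and no `k`-nice set of the same size has smaller
height. -/
structure IsHeightMinimal (k : ℕ) (Q : Set (ℤ × ℤ)) (h : ℕ) : Prop where
  isKNice : IsKNice k Q
  heightLe : HeightLe Q h
  le_of_heightLe : ∀ R, IsKNice k R → R.ncard = Q.ncard → ∀ h', HeightLe R h' → h ≤ h'

lemma IsKNice.exists_isHeightMinimal {k : ℕ} {Q : Set (ℤ × ℤ)} (hQ : IsKNice k Q) :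
    ∃ (R : Set (ℤ × ℤ)) (h : ℕ), R.ncard = Q.ncard ∧ IsHeightMinimal k R h := by
  classical
  have hex : ∃ (h : ℕ) (R : Set (ℤ × ℤ)), IsKNice k R ∧ R.ncard = Q.ncard ∧ HeightLe R h := by
    obtain ⟨B, hB⟩ := (hQ.finite.image fun z => z.2.natAbs).bddAbove
    refine ⟨B, Q, hQ, rfl, fun p hp => ?_⟩
    rw [Int.abs_eq_natAbs]
    exact_mod_cast hB ⟨p, hp, rfl⟩
  obtain ⟨R, hR, hcard, hle⟩ := Nat.find_spec hex
  exact ⟨R, Nat.find hex, hcard, hR, hle, fun R' hR' hcard' h' hle' =>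
    Nat.find_min' hex ⟨R', hR', hcard'.trans hcard, hle'⟩⟩

namespace IsHeightMinimal

variable {k h : ℕ} {Q : Set (ℤ × ℤ)}

lemma image_of_injOn (hQ : IsHeightMinimal k Q h) {f : ℤ × ℤ → ℤ × ℤ} (hf : Set.InjOn f Q)
    (hnice : IsKNice k (f '' Q)) (habs : ∀ z, |(f z).2| = |z.2|) :
    IsHeightMinimal k (f '' Q) h := by
  refine ⟨hnice, ?_, fun R hR hcard => hQ.le_of_heightLe R hR (hcard.trans hf.ncard_image)⟩
  rintro _ ⟨z, hz, rfl⟩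
  exact (habs z).trans_le (hQ.heightLe z hz)

lemma exists_le_abs_snd (hQ : IsHeightMinimal k Q h) (hpos : 0 < h) {a b c d : ℤ}
    (hdet : a * d - b * c = 1) : ∃ z ∈ Q, (h : ℤ) ≤ |(matrixMap a b c d z).2| := by
  by_contra! hlt
  have := hQ.le_of_heightLe _ (hQ.isKNice.image_matrixMap hdet)
    (matrixMap_injective hdet).injOn.ncard_image (h - 1) (by
      rintro _ ⟨z, hz, rfl⟩
      have := hlt z hz
      omega)
  omega

lemma heightEq (hQ : IsHeightMinimal k Q h) (hne : Q.Nonempty) : HeightEq Q h := by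
  refine ⟨hQ.heightLe, ?_⟩
  rcases h.eq_zero_or_pos with rfl | hpos
  · obtain ⟨z, hz⟩ := hne
    exact ⟨z, hz, le_antisymm (hQ.heightLe z hz) (abs_nonneg _)⟩
  · obtain ⟨z, hz, hle⟩ := hQ.exists_le_abs_snd hpos (a := 1) (b := 0) (c := 0) (d := 1) (by ring)
    simp only [matrixMap, zero_mul, one_mul, zero_add] at hle
    exact ⟨z, hz, le_antisymm (hQ.heightLe z hz) hle⟩

end IsHeightMinimal

lemma four_mul_mul_sub_le_sq (h x : ℤ) : 4 * (x * (h - x)) ≤ h ^ 2 := by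
  nlinarith [sq_nonneg (h - 2 * x)]

/-- Multiplied together, the three reverse inequalities would contradict `4 t (h - t) ≤ h ^ 2` for
`t = x, y, z`. -/
lemma four_mul_le_sq_of_cyclic {h x y z : ℤ} (hx : 0 ≤ x) (hxh : x ≤ h) (hy : 0 ≤ y) (hyh : y ≤ h)
    (hz : 0 ≤ z) (hzh : z ≤ h) :
    4 * (x * y) ≤ h ^ 2 ∨ 4 * ((h - x) * z) ≤ h ^ 2 ∨ 4 * ((h - y) * (h - z)) ≤ h ^ 2 := by
  by_contra! hlt
  obtain ⟨h₁, h₂, h₃⟩ := hlt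
  have : 0 ≤ h ^ 2 := sq_nonneg h
  have hx' := four_mul_mul_sub_le_sq h x
  have hy' := four_mul_mul_sub_le_sq h y
  have hz' := four_mul_mul_sub_le_sq h z
  have upper : 4 * (x * (h - x)) * (4 * (y * (h - y))) * (4 * (z * (h - z))) ≤
      h ^ 2 * h ^ 2 * h ^ 2 := by
    have := mul_nonneg hx (sub_nonneg.mpr hxh)
    have := mul_nonneg hy (sub_nonneg.mpr hyh)
    have := mul_nonneg hz (sub_nonneg.mpr hzh)
    gcongr
  have lower : h ^ 2 * h ^ 2 * h ^ 2 <
      4 * (x * y) * (4 * ((h - x) * z)) * (4 * ((h - y) * (h - z))) := by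
    gcongr
  refine absurd (upper.trans_lt lower) (not_lt.mpr (le_of_eq ?_))
  ring

/-- Here `(m, h)` is a highest point, and `(x, w)`, `(x', y)` attest that neither
`(s, t) ↦ (-t, s)` nor `(s, t) ↦ (-t, s - t)` lowers the height. -/
lemma three_mul_sq_le_of_crossDet_le {h m k x w x' y : ℤ} (hm : 0 ≤ m) (hmh : m < h)
    (hx : h ≤ x) (hw : |w| ≤ h) (hxy : h ≤ x' - y) (hy : |y| ≤ h)
    (h₁ : h * x - m * w ≤ k) (h₂ : h * x' - m * y ≤ k) (h₃ : w * x' - x * y ≤ k) :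
    3 * h ^ 2 ≤ 4 * k := by
  rw [abs_le] at hw hy
  by_cases hw0 : w ≤ 0
  · nlinarith
  by_cases hy0 : 0 ≤ y
  · nlinarith
  push Not at hw0 hy0
  have e₁ : h ^ 2 - k ≤ m * w := by nlinarith
  have e₂ : h ^ 2 - k ≤ (h - m) * -y := by nlinarith
  have e₃ : h ^ 2 - k ≤ (h - w) * (h - -y) := by nlinarith
  rcases four_mul_le_sq_of_cyclic hm hmh.le hw0.le hw.2 (neg_nonneg.mpr hy0.le)
    (neg_le.mpr hy.1) with e | e | e <;> linarith

namespace IsHeightMinimal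

variable {k h : ℕ} {Q : Set (ℤ × ℤ)}

lemma three_mul_sq_le (hQ : IsHeightMinimal k Q h) {m : ℤ} (hm : 0 ≤ m) (hmh : m < h)
    (hmem : (m, (h : ℤ)) ∈ Q) : 3 * h ^ 2 ≤ 4 * k := by
  have hpos : 0 < h := by omega
  obtain ⟨⟨x, w⟩, hR, hx⟩ :=
    hQ.exists_le_abs_snd hpos (a := 0) (b := 1) (c := -1) (d := 0) (by ring)
  obtain ⟨⟨x', y⟩, hS, hxy⟩ :=
    hQ.exists_le_abs_snd hpos (a := 0) (b := 1) (c := -1) (d := 1) (by ring)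
  have hw : |w| ≤ h := hQ.heightLe _ hR
  have hy : |y| ≤ h := hQ.heightLe _ hS
  have h₁ := abs_le.mp (hQ.isKNice.abs_crossDet_le hmem hR)
  have h₂ := abs_le.mp (hQ.isKNice.abs_crossDet_le hmem hS)
  have h₃ := abs_le.mp (hQ.isKNice.abs_crossDet_le hR hS)
  simp only [crossDet, matrixMap] at h₁ h₂ h₃ hx hxy
  suffices 3 * (h : ℤ) ^ 2 ≤ 4 * k by exact_mod_cast this
  have hw' : |-w| ≤ h := (abs_neg w).trans_le hw
  have hy' : |-y| ≤ h := (abs_neg y).trans_le hy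
  rcases le_abs.mp hx with hx | hx <;> rcases le_abs.mp hxy with hxy | hxy
  · exact three_mul_sq_le_of_crossDet_le (x := -x) (x' := -x') hm hmh
      (by linarith) hw' (by linarith) hy' (by linarith) (by linarith) (by linarith)
  · exact three_mul_sq_le_of_crossDet_le (x := -x) (x' := x') hm hmh
      (by linarith) hw' (by linarith) hy (by linarith) (by linarith) (by linarith)
  · exact three_mul_sq_le_of_crossDet_le (x := x) (x' := -x') hm hmh
      (by linarith) hw (by linarith) hy' (by linarith) (by linarith) (by linarith)
  · exact three_mul_sq_le_of_crossDet_le (x := x) (x' := x') hm hmh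
      (by linarith) hw (by linarith) hy (by linarith) (by linarith) (by linarith)

lemma exists_yNonneg (hQ : IsHeightMinimal k Q h) :
    ∃ R : Set (ℤ × ℤ), R.ncard = Q.ncard ∧ YNonneg R ∧ IsHeightMinimal k R h := by
  have hinj := hQ.isKNice.injOn_of_eq_or_eq_neg upperRep_eq_or_eq_neg
  refine ⟨upperRep '' Q, hinj.ncard_image, ?_, hQ.image_of_injOn hinj
    (hQ.isKNice.image_of_eq_or_eq_neg upperRep_eq_or_eq_neg) fun z => ?_⟩
  · rintro _ ⟨z, -, rfl⟩
    exact (abs_nonneg z.2).trans_eq (upperRep_snd z).symm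
  · rw [upperRep_snd, abs_abs]

lemma exists_top_mem_Ico (hQ : IsHeightMinimal k Q h) (hnonneg : YNonneg Q) (hne : Q.Nonempty)
    (hpos : 0 < h) : ∃ (R : Set (ℤ × ℤ)) (m : ℤ), R.ncard = Q.ncard ∧ YNonneg R ∧
      IsHeightMinimal k R h ∧ 0 ≤ m ∧ m < h ∧ (m, (h : ℤ)) ∈ R := by
  obtain ⟨-, ⟨m, n⟩, hmem, habs⟩ := hQ.heightEq hne
  obtain rfl : n = h := (abs_of_nonneg (hnonneg _ hmem)).symm.trans habs
  have hh : (0 : ℤ) < h := by exact_mod_cast hpos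
  have hdet : 1 * 1 - -(m / h) * 0 = (1 : ℤ) := by ring
  have hinj := (matrixMap_injective hdet).injOn (s := Q)
  have hsnd (z) : (matrixMap 1 (-(m / h)) 0 1 z).2 = z.2 := by simp [matrixMap]
  refine ⟨matrixMap 1 (-(m / h)) 0 1 '' Q, m % h, hinj.ncard_image, ?_,
    hQ.image_of_injOn hinj (hQ.isKNice.image_matrixMap hdet) fun z => by rw [hsnd],
    Int.emod_nonneg _ hh.ne', Int.emod_lt_of_pos _ hh, (m, (h : ℤ)), hmem, ?_⟩
  · rintro _ ⟨z, hz, rfl⟩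
    exact (hnonneg z hz).trans_eq (hsnd z).symm
  · refine Prod.ext ?_ (hsnd _)
    simp only [matrixMap, Int.emod_def]
    ring

end IsHeightMinimal

lemma IsKNice.exists_normalForm {k : ℕ} {Q : Set (ℤ × ℤ)} (hQ : IsKNice k Q)
    (hne : Q.Nonempty) : ∃ (R : Set (ℤ × ℤ)) (h : ℕ), IsKNice k R ∧ R.ncard = Q.ncard ∧
      YNonneg R ∧ HeightEq R h ∧ 3 * h ^ 2 ≤ 4 * k := by
  have nonempty_of_ncard {R : Set (ℤ × ℤ)} (h : R.ncard = Q.ncard) : R.Nonempty :=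
    Set.nonempty_of_ncard_ne_zero (h.trans_ne ((Set.ncard_pos hQ.finite).mpr hne).ne')
  obtain ⟨R₀, h, hcard₀, hmin₀⟩ := hQ.exists_isHeightMinimal
  obtain ⟨R₁, hcard₁, hnonneg₁, hmin₁⟩ := hmin₀.exists_yNonneg
  replace hcard₁ := hcard₁.trans hcard₀
  have hne₁ := nonempty_of_ncard hcard₁
  rcases h.eq_zero_or_pos with rfl | hpos
  · exact ⟨R₁, 0, hmin₁.isKNice, hcard₁, hnonneg₁, hmin₁.heightEq hne₁, by simp⟩
  obtain ⟨R, m, hcard, hnonneg, hmin, hm, hmh, hmem⟩ :=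
    hmin₁.exists_top_mem_Ico hnonneg₁ hne₁ hpos
  replace hcard := hcard.trans hcard₁
  exact ⟨R, h, hmin.isKNice, hcard, hnonneg, hmin.heightEq (nonempty_of_ncard hcard),
    hmin.three_mul_sq_le hm hmh hmem⟩

/-! ### Bounds for the horizontal levels -/

/-- The determinant bounds relating the ends of the levels of a set of height `h`: level `a` lies in
`[-left a, right a]`; an empty level is represented with `-left a ≤ right a + 1`. -/
structure LevelBounds (k h : ℕ) (right left : ℕ → ℤ) : Prop where
  pos : 1 ≤ h
  pair : ∀ a b : ℕ, 1 ≤ a → a ≤ h → 1 ≤ b → b ≤ h → (b : ℤ) * right a + a * left b ≤ k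
  neg_one_le : ∀ a : ℕ, 1 ≤ a → a ≤ h → -1 ≤ right a + left a
  top_nonneg : 0 ≤ right h + left h

/-- The number of integers in `[-l, r]` coprime to `a`, bounding the size of a level at height `a`;
the left end is negated so that both ends play the same role. -/
noncomputable def levelCount (a : ℕ) (r l : ℤ) : ℕ :=
  {m ∈ Finset.Icc (-l) r | Int.gcd m a = 1}.card

/-- An end of a level is either a point of `Q` or, on an empty level, a point of the appropriate
side of the ray through the top point `(m, h)`. -/
lemma IsKNice.mul_sub_mul_le_of_mem_or {k h a b : ℕ} {Q : Set (ℤ × ℤ)} (hQ : IsKNice k Q)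
    {m u v : ℤ} (hm : (m, (h : ℤ)) ∈ Q) (hpos : 0 < h) (hah : a ≤ h) (hbh : b ≤ h)
    (hu : (u, (a : ℤ)) ∈ Q ∨ h * u ≤ a * m) (hv : (v, (b : ℤ)) ∈ Q ∨ b * m ≤ h * v) :
    b * u - a * v ≤ k := by
  have hh : (0 : ℤ) < h := by exact_mod_cast hpos
  have ha : (a : ℤ) ≤ h := by exact_mod_cast hah
  have hb : (b : ℤ) ≤ h := by exact_mod_cast hbh
  have hdet {x y : ℤ} {i j : ℕ} (hx : (x, (i : ℤ)) ∈ Q) (hy : (y, (j : ℤ)) ∈ Q) :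
      j * x - i * y ≤ k := by
    have := (abs_le.mp (hQ.abs_crossDet_le hx hy)).2
    simp only [crossDet] at this
    linarith
  rcases hu with hu | hu <;> rcases hv with hv | hv
  · exact hdet hu hv
  · refine le_of_mul_le_mul_left ?_ hh
    calc (h : ℤ) * (b * u - a * v) = b * (h * u) - a * (h * v) := by ring
      _ ≤ b * (h * u) - a * (b * m) := by gcongr
      _ = b * (h * u - a * m) := by ring
      _ ≤ b * k := by gcongr; exact hdet hu hm
      _ ≤ h * k := by gcongr
  · refine le_of_mul_le_mul_left ?_ hh
    calc (h : ℤ) * (b * u - a * v) = b * (h * u) - h * (a * v) := by ring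
      _ ≤ b * (a * m) - h * (a * v) := by gcongr
      _ = a * (b * m - h * v) := by ring
      _ ≤ a * k := by gcongr; exact hdet hm hv
      _ ≤ h * k := by gcongr
  · refine le_of_mul_le_mul_left ?_ hh
    calc (h : ℤ) * (b * u - a * v) = b * (h * u) - a * (h * v) := by ring
      _ ≤ b * (a * m) - a * (b * m) := by gcongr
      _ ≤ h * k := by rw [mul_left_comm, sub_self]; positivity

lemma exists_level_ends {Q : Set (ℤ × ℤ)} (hQ : Q.Finite) {h : ℕ} (hpos : 0 < h) (m : ℤ)
    (a : ℕ) : ∃ u w : ℤ, (∀ x, (x, (a : ℤ)) ∈ Q → x ∈ Finset.Icc (-w) u) ∧ -1 ≤ u + w ∧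
      ((u, (a : ℤ)) ∈ Q ∨ h * u ≤ a * m) ∧ ((-w, (a : ℤ)) ∈ Q ∨ a * m ≤ h * -w) := by
  have hh : (0 : ℤ) < h := by exact_mod_cast hpos
  rcases {x : ℤ | (x, (a : ℤ)) ∈ Q}.eq_empty_or_nonempty with hempty | hne
  · have hlt := Int.lt_ediv_add_one_mul_self (a * m) hh
    refine ⟨a * m / h, -(a * m / h + 1), fun x hx => ?_, by omega,
      .inr (Int.mul_ediv_self_le hh.ne'), .inr ?_⟩
    · exact (Set.eq_empty_iff_forall_notMem.mp hempty x hx).elim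
    · rw [neg_neg, mul_comm (h : ℤ)]
      exact hlt.le
  · have hfin : {x : ℤ | (x, (a : ℤ)) ∈ Q}.Finite :=
      hQ.preimage (Prod.mk_left_injective (a : ℤ)).injOn
    obtain ⟨u, hu, hmax⟩ := hfin.exists_maximal hne
    obtain ⟨l, hl, hmin⟩ := hfin.exists_minimal hne
    have hle {x} (hx : (x, (a : ℤ)) ∈ Q) : l ≤ x ∧ x ≤ u :=
      ⟨(le_total l x).elim id (hmin hx), (le_total x u).elim id (hmax hx)⟩
    refine ⟨u, -l, fun x hx => ?_, ?_, .inl hu, .inl (by rwa [neg_neg])⟩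
    · rw [neg_neg]
      exact Finset.mem_Icc.mpr (hle hx)
    · linarith [(hle hl).2]

lemma IsKNice.ncard_le_one_add_sum_levelCount {k h : ℕ} {Q : Set (ℤ × ℤ)} (hQ : IsKNice k Q)
    (hnonneg : YNonneg Q) (hle : HeightLe Q h) {right left : ℕ → ℤ}
    (hmem : ∀ (a : ℕ) (x : ℤ), (x, (a : ℤ)) ∈ Q → x ∈ Finset.Icc (-left a) (right a)) :
    Q.ncard ≤ 1 + ∑ a ∈ Finset.Icc 1 h, levelCount a (right a) (left a) := by
  classical
  lift Q to Finset (ℤ × ℤ) using hQ.finite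
  have hmaps : ∀ z ∈ Q, z.2.toNat ∈ insert 0 (Finset.Icc 1 h) := fun z hz => by
    have := abs_le.mp (hle z hz)
    rw [Finset.mem_insert, Finset.mem_Icc]
    omega
  rw [Set.ncard_coe_finset, Finset.card_eq_sum_card_fiberwise hmaps,
    Finset.sum_insert (by simp)]
  gcongr with a
  · rw [Finset.card_le_one]
    intro p hp q hq
    rw [Finset.mem_filter] at hp hq
    have hp₂ := hnonneg p hp.1
    have hq₂ := hnonneg q hq.1
    refine (hQ.eq_of_crossDet_eq_zero hp.1 hq.1 ?_).symm
    rw [crossDet, show p.2 = 0 by omega, show q.2 = 0 by omega]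
    ring
  · have hsnd {z : ℤ × ℤ} (hz : z ∈ Q.filter fun z => z.2.toNat = a) : z.2 = a := by
      have := hnonneg z (Finset.mem_filter.mp hz).1
      have := (Finset.mem_filter.mp hz).2
      omega
    refine Finset.card_le_card_of_injOn Prod.fst (fun z hz => ?_)
      fun z hz w hw e => Prod.ext e ((hsnd hz).trans (hsnd hw).symm)
    have hzQ := (Finset.mem_filter.mp hz).1
    have hza := hsnd hz
    refine Finset.mem_filter.mpr ⟨hmem a z.1 (hza ▸ hzQ), ?_⟩
    rw [← hza]
    exact (hQ.1 z hzQ).2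

lemma IsKNice.exists_levelBounds {k : ℕ} {Q : Set (ℤ × ℤ)} (hQ : IsKNice k Q) :
    Q.ncard ≤ 1 ∨ ∃ (h : ℕ) (right left : ℕ → ℤ), LevelBounds k h right left ∧
      3 * h ^ 2 ≤ 4 * k ∧ Q.ncard ≤ 1 + ∑ a ∈ Finset.Icc 1 h, levelCount a (right a) (left a) := by
  rcases Q.eq_empty_or_nonempty with rfl | hne
  · simp
  obtain ⟨R, h, hR, hcard, hnonneg, ⟨hle, ⟨m, n⟩, hmem, habs⟩, hsq⟩ := hQ.exists_normalForm hne
  obtain rfl : n = h := (abs_of_nonneg (hnonneg _ hmem)).symm.trans habs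
  rw [← hcard]
  rcases h.eq_zero_or_pos with rfl | hpos
  · choose right left hIcc _ using fun a => exists_level_ends hR.finite one_pos 0 a
    exact .inl (by simpa using hR.ncard_le_one_add_sum_levelCount hnonneg hle hIcc)
  right
  choose right left hIcc hge hright hleft using fun a => exists_level_ends hR.finite hpos m a
  refine ⟨h, right, left, ⟨hpos, fun a b _ ha _ hb => ?_, fun a _ _ => hge a, ?_⟩, hsq,
    hR.ncard_le_one_add_sum_levelCount hnonneg hle hIcc⟩
  · have := hR.mul_sub_mul_le_of_mem_or hmem hpos ha hb (hright a) (hleft b)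
    linarith
  · have := Finset.mem_Icc.mp (hIcc h m hmem)
    linarith

/-! ### Counting coprime integers -/

/-- The number of `1 ≤ i ≤ r` coprime to `g`. -/
def residueCount (g r : ℕ) : ℕ := Nat.count (fun i => (i + 1).Coprime g) r

/-- The signed number of integers coprime to `g` between `0` (excluded) and `n` (included), in
closed form so that it can be evaluated and extended to negative `n`. -/
def coprimeCount (g : ℕ) (n : ℤ) : ℤ := g.totient * (n / g) + residueCount g (n % g).toNat

lemma residueCount_succ (g r : ℕ) :
    residueCount g (r + 1) = residueCount g r + if (r + 1).Coprime g then 1 else 0 :=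
  Nat.count_succ _ _

lemma residueCount_self (g : ℕ) : residueCount g g = g.totient := by
  have h := Nat.count_succ (fun i => i.Coprime g) g
  rw [Nat.count_succ'] at h
  simp only [Nat.coprime_self, Nat.coprime_zero_left, Nat.add_right_cancel_iff] at h
  rw [residueCount, h, Nat.count_eq_card_filter_range, Nat.totient]
  simp only [Nat.coprime_comm]

section

variable {g : ℕ}

lemma coprimeCount_mul_add (hg : 1 ≤ g) {r : ℕ} (hr : r ≤ g) (q : ℤ) :
    coprimeCount g (g * q + r) = g.totient * q + residueCount g r := by
  have hg' : (0 : ℤ) < g := by exact_mod_cast hg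
  rcases hr.lt_or_eq with hlt | rfl
  · have hr' : (r : ℤ) < g := by exact_mod_cast hlt
    rw [coprimeCount, add_comm (_ * q), Int.add_mul_ediv_left _ _ hg'.ne',
      Int.add_mul_emod_self_left, Int.ediv_eq_zero_of_lt (by positivity) hr',
      Int.emod_eq_of_lt (by positivity) hr', zero_add, Int.toNat_natCast]
  · rw [coprimeCount, show (r : ℤ) * q + r = r * (q + 1) by ring,
      Int.mul_ediv_cancel_left _ hg'.ne', Int.mul_emod_right, residueCount_self]
    simp only [Int.toNat_zero, residueCount, Nat.count_zero]
    push_cast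
    ring

lemma exists_eq_mul_add_lt (hg : 1 ≤ g) (n : ℤ) : ∃ (q : ℤ) (r : ℕ), r < g ∧ n = g * q + r := by
  have hg' : (0 : ℤ) < g := by exact_mod_cast hg
  have h₀ := Int.emod_nonneg n hg'.ne'
  have h₁ := Int.emod_lt_of_pos n hg'
  refine ⟨n / g, (n % g).toNat, by omega, ?_⟩
  rw [Int.toNat_of_nonneg h₀, Int.mul_ediv_add_emod]

lemma coprimeCount_add_one (hg : 1 ≤ g) (n : ℤ) :
    coprimeCount g (n + 1) = coprimeCount g n + if Int.gcd (n + 1) g = 1 then 1 else 0 := by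
  obtain ⟨q, r, hr, rfl⟩ := exists_eq_mul_add_lt hg n
  have hgcd : Int.gcd (g * q + r + 1) g = Nat.gcd (r + 1) g := by
    rw [← Int.gcd_natCast_natCast, add_assoc, add_comm, Int.gcd_add_mul_left_left]
    push_cast
    rfl
  rw [hgcd, coprimeCount_mul_add hg hr.le, add_assoc _ (r : ℤ)]
  have := coprimeCount_mul_add hg (r := r + 1) hr q
  push_cast at this
  rw [this, residueCount_succ]
  simp only [Nat.Coprime]
  push_cast
  ring

/-- Negation permutes the coprime integers, and `0` is one of them only for `g = 1`. -/
lemma coprimeCount_neg_sub_one (hg : 1 ≤ g) (n : ℤ) :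
    coprimeCount g (-n - 1) = -coprimeCount g n - if g = 1 then 1 else 0 := by
  have hstep (n : ℤ) : coprimeCount g (n + 1) + coprimeCount g (-(n + 1) - 1) =
      coprimeCount g n + coprimeCount g (-n - 1) := by
    have h := coprimeCount_add_one hg (-(n + 1) - 1)
    rw [sub_add_cancel, Int.neg_gcd] at h
    rw [coprimeCount_add_one hg n, show -n - 1 = -(n + 1) by ring, h]
    ring
  have h0 : coprimeCount g 0 = 0 := by simp [coprimeCount, residueCount]
  induction n using Int.induction_on with
  | zero =>
    have h := coprimeCount_add_one hg (-1)
    rw [neg_add_cancel, h0, Int.gcd_zero_left, Int.natAbs_natCast] at h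
    rw [h0, neg_zero, zero_sub]
    linarith
  | succ i ih => linarith [hstep i]
  | pred i ih =>
    have h := hstep (-(i : ℤ) - 1)
    rw [sub_add_cancel] at h
    linarith

lemma levelCount_eq (hg : 1 ≤ g) {r l : ℤ} (h : -1 ≤ r + l) :
    (levelCount g r l : ℤ) = coprimeCount g r + coprimeCount g l + if g = 1 then 1 else 0 := by
  obtain ⟨n, rfl⟩ : ∃ n : ℕ, r = -l - 1 + n := ⟨(r + l + 1).toNat, by omega⟩
  clear h
  induction n with
  | zero =>
    rw [Nat.cast_zero, add_zero, coprimeCount_neg_sub_one hg, levelCount,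
      Finset.Icc_eq_empty (by omega), Finset.filter_empty, Finset.card_empty]
    push_cast
    ring
  | succ n ih =>
    have hinsert : Finset.Icc (-l) (-l - 1 + (n + 1 : ℕ)) =
        insert (-l - 1 + n + 1) (Finset.Icc (-l) (-l - 1 + n)) := by
      ext x
      simp only [Finset.mem_Icc, Finset.mem_insert]
      omega
    have hcard : levelCount g (-l - 1 + (n + 1 : ℕ)) l = levelCount g (-l - 1 + n) l +
        if Int.gcd (-l - 1 + n + 1) g = 1 then 1 else 0 := by
      rw [levelCount, hinsert, Finset.filter_insert]
      split_ifs
      · exact Finset.card_insert_of_notMem (by simp)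
      · rfl
    rw [hcard, Nat.cast_add, ih, Nat.cast_succ, ← add_assoc, coprimeCount_add_one hg]
    push_cast
    ring

lemma levelCount_le_of_dvd {a : ℕ} (hga : g ∣ a) (r l : ℤ) :
    levelCount a r l ≤ levelCount g r l := by
  refine Finset.card_le_card (Finset.monotone_filter_right _ fun m _ hm => ?_)
  exact Nat.dvd_one.mp (hm ▸ Int.gcd_dvd_gcd_of_dvd_right m (Int.natCast_dvd_natCast.mpr hga))

lemma mul_coprimeCount_le (hg : 1 ≤ g) {e : ℕ}
    (he : ∀ r < g, g * residueCount g r ≤ g.totient * r + e) (n : ℤ) :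
    g * coprimeCount g n ≤ g.totient * n + e := by
  obtain ⟨q, r, hr, rfl⟩ := exists_eq_mul_add_lt hg n
  have : (g : ℤ) * residueCount g r ≤ g.totient * r + e := by exact_mod_cast he r hr
  rw [coprimeCount_mul_add hg hr.le]
  linarith

end

/-! ### Heights at most three -/

lemma coprimeCount_one (n : ℤ) : coprimeCount 1 n = n := by simp [coprimeCount, residueCount]

lemma coprimeCount_two (n : ℤ) : coprimeCount 2 n = n / 2 + n % 2 := by
  have h₀ : residueCount 2 0 = 0 := by decide
  have h₁ : residueCount 2 1 = 1 := by decide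
  have : n % 2 = 0 ∨ n % 2 = 1 := by omega
  rcases this with h | h <;> simp [coprimeCount, h, h₀, h₁]

lemma coprimeCount_three (n : ℤ) : coprimeCount 3 n = 2 * (n / 3) + n % 3 := by
  have hφ : Nat.totient 3 = 2 := by decide
  have h₀ : residueCount 3 0 = 0 := by decide
  have h₁ : residueCount 3 1 = 1 := by decide
  have h₂ : residueCount 3 2 = 2 := by decide
  have : n % 3 = 0 ∨ n % 3 = 1 ∨ n % 3 = 2 := by omega
  rcases this with h | h | h <;> simp [coprimeCount, hφ, h, h₀, h₁, h₂]

lemma targetSize_cases (k : ℕ) : (k % 6 = 2 ∧ targetSize k = k + 4) ∨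
    (k % 2 = 1 ∧ targetSize k = k + 3) ∨ ((k % 6 = 0 ∨ k % 6 = 4) ∧ targetSize k = k + 2) := by
  unfold targetSize; split_ifs <;> omega

lemma coprimeCount_add_add_le_of_height_three {k : ℕ} {x y z : ℤ} (hy : x + 3 * y ≤ k)
    (hz : 2 * x + 3 * z ≤ k) :
    2 * (coprimeCount 3 x + coprimeCount 1 y + coprimeCount 2 z) + 2 ≤ targetSize k := by
  rw [coprimeCount_one, coprimeCount_two, coprimeCount_three]
  have := targetSize_cases k
  have : x % 3 = 0 ∨ x % 3 = 1 ∨ x % 3 = 2 := by omega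
  rcases this with h | h | h <;> omega

lemma LevelBounds.one_add_sum_levelCount_le_targetSize {k h : ℕ} {r l : ℕ → ℤ}
    (hb : LevelBounds k h r l) (hh : h ≤ 3) :
    1 + ∑ a ∈ Finset.Icc 1 h, levelCount a (r a) (l a) ≤ targetSize k := by
  have hpos := hb.pos
  have htarget := targetSize_cases k
  have pair (a b) (ha : 1 ≤ a ∧ a ≤ h) (hb' : 1 ≤ b ∧ b ≤ h) := hb.pair a b ha.1 ha.2 hb'.1 hb'.2
  have count (a) (ha : 1 ≤ a ∧ a ≤ h) := levelCount_eq ha.1 (hb.neg_one_le a ha.1 ha.2)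
  have c₁ := count 1 (by omega)
  rw [if_pos rfl] at c₁
  interval_cases h
  · have p₁₁ := pair 1 1 (by simp) (by simp)
    rw [coprimeCount_one, coprimeCount_one] at c₁
    rw [Finset.Icc_self, Finset.sum_singleton]
    omega
  · have c₂ := count 2 (by simp)
    have p₁₂ := pair 1 2 (by simp) (by simp)
    have p₂₁ := pair 2 1 (by simp) (by simp)
    rw [coprimeCount_one, coprimeCount_one] at c₁
    rw [coprimeCount_two, coprimeCount_two, if_neg (by simp)] at c₂
    rw [show Finset.Icc 1 2 = {1, 2} from rfl, Finset.sum_pair (by simp)]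
    omega
  · have c₂ := count 2 (by simp)
    have c₃ := count 3 (by simp)
    have hright := coprimeCount_add_add_le_of_height_three (k := k) (x := r 3) (y := l 1) (z := l 2)
      (by have := pair 3 1 (by simp) (by simp); push_cast at this; linarith)
      (by have := pair 3 2 (by simp) (by simp); push_cast at this; linarith)
    have hleft := coprimeCount_add_add_le_of_height_three (k := k) (x := l 3) (y := r 1) (z := r 2)
      (by have := pair 1 3 (by simp) (by simp); push_cast at this; linarith)
      (by have := pair 2 3 (by simp) (by simp); push_cast at this; linarith)
    rw [if_neg (by simp)] at c₂ c₃
    rw [show Finset.Icc 1 3 = {1, 2, 3} from rfl, Finset.sum_insert (by simp),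
      Finset.sum_pair (by simp)]
    omega

/-! ### Elimination of levels -/

/-- The quasi-linear function of period `c` and slope `s / c` with values `f` on `[0, c)`. -/
def quasiLinear (c s : ℕ) (f : ℕ → ℕ) (x : ℤ) : ℤ := s * (x / c) + f (x % c).toNat

section

variable {c s : ℕ} {f g : ℕ → ℕ}

lemma coprimeCount_eq_quasiLinear (c : ℕ) (x : ℤ) :
    coprimeCount c x = quasiLinear c c.totient (residueCount c) x := rfl

lemma quasiLinear_sub_mul (hc : 1 ≤ c) (x q : ℤ) :
    quasiLinear c s f (x - c * q) = quasiLinear c s f x - s * q := by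
  have hc' : (c : ℤ) ≠ 0 := by positivity
  rw [quasiLinear, show x - c * q = x + c * (-q) by ring, Int.add_mul_ediv_left _ _ hc',
    Int.add_mul_emod_self_left, quasiLinear]
  ring

lemma quasiLinear_mul_add {r : ℕ} (hr : r < c) (q : ℤ) :
    quasiLinear c s f (c * q + r) = s * q + f r := by
  have h := quasiLinear_sub_mul (s := s) (f := f) (c := c) (by omega) r (-q)
  rw [show (c : ℤ) * q + r = r - c * -q by ring, h, quasiLinear, ← Int.natCast_div,
    ← Int.natCast_mod, Int.toNat_natCast, Nat.div_eq_of_lt hr, Nat.mod_eq_of_lt hr]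
  push_cast
  ring

lemma quasiLinear_natCast (x : ℕ) :
    quasiLinear c s f x = (s * (x / c) + f (x % c) : ℕ) := by
  rw [quasiLinear, ← Int.natCast_div, ← Int.natCast_mod, Int.toNat_natCast]
  push_cast
  rfl

lemma quasiLinear_congr (hc : 1 ≤ c) (hfg : ∀ i < c, f i = g i) (x : ℤ) :
    quasiLinear c s f x = quasiLinear c s g x := by
  obtain ⟨q, r, hr, rfl⟩ := exists_eq_mul_add_lt hc x
  rw [quasiLinear_mul_add hr, quasiLinear_mul_add hr, hfg r hr]

lemma quasiLinear_le_quasiLinear (hc : 1 ≤ c) (hsame : ∀ i t, i ≤ t → t < c → f i ≤ g t)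
    (hnext : ∀ i < c, ∀ t < c, f i ≤ g t + s) {x y : ℤ} (hyx : y ≤ x) :
    quasiLinear c s f y ≤ quasiLinear c s g x := by
  obtain ⟨p, i, hi, rfl⟩ := exists_eq_mul_add_lt hc y
  obtain ⟨q, t, ht, rfl⟩ := exists_eq_mul_add_lt hc x
  rw [quasiLinear_mul_add hi, quasiLinear_mul_add ht]
  have hpq : p ≤ q := by
    by_contra! hlt
    have : (c : ℤ) * (q + 1) ≤ c * p := mul_le_mul_of_nonneg_left hlt (by positivity)
    linarith
  rcases hpq.lt_or_eq with hlt | rfl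
  · have hslope : (s : ℤ) * (p + 1) ≤ s * q := mul_le_mul_of_nonneg_left hlt (by positivity)
    have : (f i : ℤ) ≤ g t + s := by exact_mod_cast hnext i hi t ht
    linarith
  · have : (f i : ℤ) ≤ g t := by exact_mod_cast hsame i t (by omega) ht
    linarith

/-- On `b * y + a * x ≤ k`, a nondecreasing quasi-linear function of `y` is absorbed by a
quasi-linear function of `x`. -/
lemma quasiLinear_add_quasiLinear_le {a b s t k : ℕ} {f g h : ℕ → ℕ} (ha : 1 ≤ a) (hb : 1 ≤ b)
    (hst : s ≤ t)
    (hmono : ∀ y z : ℤ, y ≤ z → quasiLinear a s f y ≤ quasiLinear a s h z) {x y : ℤ}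
    (hxy : b * y + a * x ≤ k) :
    quasiLinear a s f y + quasiLinear b t g x ≤
      quasiLinear b (t - s) (fun u => g u + (s * ((k - a * u) / b / a) +
        h ((k - a * u) / b % a))) x := by
  obtain ⟨q, u, hu, rfl⟩ := exists_eq_mul_add_lt hb x
  have hb' : (0 : ℤ) < b := by exact_mod_cast hb
  have hy : y ≤ ((k - a * u) / b : ℕ) - a * q := by
    have hsub : (k : ℤ) ≤ (k - a * u : ℕ) + a * u := by exact_mod_cast le_tsub_add
    have hdiv : y + a * q ≤ ((k - a * u : ℕ) : ℤ) / b := by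
      rw [Int.le_ediv_iff_mul_le hb']
      linarith
    push_cast at hdiv ⊢
    linarith
  have hle := hmono _ _ hy
  rw [quasiLinear_sub_mul ha, quasiLinear_natCast] at hle
  rw [quasiLinear_mul_add hu, quasiLinear_mul_add hu]
  push_cast [Nat.cast_sub hst] at hle ⊢
  linarith

end

/-! ### Packed tables

Elimination is carried out by kernel reduction. A table is stored in one natural number, 14 bits
per entry: this keeps its entries evaluated and makes lookups fast. The evaluated functions are
written with recursors and with the primitives `Nat.add`, `Nat.mul`, … that the kernel
accelerates. -/

/-- The `i`-th entry of a packed table. -/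
def entry (T i : ℕ) : ℕ := Nat.mod (Nat.shiftRight T (Nat.mul 14 i)) 16384

/-- The packed table with entries `e₀ = init` and `eᵢ₊₁ = step i eᵢ` for `i < n`. -/
def scanTable (step : ℕ → ℕ → ℕ) (init : ℕ) : ℕ → ℕ :=
  Nat.rec init fun n T => Nat.add T (Nat.shiftLeft (step n (entry T n)) (Nat.mul 14 (n + 1)))

/-- The maximum of two natural numbers, in a form suited to kernel evaluation. -/
def natMax (a b : ℕ) : ℕ := cond (Nat.ble a b) b a

/-- The maximum of `f 0, …, f n`. -/
def maxUpTo (f : ℕ → ℕ) : ℕ → ℕ := Nat.rec (f 0) fun n m => natMax (f (n + 1)) m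

lemma entry_eq (T i : ℕ) : entry T i = T / 2 ^ (14 * i) % 2 ^ 14 :=
  congrArg (· % 2 ^ 14) (Nat.shiftRight_eq_div_pow T (14 * i))

lemma scanTable_succ (step : ℕ → ℕ → ℕ) (init n : ℕ) : scanTable step init (n + 1) =
    scanTable step init n + 2 ^ (14 * (n + 1)) * step n (entry (scanTable step init n) n) :=
  congrArg (scanTable step init n + ·) ((Nat.shiftLeft_eq _ _).trans (mul_comm _ _))

lemma natMax_eq (a b : ℕ) : natMax a b = max a b := by
  simp only [natMax, Bool.cond_eq_ite, Nat.ble_eq, max_def]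

lemma entry_add_of_lt {T i n : ℕ} (hi : i < n) (v : ℕ) :
    entry (T + 2 ^ (14 * n) * v) i = entry T i := by
  obtain ⟨j, rfl⟩ := Nat.exists_eq_add_of_lt hi
  rw [entry_eq, entry_eq, show 2 ^ (14 * (i + j + 1)) * v =
    2 ^ (14 * i) * (2 ^ 14 * (2 ^ (14 * j) * v)) by ring, Nat.add_mul_div_left _ _ (by positivity),
    Nat.add_mul_mod_self_left]

lemma entry_add_self {T n v : ℕ} (hT : T < 2 ^ (14 * n)) (hv : v < 2 ^ 14) :
    entry (T + 2 ^ (14 * n) * v) n = v := by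
  rw [entry_eq, Nat.add_mul_div_left _ _ (by positivity), Nat.div_eq_of_lt hT, zero_add,
    Nat.mod_eq_of_lt hv]

lemma entry_scanTable {step : ℕ → ℕ → ℕ} {value : ℕ → ℕ} {init n : ℕ}
    (hinit : value 0 = init) (hstep : ∀ i < n, value (i + 1) = step i (value i))
    (hlt : ∀ i ≤ n, value i < 2 ^ 14) : ∀ i ≤ n, entry (scanTable step init n) i = value i := by
  subst hinit
  suffices scanTable step (value 0) n < 2 ^ (14 * (n + 1)) ∧
      ∀ i ≤ n, entry (scanTable step (value 0) n) i = value i from this.2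
  induction n with
  | zero =>
    refine ⟨hlt 0 le_rfl, fun i hi => ?_⟩
    obtain rfl : i = 0 := by omega
    rw [entry_eq, mul_zero, pow_zero, Nat.div_one]
    exact Nat.mod_eq_of_lt (hlt 0 le_rfl)
  | succ n ih =>
    obtain ⟨hT, hentry⟩ := ih (fun i hi => hstep i (by omega)) (fun i hi => hlt i (by omega))
    have hnew := hlt (n + 1) le_rfl
    rw [scanTable_succ, hentry n le_rfl, ← hstep n (by omega)]
    refine ⟨?_, fun i hi => ?_⟩
    · have : 2 ^ (14 * (n + 1)) * (value (n + 1) + 1) ≤ 2 ^ (14 * (n + 1)) * 2 ^ 14 :=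
        Nat.mul_le_mul_left _ hnew
      rw [mul_add_one, ← pow_add] at this
      exact lt_of_lt_of_le (by linarith) this
    · rcases hi.lt_or_eq with hi' | rfl
      · rw [entry_add_of_lt hi', hentry i (by omega)]
      · exact entry_add_self hT hnew

lemma le_maxUpTo (f : ℕ → ℕ) {i n : ℕ} (hi : i ≤ n) : f i ≤ maxUpTo f n := by
  induction n with
  | zero => exact (congrArg f (Nat.le_zero.mp hi)).le
  | succ n ih =>
    refine le_of_le_of_eq ?_ (natMax_eq _ _).symm
    rcases hi.lt_or_eq with hi' | rfl
    · exact (ih (by omega)).trans (le_max_right _ _)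
    · exact le_max_left _ _

lemma maxUpTo_le {f : ℕ → ℕ} {n m : ℕ} (h : ∀ i ≤ n, f i ≤ m) : maxUpTo f n ≤ m := by
  induction n with
  | zero => exact h 0 le_rfl
  | succ n ih =>
    exact (natMax_eq _ _).trans_le (max_le (h _ le_rfl) (ih fun i hi => h i (by omega)))

/-- The packed values `residueCount c 0, …, residueCount c c`. -/
def countTable (c : ℕ) : ℕ :=
  scanTable (fun i e => Nat.add e (cond (Nat.beq (Nat.gcd (i + 1) c) 1) 1 0)) 0 c

/-- The packed running maxima of the first `n + 1` entries of `T`, where the period before them,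
`s` lower, is taken into account. -/
def runningMaxTable (T s n : ℕ) : ℕ :=
  scanTable (fun i m => natMax (entry T (i + 1)) m)
    (natMax (entry T 0) (Nat.sub (maxUpTo (entry T) n) s)) n

lemma residueCount_le (g r : ℕ) : residueCount g r ≤ r := Nat.count_le _

lemma entry_countTable {c i : ℕ} (hc : c < 2 ^ 14) (hi : i ≤ c) :
    entry (countTable c) i = residueCount c i := by
  refine entry_scanTable (value := residueCount c) (Nat.count_zero _) (fun i _ => ?_)
    (fun i hi => ((residueCount_le c i).trans hi).trans_lt hc) i hi
  simp only [residueCount_succ, Nat.Coprime, Bool.cond_eq_ite, Nat.beq_eq, Nat.add_eq]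

lemma entry_runningMaxTable {T n m : ℕ} (s : ℕ) (hT : ∀ i ≤ n, entry T i ≤ m) (hm : m < 2 ^ 14)
    {t : ℕ} (ht : t ≤ n) : entry (runningMaxTable T s n) t =
      max ((Finset.range (t + 1)).sup (entry T)) (maxUpTo (entry T) n - s) := by
  have hmax : maxUpTo (entry T) n ≤ m := maxUpTo_le hT
  set value : ℕ → ℕ := fun t =>
    max ((Finset.range (t + 1)).sup (entry T)) (maxUpTo (entry T) n - s)
  refine entry_scanTable (value := value) ?_ (fun i _ => ?_) (fun i hi => ?_) t ht
  · simp only [natMax_eq, value, zero_add, Finset.range_one, Finset.sup_singleton]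
    rfl
  · simp only [value]
    rw [Finset.range_add_one, Finset.sup_insert, natMax_eq]
    exact max_assoc _ _ _
  · refine (max_le (Finset.sup_le fun j hj => hT j ?_) (by omega)).trans_lt hm
    rw [Finset.mem_range] at hj
    omega

section

variable {T n m : ℕ} (s : ℕ) (hT : ∀ i ≤ n, entry T i ≤ m) (hm : m < 2 ^ 14)
include hT hm

lemma entry_runningMaxTable_le {t : ℕ} (ht : t ≤ n) : entry (runningMaxTable T s n) t ≤ m := by
  have : maxUpTo (entry T) n ≤ m := maxUpTo_le hT
  rw [entry_runningMaxTable s hT hm ht]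
  refine max_le (Finset.sup_le fun j hj => hT j ?_) (by omega)
  rw [Finset.mem_range] at hj
  omega

lemma quasiLinear_entry_le_runningMaxTable {x y : ℤ} (hyx : y ≤ x) :
    quasiLinear (n + 1) s (entry T) y ≤
      quasiLinear (n + 1) s (entry (runningMaxTable T s n)) x := by
  apply quasiLinear_le_quasiLinear (by omega) _ _ hyx
  · intro i t hit ht
    rw [entry_runningMaxTable s hT hm (by omega)]
    exact le_max_of_le_left (Finset.le_sup (Finset.mem_range.mpr (by omega)))
  · intro i hi t ht
    have := le_maxUpTo (entry T) (n := n) (i := i) (by omega)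
    rw [entry_runningMaxTable s hT hm (by omega)]
    omega

end

/-- The value `s * (x / c) + e` of a quasi-linear function at `x : ℕ`, where `e` is entry `x % c`
of its table `T`. -/
def tableValue (c s T x : ℕ) : ℕ := Nat.add (Nat.mul s (Nat.div x c)) (entry T (Nat.mod x c))

/-- A quasi-linear function attached to a level: its period is the height of the level, `table`
packs its values on one period, and `bound` is an upper bound for these values. -/
structure LevelTable where
  /-- The height of the level, which is the period. -/
  height : ℕ
  /-- The increase over one period. -/
  slope : ℕ
  /-- The packed values on one period. -/
  table : ℕ
  /-- An upper bound for the values on one period. -/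
  bound : ℕ

namespace LevelTable

/-- The function `coprimeCount c`. -/
def ofHeight (c : ℕ) : LevelTable := ⟨c, entry (countTable c) c, countTable c, c⟩

/-- For levels `a` and `b`, the function of `x` that bounds `a y + b x` for all `y` with
`b.height * y + a.height * x ≤ k`. -/
def eliminate (k : ℕ) (a b : LevelTable) : LevelTable where
  height := b.height
  slope := Nat.sub b.slope a.slope
  table :=
    let H := runningMaxTable a.table a.slope (a.height - 1)
    let value u := Nat.add (entry b.table u) (tableValue a.height a.slope H
      (Nat.div (Nat.sub k (Nat.mul a.height u)) b.height))
    scanTable (fun u _ => value (u + 1)) (value 0) (b.height - 1)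
  bound := b.bound + a.slope * (k / b.height / a.height) + a.bound

/-- The quasi-linear function stored in a level table. -/
def eval (a : LevelTable) (x : ℤ) : ℤ := quasiLinear a.height a.slope (entry a.table) x

/-- The height of `a` is at most `h`, its table is consistent with its bound, and no entry
overflows. -/
structure IsValid (h : ℕ) (a : LevelTable) : Prop where
  one_le_height : 1 ≤ a.height
  height_le : a.height ≤ h
  entry_le : ∀ i ≤ a.height - 1, entry a.table i ≤ a.bound
  bound_lt : a.bound < 2 ^ 14

variable {k h : ℕ} {a b : LevelTable}

lemma isValid_ofHeight {c : ℕ} (hc : 1 ≤ c) (hch : c ≤ h) (hc' : c < 2 ^ 14) :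
    (ofHeight c).IsValid h where
  one_le_height := hc
  height_le := hch
  entry_le i hi := by
    have hi' : i ≤ c := hi.trans (Nat.sub_le c 1)
    exact (entry_countTable hc' hi').trans_le ((residueCount_le c i).trans hi')
  bound_lt := hc'

lemma eval_ofHeight {c : ℕ} (hc : 1 ≤ c) (hc' : c < 2 ^ 14) (x : ℤ) :
    (ofHeight c).eval x = coprimeCount c x := by
  have hslope : (ofHeight c).slope = c.totient :=
    (entry_countTable hc' le_rfl).trans (residueCount_self c)
  rw [coprimeCount_eq_quasiLinear, eval, hslope]
  exact quasiLinear_congr hc (fun i hi => entry_countTable hc' hi.le) x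

lemma entry_eliminate (ha : a.IsValid h) (hb : b.IsValid h)
    (hlt : (eliminate k a b).bound < 2 ^ 14) :
    ∀ u ≤ b.height - 1, entry (eliminate k a b).table u ≤ (eliminate k a b).bound ∧
      entry (eliminate k a b).table u = entry b.table u + tableValue a.height a.slope
        (runningMaxTable a.table a.slope (a.height - 1)) ((k - a.height * u) / b.height) := by
  set value := fun u => entry b.table u + tableValue a.height a.slope
    (runningMaxTable a.table a.slope (a.height - 1)) ((k - a.height * u) / b.height)
  have hvalue : ∀ u ≤ b.height - 1, value u ≤ (eliminate k a b).bound := by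
    intro u hu
    have hmod : (k - a.height * u) / b.height % a.height ≤ a.height - 1 :=
      Nat.le_sub_one_of_lt (Nat.mod_lt _ ha.one_le_height)
    have hH := entry_runningMaxTable_le a.slope ha.entry_le ha.bound_lt hmod
    have hdiv : a.slope * ((k - a.height * u) / b.height / a.height) ≤
        a.slope * (k / b.height / a.height) := by gcongr; omega
    have hbu := hb.entry_le u hu
    change entry b.table u + (_ * _ + entry _ _) ≤ b.bound + _ + a.bound
    exact (add_le_add hbu (add_le_add hdiv hH)).trans_eq (add_assoc _ _ _).symm
  have hentry := entry_scanTable (value := value) (n := b.height - 1)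
    (step := fun u _ => value (u + 1)) rfl (fun _ _ => rfl)
    fun u hu => (hvalue u hu).trans_lt hlt
  exact fun u hu => ⟨(hentry u hu).trans_le (hvalue u hu), hentry u hu⟩

lemma IsValid.eliminate (ha : a.IsValid h) (hb : b.IsValid h)
    (hlt : (eliminate k a b).bound < 2 ^ 14) : (eliminate k a b).IsValid h where
  one_le_height := hb.one_le_height
  height_le := hb.height_le
  entry_le u hu := (entry_eliminate ha hb hlt u hu).1
  bound_lt := hlt

lemma eval_add_eval_le_eliminate (ha : a.IsValid h) (hb : b.IsValid h) (hslope : a.slope ≤ b.slope)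
    (hlt : (eliminate k a b).bound < 2 ^ 14) {x y : ℤ} (hxy : b.height * y + a.height * x ≤ k) :
    a.eval y + b.eval x ≤ (eliminate k a b).eval x := by
  have hmono (y z : ℤ) (hyz : y ≤ z) := quasiLinear_entry_le_runningMaxTable a.slope ha.entry_le
    ha.bound_lt hyz
  rw [Nat.sub_add_cancel ha.one_le_height] at hmono
  refine (quasiLinear_add_quasiLinear_le ha.one_le_height hb.one_le_height hslope hmono
    hxy).trans_eq (quasiLinear_congr hb.one_le_height (fun u hu => ?_) x)
  exact (entry_eliminate ha hb hlt u (Nat.le_sub_one_of_lt hu)).2.symm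

/-- Both ends of a level together. -/
def evalEnds (right left : ℕ → ℤ) (a : LevelTable) : ℤ :=
  a.eval (right a.height) + a.eval (left a.height)

variable {right left : ℕ → ℤ}

lemma evalEnds_add_evalEnds_le_eliminate (hbd : LevelBounds k h right left) (ha : a.IsValid h)
    (hb : b.IsValid h) (hslope : a.slope ≤ b.slope) (hlt : (eliminate k a b).bound < 2 ^ 14) :
    evalEnds right left a + evalEnds right left b ≤ evalEnds right left (eliminate k a b) := by
  have hright := eval_add_eval_le_eliminate ha hb hslope hlt
    (hbd.pair _ _ ha.one_le_height ha.height_le hb.one_le_height hb.height_le)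
  have hleft := eval_add_eval_le_eliminate ha hb hslope hlt (x := right b.height)
    (y := left a.height)
    (by linarith [hbd.pair _ _ hb.one_le_height hb.height_le ha.one_le_height ha.height_le])
  change _ ≤ (eliminate k a b).eval (right b.height) + (eliminate k a b).eval (left b.height)
  rw [evalEnds, evalEnds]
  linarith

/-- Eliminates the levels `a` and `b` and the levels with heights in a list of length `n`: of the
levels at the two ends, the one with smaller slope is eliminated into the other one and replaced by
its neighbor in the list. -/
def eliminateAll (k : ℕ) : ℕ → LevelTable → LevelTable → List ℕ → LevelTable
  | 0, a, b, _ => if a.slope ≤ b.slope then eliminate k a b else eliminate k b a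
  | n + 1, a, b, l =>
    if a.slope ≤ b.slope then eliminateAll k n (ofHeight l.headI) (eliminate k a b) l.tail
    else eliminateAll k n (eliminate k b a) (ofHeight (l.getLastD 0)) l.dropLast

lemma bound_add_bound_le_eliminate (k : ℕ) (a b : LevelTable) :
    a.bound + b.bound ≤ (eliminate k a b).bound := by
  simp only [eliminate]
  omega

lemma bound_add_bound_le_eliminateAll (k n : ℕ) : ∀ (a b : LevelTable) (l : List ℕ),
    a.bound + b.bound ≤ (eliminateAll k n a b l).bound := by
  have hab := bound_add_bound_le_eliminate k
  induction n with
  | zero =>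
    intro a b l
    rw [eliminateAll]
    split_ifs
    · exact hab a b
    · exact (add_comm _ _).trans_le (hab b a)
  | succ n ih =>
    intro a b l
    rw [eliminateAll]
    split_ifs
    · exact (hab a b).trans ((Nat.le_add_left _ _).trans (ih _ _ _))
    · exact (add_comm _ _).trans_le ((hab b a).trans ((Nat.le_add_right _ _).trans (ih _ _ _)))

lemma eliminateAll_spec (hbd : LevelBounds k h right left) (hh : h < 2 ^ 14) (n : ℕ) :
    ∀ (a b : LevelTable) (l : List ℕ), a.IsValid h → b.IsValid h → l.length = n →
      (∀ c ∈ l, 1 ≤ c ∧ c ≤ h) → (eliminateAll k n a b l).bound < 2 ^ 14 →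
      (eliminateAll k n a b l).IsValid h ∧
      evalEnds right left a + evalEnds right left b +
          (l.map fun c => evalEnds right left (ofHeight c)).sum ≤
        evalEnds right left (eliminateAll k n a b l) := by
  induction n with
  | zero =>
    intro a b l ha hb hl _ hlt
    obtain rfl := List.length_eq_zero_iff.mp hl
    rw [eliminateAll] at hlt ⊢
    rw [List.map_nil, List.sum_nil, add_zero]
    split_ifs at hlt ⊢ with hslope
    · exact ⟨ha.eliminate hb hlt, evalEnds_add_evalEnds_le_eliminate hbd ha hb hslope hlt⟩
    · exact ⟨hb.eliminate ha hlt, (add_comm _ _).trans_le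
        (evalEnds_add_evalEnds_le_eliminate hbd hb ha (by omega) hlt)⟩
  | succ n ih =>
    intro a b l ha hb hl hmem hlt
    have hne : l ≠ [] := List.ne_nil_of_length_eq_add_one hl
    have hvalid {c : ℕ} (hc : c ∈ l) : (ofHeight c).IsValid h :=
      isValid_ofHeight (hmem c hc).1 (hmem c hc).2 ((hmem c hc).2.trans_lt hh)
    rw [eliminateAll] at hlt ⊢
    split_ifs at hlt ⊢ with hslope
    · obtain ⟨c, t, rfl⟩ := List.exists_cons_of_ne_nil hne
      simp only [List.headI_cons, List.tail_cons, List.map_cons, List.sum_cons] at hlt ⊢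
      have hbound := bound_add_bound_le_eliminateAll k n (ofHeight c) (eliminate k a b) t
      have hlt' : (eliminate k a b).bound < 2 ^ 14 := by omega
      have hab := evalEnds_add_evalEnds_le_eliminate hbd ha hb hslope hlt'
      have hrec := ih (ofHeight c) (eliminate k a b) t (hvalid (by simp)) (ha.eliminate hb hlt')
        (by simpa using hl) (fun d hd => hmem d (by simp [hd])) hlt
      exact ⟨hrec.1, by linarith [hrec.2]⟩
    · obtain ⟨t, c, rfl⟩ := (List.eq_nil_or_concat' l).resolve_left hne
      simp only [List.getLastD_concat, List.dropLast_concat, List.map_append, List.sum_append,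
        List.map_singleton, List.sum_singleton] at hlt ⊢
      have hbound := bound_add_bound_le_eliminateAll k n (eliminate k b a) (ofHeight c) t
      have hlt' : (eliminate k b a).bound < 2 ^ 14 := by omega
      have hab := evalEnds_add_evalEnds_le_eliminate hbd hb ha (by omega) hlt'
      have hrec := ih (eliminate k b a) (ofHeight c) t (hb.eliminate ha hlt') (hvalid (by simp))
        (by simpa using hl) (fun d hd => hmem d (by simp [hd])) hlt
      exact ⟨hrec.1, by linarith [hrec.2]⟩

/-- The level table obtained from all heights in `l`; eliminating the last remaining level into
itself combines its two ends into one constant. -/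
def eliminateList (k : ℕ) (l : List ℕ) : LevelTable :=
  let a := eliminateAll k (l.length - 2) (ofHeight l.headI) (ofHeight (l.getLastD 0))
    l.tail.dropLast
  eliminate k a a

lemma evalEnds_ofHeight {c : ℕ} (hc : 1 ≤ c) (hc' : c < 2 ^ 14) :
    evalEnds right left (ofHeight c) = coprimeCount c (right c) + coprimeCount c (left c) :=
  congrArg₂ _ (eval_ofHeight hc hc' _) (eval_ofHeight hc hc' _)

lemma evalEnds_le_maxUpTo (hbd : LevelBounds k h right left) (ha : a.IsValid h)
    (hlt : (eliminate k a a).bound < 2 ^ 14) :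
    evalEnds right left a ≤
      maxUpTo (entry (eliminate k a a).table) ((eliminate k a a).height - 1) := by
  have hpair := hbd.pair _ _ ha.one_le_height ha.height_le ha.one_le_height ha.height_le
  have hle := eval_add_eval_le_eliminate ha ha le_rfl hlt
    (x := left a.height) (y := right a.height) hpair
  obtain ⟨q, u, hu, hq⟩ := exists_eq_mul_add_lt ha.one_le_height (left a.height)
  have heval : (eliminate k a a).eval (left a.height) = entry (eliminate k a a).table u := by
    have hslope : (eliminate k a a).slope = 0 := Nat.sub_self _
    rw [eval, hslope, hq]
    exact (quasiLinear_mul_add hu q).trans (by push_cast; ring)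
  have hmax := le_maxUpTo (entry (eliminate k a a).table) (Nat.le_sub_one_of_lt hu)
  rw [heval] at hle
  exact hle.trans (by exact_mod_cast hmax)

lemma sum_coprimeCount_eq_sum_evalEnds (right left : ℕ → ℤ) (hh : h < 2 ^ 14) {l : List ℕ}
    (hl : l.Perm (List.range' 1 h)) :
    ∑ a ∈ Finset.Icc 1 h, (coprimeCount a (right a) + coprimeCount a (left a)) =
      (l.map fun c => evalEnds right left (ofHeight c)).sum := by
  have hIcc : Finset.Icc 1 h = (List.range' 1 h).toFinset := by
    ext x
    simp only [Finset.mem_Icc, List.mem_toFinset, List.mem_range'_1]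
    omega
  rw [hIcc, ← List.toFinset_eq_of_perm _ _ hl,
    List.sum_toFinset _ (hl.nodup_iff.mpr List.nodup_range')]
  refine congrArg List.sum (List.map_congr_left fun c hc => ?_)
  have hc' := List.mem_range'_1.mp (hl.mem_iff.mp hc)
  exact (evalEnds_ofHeight hc'.1 (by omega)).symm

lemma sum_coprimeCount_le_maxUpTo (hbd : LevelBounds k h right left) (hh : 2 ≤ h)
    (hh' : h < 2 ^ 14) {l : List ℕ} (hl : l.Perm (List.range' 1 h))
    (hlt : (eliminateList k l).bound < 2 ^ 14) :
    ∑ a ∈ Finset.Icc 1 h, (coprimeCount a (right a) + coprimeCount a (left a)) ≤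
      maxUpTo (entry (eliminateList k l).table) ((eliminateList k l).height - 1) := by
  rw [sum_coprimeCount_eq_sum_evalEnds right left hh' hl]
  have hmem : ∀ c ∈ l, 1 ≤ c ∧ c ≤ h := fun c hc => by
    have := List.mem_range'_1.mp (hl.mem_iff.mp hc)
    omega
  have hlength : l.length = h := by rw [hl.length_eq, List.length_range']
  obtain ⟨c, m, d, rfl⟩ : ∃ c m d, l = c :: (m ++ [d]) := by
    obtain ⟨c, t, rfl⟩ := List.exists_cons_of_length_pos (l := l) (by omega)
    obtain ⟨m, d, rfl⟩ := (List.eq_nil_or_concat' t).resolve_left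
      (List.ne_nil_of_length_pos (by rw [List.length_cons] at hlength; omega))
    exact ⟨c, m, d, rfl⟩
  have hvalid {e : ℕ} (he : e ∈ c :: (m ++ [d])) : (ofHeight e).IsValid h :=
    isValid_ofHeight (hmem e he).1 (hmem e he).2 ((hmem e he).2.trans_lt hh')
  set a := eliminateAll k m.length (ofHeight c) (ofHeight d) m
  have ha : eliminateList k (c :: (m ++ [d])) = eliminate k a a := by
    have hsub : (c :: (m ++ [d])).length - 2 = m.length := by simp
    have hlast : (c :: (m ++ [d])).getLastD 0 = d :=
      List.getLastD_concat (a := 0) (b := d) (l := c :: m)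
    rw [eliminateList, hsub, hlast, List.tail_cons, List.dropLast_concat, List.headI_cons]
  rw [ha] at hlt ⊢
  have hlt' : a.bound < 2 ^ 14 := by have := bound_add_bound_le_eliminate k a a; omega
  obtain ⟨hvalid_a, hsum⟩ := eliminateAll_spec hbd hh' m.length (ofHeight c) (ofHeight d) m
    (hvalid (by simp)) (hvalid (by simp)) rfl (fun e he => hmem e (by simp [he])) hlt'
  have hmax := evalEnds_le_maxUpTo hbd hvalid_a hlt
  simp only [List.map_cons, List.map_append, List.sum_cons, List.sum_append, List.map_nil,
    List.sum_nil]
  linarith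

end LevelTable

/-! ### Heights from four to fifty-one -/

lemma LevelBounds.mono {k k' h : ℕ} {right left : ℕ → ℤ} (hbd : LevelBounds k h right left)
    (hk : k ≤ k') : LevelBounds k' h right left where
  pos := hbd.pos
  pair a b ha ha' hb hb' := (hbd.pair a b ha ha' hb hb').trans (by exact_mod_cast hk)
  neg_one_le := hbd.neg_one_le
  top_nonneg := hbd.top_nonneg

lemma LevelBounds.one_add_sum_levelCount_eq {k h : ℕ} {right left : ℕ → ℤ}
    (hbd : LevelBounds k h right left) :
    ((1 + ∑ a ∈ Finset.Icc 1 h, levelCount a (right a) (left a) : ℕ) : ℤ) =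
      2 + ∑ a ∈ Finset.Icc 1 h, (coprimeCount a (right a) + coprimeCount a (left a)) := by
  have hlevel : ∀ a ∈ Finset.Icc 1 h, (levelCount a (right a) (left a) : ℤ) =
      coprimeCount a (right a) + coprimeCount a (left a) + if a = 1 then 1 else 0 := by
    intro a ha
    rw [Finset.mem_Icc] at ha
    exact levelCount_eq ha.1 (hbd.neg_one_le a ha.1 ha.2)
  push_cast
  rw [Finset.sum_congr rfl hlevel, Finset.sum_add_distrib, Finset.sum_ite_eq',
    if_pos (Finset.mem_Icc.mpr ⟨le_rfl, hbd.pos⟩)]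
  ring

/-- Checks that eliminating the levels in `l` proves the sum of the coprime counts to be at most `k`
for all `k` from `bot` to `top`: a bound `m + 1` found for `top` settles the values of `k` from
`m + 1` on, so that `m` can be examined next. The first argument limits the recursion depth. -/
def coversDown (l : List ℕ) (bot : ℕ) : ℕ → ℕ → Bool
  | 0, _ => false
  | n + 1, top =>
    let v := LevelTable.eliminateList top l
    decide (v.bound < 16384) && match maxUpTo (entry v.table) (v.height - 1) with
      | 0 => true
      | m + 1 => decide (m < top) && (decide (m < bot) || coversDown l bot n m)

/-- The smallest `k ≥ 385` for which height `h` occurs. -/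
def minK (h : ℕ) : ℕ := max 385 ((3 * h ^ 2 + 3) / 4)

/-- For `4 ≤ h ≤ 51`, the largest `k` for which height `h` is not settled by the linear bounds. -/
def maxTableK (h : ℕ) : ℕ :=
  [0, 594, 0, 0, 0, 0, 0, 429, 0, 529, 525, 521, 482, 612, 584, 729, 734, 752, 734, 857, 842, 899,
    915, 943, 935, 1054, 1047, 1154, 1182, 1239, 1251, 1305, 1278, 1365, 1395, 1445, 1434, 1536,
    1544, 1651, 1684, 1706, 1709, 1826, 1824, 1904, 1916, 1959].getD (h - 4) 0

/-- Elimination orders for height `h`, each with the smallest `k` it is used for. The natural order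
fails only for a few values of `k` at heights 23 and 25. -/
def eliminationOrders : ℕ → List (List ℕ × ℕ)
  | 23 => [(List.range' 1 23, 446),
      ([2, 3, 6, 1, 9, 4, 7, 5, 11, 8, 10, 12, 13, 16, 15, 14, 19, 18, 17, 20, 21, 22, 23], 440),
      (List.range' 1 23, 437),
      ([11, 8, 10, 9, 7, 4, 3, 5, 2, 1, 13, 6, 12, 16, 20, 18, 17, 14, 15, 19, 23, 22, 21], 397)]
  | 25 => [(List.range' 1 25, 492),
      ([5, 6, 9, 3, 2, 4, 1, 7, 8, 12, 10, 11, 15, 18, 14, 13, 16, 19, 17, 21, 24, 20, 22, 23, 25],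
        478),
      ([8, 2, 1, 4, 5, 7, 3, 11, 14, 12, 15, 10, 6, 9, 13, 17, 18, 16, 19, 21, 22, 23, 20, 24, 25],
        469)]
  | h => [(List.range' 1 h, minK h)]

/-- Checks that a list of elimination orders settles height `h` for all `k` from `minK h` to
`top`. -/
def checkOrders (h : ℕ) : List (List ℕ × ℕ) → ℕ → Bool
  | [], top => decide (top < minK h)
  | (l, bot) :: runs, top => decide (top < minK h) || (l.isPerm (List.range' 1 h) &&
      coversDown l bot 100 top && checkOrders h runs (bot - 1))

section

variable {k h : ℕ} {right left : ℕ → ℤ} (hbd : LevelBounds k h right left) (hh : 2 ≤ h)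
  (hh' : h < 2 ^ 14)
include hbd hh hh'

lemma sum_coprimeCount_le_of_coversDown {l : List ℕ} (hl : l.Perm (List.range' 1 h)) {bot : ℕ}
    (hbot : bot ≤ k) {n top : ℕ} (htop : k ≤ top) (hcov : coversDown l bot n top) :
    ∑ a ∈ Finset.Icc 1 h, (coprimeCount a (right a) + coprimeCount a (left a)) ≤ k := by
  induction n generalizing top with
  | zero => exact absurd hcov Bool.false_ne_true
  | succ n ih =>
    rw [coversDown, Bool.and_eq_true, decide_eq_true_eq] at hcov
    obtain ⟨hlt, hmatch⟩ := hcov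
    have hle := LevelTable.sum_coprimeCount_le_maxUpTo (hbd.mono htop) hh hh' hl hlt
    split at hmatch
    next heq =>
      rw [heq] at hle
      omega
    next m heq =>
      rw [heq] at hle
      rw [Bool.and_eq_true, Bool.or_eq_true, decide_eq_true_eq, decide_eq_true_eq] at hmatch
      rcases le_or_gt k m with hkm | hmk
      · exact ih hkm (hmatch.2.resolve_left (by omega))
      · omega

lemma sum_coprimeCount_le_of_checkOrders (hk : minK h ≤ k) {runs : List (List ℕ × ℕ)} {top : ℕ}
    (htop : k ≤ top) (hcheck : checkOrders h runs top) :
    ∑ a ∈ Finset.Icc 1 h, (coprimeCount a (right a) + coprimeCount a (left a)) ≤ k := by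
  induction runs generalizing top with
  | nil =>
    rw [checkOrders, decide_eq_true_eq] at hcheck
    omega
  | cons run runs ih =>
    obtain ⟨l, bot⟩ := run
    rw [checkOrders, Bool.or_eq_true, Bool.and_eq_true, Bool.and_eq_true, List.isPerm_iff,
      decide_eq_true_eq] at hcheck
    obtain ⟨⟨hl, hcov⟩, hrest⟩ := hcheck.resolve_left (by omega)
    rcases le_or_gt bot k with hbot | hbot
    · exact sum_coprimeCount_le_of_coversDown hbd hh hh' hl hbot htop hcov
    · exact ih (by omega) hrest

end

set_option maxRecDepth 100000 in
lemma checkOrders_eliminationOrders :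
    ∀ h ∈ List.range' 4 48, checkOrders h (eliminationOrders h) (maxTableK h) := by
  decide +kernel

lemma LevelBounds.one_add_sum_levelCount_le_of_le_maxTableK {k h : ℕ} {right left : ℕ → ℤ}
    (hbd : LevelBounds k h right left) (hk : 385 ≤ k) (hsq : 3 * h ^ 2 ≤ 4 * k) (hh : 4 ≤ h)
    (hh' : h ≤ 51) (htop : k ≤ maxTableK h) :
    1 + ∑ a ∈ Finset.Icc 1 h, levelCount a (right a) (left a) ≤ k + 2 := by
  have hmin : minK h ≤ k := max_le hk (by omega)
  have hle := sum_coprimeCount_le_of_checkOrders hbd (by omega) (by omega) hmin htop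
    (checkOrders_eliminationOrders h (List.mem_range'_1.mpr ⟨hh, by omega⟩))
  have heq := hbd.one_add_sum_levelCount_eq
  omega

/-! ### Linear bounds for one level -/

/-- The factor at the prime `p` in `sieveWeight a`: `p - 1` if `p ∣ a` and `p` otherwise. -/
def primeWeight (p a : ℕ) : ℕ := cond (Nat.beq (Nat.mod a p) 0) (Nat.sub p 1) p

/-- The integer `2310 * φ(g) / g` for `g = gcd(a, 2310)`, where `2310 = 2 * 3 * 5 * 7 * 11`. -/
def sieveWeight (a : ℕ) : ℕ :=
  Nat.mul (Nat.mul (Nat.mul (primeWeight 2 a) (primeWeight 3 a))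
    (Nat.mul (primeWeight 5 a) (primeWeight 7 a))) (primeWeight 11 a)

/-- `f v`, in a form that makes the kernel evaluate `v` first. -/
def evalThen {α : Type} (v : ℕ) (f : ℕ → α) : α := Nat.rec (f 0) (fun n _ => f (Nat.succ n)) v

/-- The error of the linear bound for two ends of a level in terms of the integers coprime to `g`,
in units of `1 / 2310`. -/
def levelError (g : ℕ) : ℕ :=
  evalThen (countTable g) fun T => evalThen (entry T g) fun s =>
  evalThen (maxUpTo (fun r => Nat.sub (Nat.mul g (entry T r)) (Nat.mul s r)) (g - 1)) fun e =>
  Nat.add (Nat.succ (Nat.div (Nat.mul 4620 e) g)) (cond (Nat.beq g 1) 2310 0)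

lemma primeWeight_gcd {p : ℕ} (hp : p ∣ 2310) (a : ℕ) :
    primeWeight p (a.gcd 2310) = primeWeight p a := by
  have hdvd : p ∣ a.gcd 2310 ↔ p ∣ a := by rw [Nat.dvd_gcd_iff, and_iff_left hp]
  change cond (Nat.beq (a.gcd 2310 % p) 0) (p - 1) p = cond (Nat.beq (a % p) 0) (p - 1) p
  simp only [Bool.cond_eq_ite, Nat.beq_eq, ← Nat.dvd_iff_mod_eq_zero, hdvd]

lemma sieveWeight_gcd (a : ℕ) : sieveWeight (a.gcd 2310) = sieveWeight a := by
  have hprime : ∀ p ∈ [2, 3, 5, 7, 11], primeWeight p (a.gcd 2310) = primeWeight p a :=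
    fun p hp => primeWeight_gcd ((by decide : ∀ p ∈ [2, 3, 5, 7, 11], p ∣ 2310) p hp) a
  simp only [List.forall_mem_cons] at hprime
  obtain ⟨h₂, h₃, h₅, h₇, h₁₁, -⟩ := hprime
  rw [sieveWeight, h₂, h₃, h₅, h₇, h₁₁, sieveWeight]

lemma sieveWeight_add (a : ℕ) : sieveWeight (a + 2310) = sieveWeight a := by
  rw [← sieveWeight_gcd, Nat.gcd_add_self_left, sieveWeight_gcd]

lemma sieveWeight_mul_gcd (a : ℕ) :
    sieveWeight a * a.gcd 2310 = 2310 * (a.gcd 2310).totient := by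
  have hdivisors : ∀ g ∈ Nat.divisors 2310, sieveWeight g * g = 2310 * g.totient := by
    decide +kernel
  rw [← sieveWeight_gcd]
  exact hdivisors _ (Nat.mem_divisors.mpr ⟨Nat.gcd_dvd_right a 2310, by norm_num⟩)

lemma evalThen_eq {α : Type} (v : ℕ) (f : ℕ → α) : evalThen v f = f v := by cases v <;> rfl

lemma exists_excess_levelError {g : ℕ} (hg : 1 ≤ g) (hg' : g < 2 ^ 14) :
    ∃ e, (∀ r < g, g * residueCount g r ≤ g.totient * r + e) ∧
      4620 * e + (if g = 1 then 2310 else 0) * g ≤ levelError g * g := by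
  set e := maxUpTo (fun r => g * entry (countTable g) r - entry (countTable g) g * r) (g - 1)
  have herror : levelError g = 4620 * e / g + 1 + if g = 1 then 2310 else 0 := by
    simp only [levelError, evalThen_eq, Bool.cond_eq_ite, Nat.beq_eq]
    rfl
  refine ⟨e, fun r hr => ?_, ?_⟩
  · have hle : g * entry (countTable g) r - entry (countTable g) g * r ≤ e :=
      le_maxUpTo (fun r => g * entry (countTable g) r - entry (countTable g) g * r) (by omega)
    rw [entry_countTable hg' hr.le, entry_countTable hg' le_rfl, residueCount_self] at hle
    omega
  · rw [herror, add_mul, mul_comm (4620 * e / g + 1)]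
    exact Nat.add_le_add_right (Nat.lt_mul_div_succ _ hg).le _

/-- The count of a level of height `a` is estimated by the integers coprime to a divisor `g`. -/
lemma mul_levelCount_le {a g s : ℕ} {r l : ℤ} (hg : 1 ≤ g) (hg' : g < 2 ^ 14) (hga : g ∣ a)
    (hs : s * g = 2310 * g.totient * a) (h : -1 ≤ r + l) :
    2310 * (a * (levelCount a r l : ℤ)) ≤ s * (r + l) + a * levelError g := by
  obtain ⟨e, he, herror⟩ := exists_excess_levelError hg hg'
  have hr := mul_coprimeCount_le hg he r
  have hl := mul_coprimeCount_le hg he l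
  have hcount : (g : ℤ) * levelCount a r l ≤ g * levelCount g r l := by
    exact_mod_cast Nat.mul_le_mul_left g (levelCount_le_of_dvd hga r l)
  rw [levelCount_eq hg h] at hcount
  have hlinear : 2310 * ((g : ℤ) * levelCount a r l) ≤
      2310 * (g.totient * (r + l)) + g * levelError g := by
    have herror' : (4620 * e + (if g = 1 then 2310 else 0) * g : ℤ) ≤ levelError g * g := by
      exact_mod_cast herror
    split_ifs at hcount herror' <;> linarith
  have hg0 : (0 : ℤ) < g := by exact_mod_cast hg
  have hs' : (s : ℤ) * g = 2310 * g.totient * a := by exact_mod_cast hs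
  refine le_of_mul_le_mul_left ?_ hg0
  calc (g : ℤ) * (2310 * (a * levelCount a r l)) = a * (2310 * (g * levelCount a r l)) := by ring
    _ ≤ a * (2310 * (g.totient * (r + l)) + g * levelError g) := by gcongr
    _ = g * (s * (r + l) + a * levelError g) := by linear_combination (-(r + l)) * hs'

/-- The packed totients of `0, …, 130`. -/
def totientTable : ℕ := scanTable (fun i _ => entry (countTable (i + 1)) (i + 1)) 0 130

/-- The divisor used in the linear bound for the level of height `a`. -/
def levelDivisor (a : ℕ) : ℕ := cond (Nat.ble a 130) a (Nat.gcd a 2310)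

/-- The slope, in units of `1 / 2310`, of the linear bound for `a` times the count of the level of
height `a`; the packed totients are passed as an argument so that they are evaluated once. -/
def levelSlope (totients a : ℕ) : ℕ :=
  cond (Nat.ble a 130) (Nat.mul 2310 (entry totients a)) (Nat.mul (sieveWeight a) a)

lemma entry_totientTable {a : ℕ} (ha : a ≤ 130) : entry totientTable a = a.totient := by
  refine entry_scanTable (value := Nat.totient) Nat.totient_zero (fun i hi => ?_) (fun i hi => ?_)
    a ha
  · rw [entry_countTable (by omega) le_rfl, residueCount_self]
  · have := Nat.totient_le i
    omega

lemma levelDivisor_pos {a : ℕ} (ha : 1 ≤ a) : 1 ≤ levelDivisor a := by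
  rw [levelDivisor, Bool.cond_eq_ite]
  split_ifs
  exacts [ha, Nat.gcd_pos_of_pos_right _ (by norm_num)]

lemma levelDivisor_lt (a : ℕ) : levelDivisor a < 2 ^ 14 := by
  simp only [levelDivisor, Bool.cond_eq_ite, Nat.ble_eq]
  split_ifs
  · omega
  · exact (Nat.gcd_le_right a (by norm_num)).trans_lt (by norm_num)

lemma levelDivisor_dvd (a : ℕ) : levelDivisor a ∣ a := by
  rw [levelDivisor, Bool.cond_eq_ite]
  split_ifs
  exacts [dvd_rfl, Nat.gcd_dvd_left a 2310]

lemma levelSlope_mul_levelDivisor (a : ℕ) :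
    levelSlope totientTable a * levelDivisor a = 2310 * (levelDivisor a).totient * a := by
  simp only [levelSlope, levelDivisor, Bool.cond_eq_ite, Nat.ble_eq]
  split_ifs with ha
  · rw [entry_totientTable ha]
    rfl
  · rw [← sieveWeight_mul_gcd]
    exact mul_right_comm _ _ _

section

variable {a : ℕ} {r l : ℤ}

lemma mul_levelCount_le_levelSlope (ha : 1 ≤ a) (h : -1 ≤ r + l) :
    2310 * (a * (levelCount a r l : ℤ)) ≤
      levelSlope totientTable a * (r + l) + a * levelError (levelDivisor a) :=
  mul_levelCount_le (levelDivisor_pos ha) (levelDivisor_lt a) (levelDivisor_dvd a)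
    (levelSlope_mul_levelDivisor a) h

lemma levelCount_le_sieveWeight (ha : 1 ≤ a) (h : -1 ≤ r + l) :
    2310 * (levelCount a r l : ℤ) ≤ sieveWeight a * (r + l) + levelError (a.gcd 2310) := by
  have hgcd : a.gcd 2310 ≤ 2310 := Nat.gcd_le_right a (by norm_num)
  have hle := mul_levelCount_le (s := sieveWeight a * a) (Nat.gcd_pos_of_pos_left 2310 ha)
    (hgcd.trans_lt (by norm_num)) (Nat.gcd_dvd_left a 2310)
    (by rw [mul_right_comm, sieveWeight_mul_gcd]) h
  have ha0 : (0 : ℤ) < a := by exact_mod_cast ha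
  refine le_of_mul_le_mul_left ?_ ha0
  push_cast at hle
  linarith

end

/-! ### The staircase bound -/

/-- The length of level `a`, where empty levels and levels above `h` have length zero. -/
def levelLength (h : ℕ) (right left : ℕ → ℤ) (a : ℕ) : ℤ :=
  if a ≤ h then max (right a + left a) 0 else 0

section

variable {k h : ℕ} {right left : ℕ → ℤ}

lemma levelLength_nonneg (h : ℕ) (right left : ℕ → ℤ) (a : ℕ) :
    0 ≤ levelLength h right left a := by
  rw [levelLength]
  split_ifs
  exacts [le_max_right _ _, le_rfl]

lemma le_levelLength {a : ℕ} (ha : a ≤ h) : right a + left a ≤ levelLength h right left a := by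
  rw [levelLength, if_pos ha]
  exact le_max_left _ _

lemma levelLength_eq_or (h : ℕ) (right left : ℕ → ℤ) (a : ℕ) :
    (a ≤ h ∧ levelLength h right left a = right a + left a) ∨ levelLength h right left a = 0 := by
  rw [levelLength]
  split_ifs with ha
  exacts [(max_choice _ _).imp_left fun hmax => ⟨ha, hmax⟩, .inr rfl]

namespace LevelBounds

lemma height_mul_levelLength_le (hb : LevelBounds k h right left) {a : ℕ} (ha : 1 ≤ a) :
    h * levelLength h right left a ≤ 2 * k := by
  rcases levelLength_eq_or h right left a with ⟨hah, hlen⟩ | hlen <;> rw [hlen]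
  · have hleft := hb.pair h a hb.pos le_rfl ha hah
    have hright := hb.pair a h ha hah hb.pos le_rfl
    have htop : 0 ≤ (a : ℤ) * (right h + left h) := mul_nonneg (by positivity) hb.top_nonneg
    linarith
  · simp

/-- Enlarging the height `h` to `n` costs a factor `n / h`, so that a range of heights can be
treated together. -/
lemma height_mul_levelLength_add_le (hb : LevelBounds k h right left) {n a b : ℕ} (hn : h ≤ n)
    (ha : 1 ≤ a) (han : a ≤ n) (hb' : 1 ≤ b) (hbn : b ≤ n) :
    (h : ℤ) * (b * levelLength h right left a + a * levelLength h right left b) ≤ 2 * k * n := by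
  have hsingle {c d : ℕ} (hc : 1 ≤ c) (hd : d ≤ n) :
      (h : ℤ) * (d * levelLength h right left c) ≤ 2 * k * n :=
    calc
      (h : ℤ) * (d * levelLength h right left c) = d * (h * levelLength h right left c) := by ring
      _ ≤ n * (2 * k) := mul_le_mul (by exact_mod_cast hd) (hb.height_mul_levelLength_le hc)
        (mul_nonneg (by positivity) (levelLength_nonneg h right left c)) (by positivity)
      _ = 2 * k * n := by ring
  rcases levelLength_eq_or h right left a with ⟨hah, hlen⟩ | hlen
  · rcases levelLength_eq_or h right left b with ⟨hbh, hlen'⟩ | hlen'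
    · have hleft := hb.pair a b ha hah hb' hbh
      have hright := hb.pair b a hb' hbh ha hah
      calc (h : ℤ) * (b * levelLength h right left a + a * levelLength h right left b) ≤
            h * (2 * k) := by rw [hlen, hlen']; gcongr; linarith
        _ ≤ n * (2 * k) := by gcongr
        _ = 2 * k * n := by ring
    · simpa only [hlen', mul_zero, add_zero] using hsingle ha hbn
  · simpa only [hlen, mul_zero, zero_add] using hsingle hb' han

end LevelBounds

end

/-- The value of `c / (a * b)`, in units of `10⁻⁶` and rounded up. -/
def pairTerm (c a b : ℕ) : ℕ := Nat.succ (Nat.div (Nat.mul c 1000000) (Nat.mul a b))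

/-- An upper bound for a combination of the variables `a, …, a + m + 1`, with coefficient `sa` at
`a`, coefficient `sb` at `a + m + 1` and coefficients `s` in between: the first and the last
variable are paired until one of them is used up, and so on inwards. The value is added to `acc`. -/
def staircase (s : ℕ → ℕ) (m : ℕ) : ℕ → ℕ → ℕ → ℕ → ℕ :=
  Nat.rec
    (fun a sa sb acc => cond (Nat.ble sa sb)
      (Nat.add (Nat.add acc (pairTerm (Nat.mul 2 sa) a (a + 1)))
        (pairTerm (Nat.sub sb sa) (a + 1) (a + 1)))
      (Nat.add (Nat.add acc (pairTerm (Nat.mul 2 sb) a (a + 1))) (pairTerm (Nat.sub sa sb) a a)))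
    (fun m ih a sa sb acc => cond (Nat.ble sa sb)
      (evalThen (Nat.add acc (pairTerm (Nat.mul 2 sa) a (Nat.add a (m + 2)))) fun acc' =>
        evalThen (Nat.sub sb sa) fun sb' => evalThen (Nat.succ a) fun a' =>
        evalThen (s a') fun sa' => ih a' sa' sb' acc')
      (evalThen (Nat.add acc (pairTerm (Nat.mul 2 sb) a (Nat.add a (m + 2)))) fun acc' =>
        evalThen (Nat.sub sa sb) fun sa' => evalThen (s (Nat.add a (m + 1))) fun sb' =>
        ih a sa' sb' acc')) m

lemma staircase_zero (s : ℕ → ℕ) (a sa sb acc : ℕ) : staircase s 0 a sa sb acc =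
    if sa ≤ sb then acc + pairTerm (2 * sa) a (a + 1) + pairTerm (sb - sa) (a + 1) (a + 1)
    else acc + pairTerm (2 * sb) a (a + 1) + pairTerm (sa - sb) a a := by
  simp only [staircase, Bool.cond_eq_ite, Nat.ble_eq]
  rfl

lemma staircase_succ (s : ℕ → ℕ) (m a sa sb acc : ℕ) : staircase s (m + 1) a sa sb acc =
    if sa ≤ sb then
      staircase s m (a + 1) (s (a + 1)) (sb - sa) (acc + pairTerm (2 * sa) a (a + (m + 2)))
    else staircase s m a (sa - sb) (s (a + (m + 1))) (acc + pairTerm (2 * sb) a (a + (m + 2))) := by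
  simp only [staircase, evalThen_eq, Bool.cond_eq_ite, Nat.ble_eq]
  rfl

section

variable {n : ℕ} {u : ℚ}

lemma mul_le_pairTerm_mul {a b : ℕ} (c : ℕ) {z : ℚ} (hu : 0 ≤ u) (ha : 1 ≤ a) (hb : 1 ≤ b)
    (hz : a * b * z ≤ 10 ^ 6 * u) : c * z ≤ pairTerm c a b * u := by
  have hab : (0 : ℚ) < a * b := by exact_mod_cast Nat.mul_pos ha hb
  have hround : (c * 10 ^ 6 : ℚ) ≤ a * b * pairTerm c a b := by
    exact_mod_cast (Nat.lt_mul_div_succ (c * 1000000) (Nat.mul_pos ha hb)).le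
  refine le_of_mul_le_mul_left ?_ hab
  calc a * b * (c * z) = c * (a * b * z) := by ring
    _ ≤ c * (10 ^ 6 * u) := by gcongr
    _ = c * 10 ^ 6 * u := by ring
    _ ≤ a * b * pairTerm c a b * u := by gcongr
    _ = a * b * (pairTerm c a b * u) := by ring

/-- The inequalities on pairs of variables which the staircase bound combines. -/
def PairBounds (n : ℕ) (u : ℚ) (y : ℕ → ℚ) : Prop :=
  0 ≤ u ∧ ∀ a b : ℕ, 1 ≤ a → a ≤ n → 1 ≤ b → b ≤ n → a * b * (y a + y b) ≤ 2 * (10 ^ 6 * u)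

namespace PairBounds

variable {y : ℕ → ℚ} {a b : ℕ}

lemma mul_add_le (hy : PairBounds n u y) (c : ℕ) (ha : 1 ≤ a) (han : a ≤ n) (hb : 1 ≤ b)
    (hbn : b ≤ n) : c * (y a + y b) ≤ pairTerm (2 * c) a b * u := by
  have hz : a * b * ((y a + y b) / 2) ≤ 10 ^ 6 * u := by linarith [hy.2 a b ha han hb hbn]
  have hle := mul_le_pairTerm_mul (2 * c) hy.1 ha hb hz
  push_cast at hle
  linarith

lemma mul_le (hy : PairBounds n u y) (c : ℕ) (ha : 1 ≤ a) (han : a ≤ n) :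
    c * y a ≤ pairTerm c a a * u :=
  mul_le_pairTerm_mul c hy.1 ha ha (by linarith [hy.2 a a ha han ha han])

lemma le_staircase_zero (hy : PairBounds n u y) (s : ℕ → ℕ) (sa sb acc : ℕ) (ha : 1 ≤ a)
    (han : a + 1 ≤ n) : sa * y a + sb * y (a + 1) + acc * u ≤ staircase s 0 a sa sb acc * u := by
  rw [staircase_zero]
  split_ifs with hs
  · have hpair := hy.mul_add_le sa ha (by omega) (by omega) han
    have hrest := hy.mul_le (sb - sa) (by omega) han
    rw [Nat.cast_sub hs] at hrest
    push_cast
    linarith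
  · have hpair := hy.mul_add_le sb ha (by omega) (by omega) han
    have hrest := hy.mul_le (sa - sb) ha (by omega)
    rw [Nat.cast_sub (by omega)] at hrest
    push_cast
    linarith

lemma le_staircase (hy : PairBounds n u y) (s : ℕ → ℕ) (m : ℕ) :
    ∀ a sa sb acc : ℕ, 1 ≤ a → a + (m + 1) ≤ n →
      sa * y a + ∑ i ∈ Finset.range m, s (a + 1 + i) * y (a + 1 + i) + sb * y (a + (m + 1)) +
        acc * u ≤ staircase s m a sa sb acc * u := by
  induction m with
  | zero =>
    intro a sa sb acc ha han
    simpa using hy.le_staircase_zero s sa sb acc ha han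
  | succ m ih =>
    intro a sa sb acc ha han
    rw [staircase_succ]
    split_ifs with hs
    · have hpair := hy.mul_add_le (b := a + (m + 2)) sa ha (by omega) (by omega) han
      have hrest := ih (a + 1) (s (a + 1)) (sb - sa) (acc + pairTerm (2 * sa) a (a + (m + 2)))
        (by omega) (by omega)
      have hshift : ∑ i ∈ Finset.range m, (s (a + 1 + (i + 1)) : ℚ) * y (a + 1 + (i + 1)) =
          ∑ i ∈ Finset.range m, s (a + 1 + 1 + i) * y (a + 1 + 1 + i) :=
        Finset.sum_congr rfl fun i _ => by rw [add_right_comm (a + 1) 1 i, ← add_assoc (a + 1) i 1]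
      rw [Nat.cast_sub hs, show a + 1 + (m + 1) = a + (m + 2) by omega] at hrest
      rw [Finset.sum_range_succ', hshift, add_zero]
      push_cast at hrest ⊢
      linarith
    · have hpair := hy.mul_add_le (b := a + (m + 2)) sb ha (by omega) (by omega) han
      have hrest := ih a (sa - sb) (s (a + (m + 1))) (acc + pairTerm (2 * sb) a (a + (m + 2))) ha
        (by omega)
      rw [Nat.cast_sub (by omega)] at hrest
      rw [Finset.sum_range_succ, add_right_comm a 1 m, add_assoc a m 1]
      push_cast at hrest ⊢
      linarith

end PairBounds

end

/-- The staircase bound for the variables `1, …, n` with coefficients `s`. -/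
def staircaseValue (s : ℕ → ℕ) (n : ℕ) : ℕ := staircase s (Nat.sub n 2) 1 (s 1) (s n) 0

lemma PairBounds.sum_mul_le_staircaseValue {n : ℕ} {u : ℚ} {y : ℕ → ℚ} (hy : PairBounds n u y)
    (hn : 2 ≤ n) (s : ℕ → ℕ) : ∑ a ∈ Finset.Icc 1 n, s a * y a ≤ staircaseValue s n * u := by
  obtain ⟨n, rfl⟩ := Nat.exists_eq_add_of_le' hn
  have hle := hy.le_staircase s n 1 (s 1) (s (n + 2)) 0 le_rfl (by omega)
  have hends : ∑ a ∈ Finset.Icc 1 (n + 2), s a * y a = s 1 * y 1 +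
      ∑ i ∈ Finset.range n, s (1 + 1 + i) * y (1 + 1 + i) + s (n + 2) * y (1 + (n + 1)) := by
    rw [Finset.sum_Icc_succ_top (by omega), ← Finset.Ico_add_one_right_eq_Icc,
      Finset.sum_eq_sum_Ico_succ_bot (by omega), Finset.sum_Ico_eq_sum_range,
      show n + 1 + 1 - (1 + 1) = n from rfl, add_comm 1 (n + 1)]
  rw [hends, staircaseValue]
  simpa using hle

/-- Checks that a staircase value `A` and an error sum `E` for the levels up to `n` give the bound
`k + 2` for all heights from `h₀` to `n` and all `k ≥ k₀`. -/
def isLinearBoundEnough (A E h₀ n k₀ : ℕ) : Bool :=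
  and (Nat.ble (Nat.mul A n) (Nat.mul 2310000000 h₀))
    (Nat.ble (Nat.mul (Nat.mul 1000000 h₀) E)
      (Nat.add (Nat.mul k₀ (Nat.sub (Nat.mul 2310000000 h₀) (Nat.mul A n)))
        (Nat.mul 2310000000 h₀)))

lemma le_add_one_of_isLinearBoundEnough {A E h₀ n k₀ k N : ℕ} (hpos : 1 ≤ h₀) (hk : k₀ ≤ k)
    (hok : isLinearBoundEnough A E h₀ n k₀ = true)
    (hN : (2310 * N : ℚ) ≤ A * (k * n / (10 ^ 6 * h₀)) + E) : N ≤ k + 1 := by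
  rw [isLinearBoundEnough, Bool.and_eq_true, Nat.ble_eq, Nat.ble_eq] at hok
  obtain ⟨hA, hE⟩ : A * n ≤ 2310000000 * h₀ ∧ 1000000 * h₀ * E ≤
    k₀ * (2310000000 * h₀ - A * n) + 2310000000 * h₀ := hok
  obtain ⟨d, hd⟩ := Nat.exists_eq_add_of_le hA
  rw [hd, Nat.add_sub_cancel_left] at hE
  have : (0 : ℚ) < h₀ := by exact_mod_cast hpos
  have hd' : (2310000000 * h₀ : ℚ) = A * n + d := by exact_mod_cast hd
  have hE' : (1000000 * h₀ * E : ℚ) ≤ k * d + (A * n + d) := by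
    exact_mod_cast hE.trans (by gcongr)
  have hscaled : (2310000000 * h₀ * N : ℚ) ≤ 2310000000 * h₀ * (k + 1) :=
    calc (2310000000 * h₀ * N : ℚ) = 10 ^ 6 * h₀ * (2310 * N) := by ring
      _ ≤ 10 ^ 6 * h₀ * (A * (k * n / (10 ^ 6 * h₀)) + E) := by gcongr
      _ = A * n * k + 1000000 * h₀ * E := by field_simp; ring
      _ ≤ A * n * k + (k * d + (A * n + d)) := by gcongr
      _ = 2310000000 * h₀ * (k + 1) := by rw [hd']; ring
  exact_mod_cast le_of_mul_le_mul_left hscaled (by positivity)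

lemma levelCount_le_levelLength {h a : ℕ} {right left : ℕ → ℤ} {s e : ℕ → ℕ} (ha : 1 ≤ a)
    (hah : a ≤ h) (hlin : 2310 * (a * (levelCount a (right a) (left a) : ℤ)) ≤
      s a * (right a + left a) + a * e a) :
    (2310 * levelCount a (right a) (left a) : ℚ) ≤
      s a * (levelLength h right left a / a) + e a := by
  have ha₀ : (0 : ℚ) < a := by exact_mod_cast ha
  have hlen : s a * (right a + left a) ≤ s a * levelLength h right left a :=
    mul_le_mul_of_nonneg_left (le_levelLength hah) (Nat.cast_nonneg _)
  have hlin' : 2310 * (a * (levelCount a (right a) (left a) : ℚ)) ≤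
      s a * levelLength h right left a + a * e a := by
    exact_mod_cast hlin.trans (add_le_add_left hlen _)
  refine le_of_mul_le_mul_left ?_ ha₀
  field_simp
  linarith

namespace LevelBounds

variable {k h h₀ n : ℕ} {right left : ℕ → ℤ}

lemma pairBounds (hb : LevelBounds k h right left) (hpos : 1 ≤ h₀) (hh : h₀ ≤ h) (hn : h ≤ n) :
    PairBounds n (k * n / (10 ^ 6 * h₀)) fun a => levelLength h right left a / a := by
  refine ⟨by positivity, fun a b ha han hb' hbn => ?_⟩
  have hh₀ : (0 : ℚ) < h₀ := by exact_mod_cast hpos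
  have ha₀ : (0 : ℚ) < a := by exact_mod_cast ha
  have hb₀ : (0 : ℚ) < b := by exact_mod_cast hb'
  have hlen (c : ℕ) : (0 : ℚ) ≤ levelLength h right left c := by
    exact_mod_cast levelLength_nonneg h right left c
  have hpair : (h : ℚ) * (b * levelLength h right left a + a * levelLength h right left b) ≤
      2 * k * n := by
    exact_mod_cast hb.height_mul_levelLength_add_le hn ha han hb' hbn
  have hpair' : (h₀ : ℚ) * (b * levelLength h right left a + a * levelLength h right left b) ≤
      2 * k * n :=
    le_trans (mul_le_mul_of_nonneg_right (by exact_mod_cast hh)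
      (add_nonneg (mul_nonneg hb₀.le (hlen a)) (mul_nonneg ha₀.le (hlen b)))) hpair
  refine le_of_mul_le_mul_left ?_ hh₀
  field_simp
  linarith

variable {s e : ℕ → ℕ}

lemma sum_levelCount_le_staircaseValue (hb : LevelBounds k h right left) (hpos : 1 ≤ h₀)
    (hh : h₀ ≤ h) (hn : h ≤ n) (hn' : 2 ≤ n)
    (hlin : ∀ a, 1 ≤ a → a ≤ h → 2310 * (a * (levelCount a (right a) (left a) : ℤ)) ≤
      s a * (right a + left a) + a * e a) :
    2310 * ∑ a ∈ Finset.Icc 1 h, (levelCount a (right a) (left a) : ℚ) ≤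
      staircaseValue s n * (k * n / (10 ^ 6 * h₀)) + ∑ a ∈ Finset.Icc 1 n, e a := by
  have hlen (a : ℕ) : (0 : ℚ) ≤ levelLength h right left a := by
    exact_mod_cast levelLength_nonneg h right left a
  calc 2310 * ∑ a ∈ Finset.Icc 1 h, (levelCount a (right a) (left a) : ℚ) ≤
        ∑ a ∈ Finset.Icc 1 h, (s a * (levelLength h right left a / a) + e a : ℚ) := by
        rw [Finset.mul_sum]
        refine Finset.sum_le_sum fun a ha => ?_
        obtain ⟨ha, hah⟩ := Finset.mem_Icc.mp ha
        exact levelCount_le_levelLength ha hah (hlin a ha hah)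
    _ ≤ ∑ a ∈ Finset.Icc 1 n, (s a * (levelLength h right left a / a) + e a : ℚ) :=
        Finset.sum_le_sum_of_subset_of_nonneg (Finset.Icc_subset_Icc_right hn) fun a _ _ => by
          have := hlen a
          positivity
    _ ≤ staircaseValue s n * (k * n / (10 ^ 6 * h₀)) + ∑ a ∈ Finset.Icc 1 n, e a := by
        rw [Finset.sum_add_distrib, Nat.cast_sum]
        exact add_le_add_left ((hb.pairBounds hpos hh hn).sum_mul_le_staircaseValue hn' s) _

end LevelBounds

/-! ### Heights from four to `4700` -/

/-- The smallest `k` for which height `h` is left to the linear bounds. -/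
def minLinearK (h : ℕ) : ℕ := max (minK h) (maxTableK h + 1)

/-- The last height treated together with height `h`. -/
def rangeEnd (h : ℕ) : ℕ := Nat.add h (Nat.div (Nat.sub h 40) 42)

/-- The sum of `E` and the errors of the linear bounds for the levels `a, …, a + m - 1`. -/
def addErrors (m : ℕ) : ℕ → ℕ → ℕ :=
  Nat.rec (fun _ E => E) (fun _ ih a E =>
    evalThen (Nat.add E (levelError (levelDivisor a))) fun E' =>
    evalThen (Nat.succ a) fun a' => ih a' E') m

/-- Checks the staircase bounds from height `h` on in at most `n` ranges until height `top` is
reached; `E` is the error sum for the levels below `h`. -/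
def checkRanges (totients top n : ℕ) : ℕ → ℕ → Bool :=
  Nat.rec (fun h _ => Nat.ble top h) (fun _ ih h E =>
    evalThen (rangeEnd h) fun m =>
    evalThen (addErrors (Nat.sub (Nat.succ m) h) h E) fun E' =>
    evalThen (staircaseValue (levelSlope totients) m) fun A =>
    and (isLinearBoundEnough A E' h m (minLinearK h)) (evalThen (Nat.succ m) fun h' => ih h' E')) n

lemma addErrors_succ (m a E : ℕ) :
    addErrors (m + 1) a E = addErrors m (a + 1) (E + levelError (levelDivisor a)) := by
  simp only [addErrors, evalThen_eq]
  rfl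

lemma addErrors_eq (m : ℕ) : ∀ a E : ℕ,
    addErrors m a E = E + ∑ i ∈ Finset.Ico a (a + m), levelError (levelDivisor i) := by
  induction m with
  | zero => exact fun a E => by simp [addErrors]
  | succ m ih =>
    intro a E
    rw [addErrors_succ, ih, Finset.sum_eq_sum_Ico_succ_bot (by omega : a < a + (m + 1)),
      add_assoc a 1 m, add_comm 1 m, add_assoc]

lemma checkRanges_succ (totients top n h E : ℕ) : checkRanges totients top (n + 1) h E =
    (isLinearBoundEnough (staircaseValue (levelSlope totients) (rangeEnd h))
      (addErrors (rangeEnd h + 1 - h) h E) h (rangeEnd h) (minLinearK h) &&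
    checkRanges totients top n (rangeEnd h + 1) (addErrors (rangeEnd h + 1 - h) h E)) := by
  simp only [checkRanges, evalThen_eq]
  rfl

lemma le_rangeEnd (h : ℕ) : h ≤ rangeEnd h := Nat.le_add_right _ _

lemma rangeEnd_eq_self {h : ℕ} (hh : h < 82) : rangeEnd h = h := by
  change h + (h - 40) / 42 = h
  omega

lemma maxTableK_eq_zero {h : ℕ} (hh : 52 ≤ h) : maxTableK h = 0 :=
  List.getD_eq_default _ _ (by simp only [List.length_cons, List.length_nil]; omega)

lemma minLinearK_le_of_le_rangeEnd {h₀ h : ℕ} (hh : h₀ ≤ h) (hh' : h ≤ rangeEnd h₀) :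
    minLinearK h₀ ≤ minLinearK h := by
  rcases Nat.lt_or_ge h₀ 82 with hsmall | hlarge
  · rw [rangeEnd_eq_self hsmall] at hh'
    rw [le_antisymm hh hh']
  · have hsq : h₀ ^ 2 ≤ h ^ 2 := Nat.pow_le_pow_left hh 2
    rw [minLinearK, minLinearK, maxTableK_eq_zero (by omega), maxTableK_eq_zero (by omega), minK,
      minK]
    omega

namespace LevelBounds

lemma one_add_sum_levelCount_le_of_checkRanges {top : ℕ} (n : ℕ) : ∀ h₀ E : ℕ, 4 ≤ h₀ →
    ∑ a ∈ Finset.Ico 1 h₀, levelError (levelDivisor a) ≤ E →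
    checkRanges totientTable top n h₀ E = true →
    ∀ {k h : ℕ} {right left : ℕ → ℤ}, LevelBounds k h right left → h₀ ≤ h → h < top →
      minLinearK h ≤ k → 1 + ∑ a ∈ Finset.Icc 1 h, levelCount a (right a) (left a) ≤ k + 2 := by
  induction n with
  | zero =>
    intro h₀ E _ _ hcheck k h right left _ hh htop
    have : top ≤ h₀ := Nat.le_of_ble_eq_true hcheck
    omega
  | succ n ih =>
    intro h₀ E h4 hE hcheck k h right left hb hh htop hk
    rw [checkRanges_succ, Bool.and_eq_true] at hcheck
    have hend := le_rangeEnd h₀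
    have hE' : ∑ a ∈ Finset.Ico 1 (rangeEnd h₀ + 1), levelError (levelDivisor a) ≤
        addErrors (rangeEnd h₀ + 1 - h₀) h₀ E := by
      rw [addErrors_eq, Nat.add_sub_cancel' (by omega),
        ← Finset.sum_Ico_consecutive _ (by omega : 1 ≤ h₀) (by omega)]
      exact Nat.add_le_add_right hE _
    rcases Nat.lt_or_ge (rangeEnd h₀) h with hlt | hle
    · exact ih _ _ (by omega) hE' hcheck.2 hb hlt htop hk
    · have hsum := hb.sum_levelCount_le_staircaseValue (by omega) hh hle (by omega)
        fun a ha hah => mul_levelCount_le_levelSlope ha (hb.neg_one_le a ha hah)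
      have hN : ∑ a ∈ Finset.Icc 1 h, levelCount a (right a) (left a) ≤ k + 1 := by
        refine le_add_one_of_isLinearBoundEnough (by omega : 1 ≤ h₀)
          ((minLinearK_le_of_le_rangeEnd hh hle).trans hk) hcheck.1 ?_
        rw [Nat.cast_sum]
        refine hsum.trans (add_le_add_right ?_ _)
        exact_mod_cast hE'
      omega

set_option maxRecDepth 100000 in
lemma checkRanges_totientTable :
    (evalThen totientTable fun T => checkRanges T 4700 260 4 (addErrors 3 1 0)) = true := by
  decide +kernel

lemma one_add_sum_levelCount_le_of_minLinearK_le {k h : ℕ} {right left : ℕ → ℤ}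
    (hb : LevelBounds k h right left) (h4 : 4 ≤ h) (htop : h < 4700) (hk : minLinearK h ≤ k) :
    1 + ∑ a ∈ Finset.Icc 1 h, levelCount a (right a) (left a) ≤ k + 2 := by
  have hcheck := checkRanges_totientTable
  rw [evalThen_eq] at hcheck
  refine one_add_sum_levelCount_le_of_checkRanges 260 4 _ le_rfl ?_ hcheck hb h4 htop hk
  rw [addErrors_eq, zero_add]

end LevelBounds

/-! ### Heights from `4700` on -/

/-- The sums of `w` over intervals of natural numbers differ from `c` times the length by at most
`S`. -/
def HasDensity (w : ℕ → ℚ) (c S : ℚ) : Prop :=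
  ∀ p q : ℕ, p ≤ q → |∑ a ∈ Finset.Ioc p q, w a - c * (q - p)| ≤ S

lemma sum_Ioc_mul_eq_sum_tails (w : ℕ → ℚ) {p q : ℕ} (hpq : p ≤ q) :
    ∑ a ∈ Finset.Ioc p q, a * w a =
      p * ∑ a ∈ Finset.Ioc p q, w a + ∑ i ∈ Finset.Ico p q, ∑ a ∈ Finset.Ioc i q, w a := by
  induction q, hpq using Nat.le_induction with
  | base => simp
  | succ q hpq ih =>
    have htails : ∑ i ∈ Finset.Ico p q, ∑ a ∈ Finset.Ioc i (q + 1), w a =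
        ∑ i ∈ Finset.Ico p q, ∑ a ∈ Finset.Ioc i q, w a + (q - p) * w (q + 1) := by
      rw [Finset.sum_congr rfl fun i hi => Finset.sum_Ioc_succ_top (Finset.mem_Ico.mp hi).2.le w,
        Finset.sum_add_distrib, Finset.sum_const, Nat.card_Ico, nsmul_eq_mul, Nat.cast_sub hpq]
    rw [Finset.sum_Ioc_succ_top hpq, Finset.sum_Ioc_succ_top hpq, Finset.sum_Ico_succ_top hpq,
      htails, ih, Finset.sum_Ioc_succ_top le_rfl, Finset.Ioc_self, Finset.sum_empty]
    push_cast
    ring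

lemma sum_Ioc_cast {p q : ℕ} (hpq : p ≤ q) :
    ∑ a ∈ Finset.Ioc p q, (a : ℚ) = (q * (q + 1) - p * (p + 1)) / 2 := by
  induction q, hpq using Nat.le_induction with
  | base => simp
  | succ q hpq ih =>
    rw [Finset.sum_Ioc_succ_top hpq, ih]
    push_cast
    ring

namespace HasDensity

variable {w : ℕ → ℚ} {c S : ℚ}

lemma le_sum_mul (hw : HasDensity w c S) {p q : ℕ} (hpq : p ≤ q) :
    c * ((q * (q + 1) - p * (p + 1)) / 2) - S * q ≤ ∑ a ∈ Finset.Ioc p q, a * w a := by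
  have hmoment := sum_Ioc_mul_eq_sum_tails (fun a => w a - c) hpq
  have hdiff {i : ℕ} (hi : i ≤ q) : -S ≤ ∑ a ∈ Finset.Ioc i q, (w a - c) := by
    have hsum : ∑ a ∈ Finset.Ioc i q, (w a - c) = ∑ a ∈ Finset.Ioc i q, w a - c * (q - i) := by
      rw [Finset.sum_sub_distrib, Finset.sum_const, Nat.card_Ioc, nsmul_eq_mul, Nat.cast_sub hi,
        mul_comm c]
    exact hsum ▸ (abs_le.mp (hw i q hi)).1
  have htails : ((q - p : ℕ) : ℚ) * -S ≤
      ∑ i ∈ Finset.Ico p q, ∑ a ∈ Finset.Ioc i q, (w a - c) := by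
    rw [← nsmul_eq_mul, ← Nat.card_Ico]
    exact Finset.card_nsmul_le_sum _ _ _ fun i hi => hdiff (Finset.mem_Ico.mp hi).2.le
  have hfirst : (p : ℚ) * -S ≤ p * ∑ a ∈ Finset.Ioc p q, (w a - c) := by
    gcongr
    exact hdiff hpq
  have hsplit : ∑ a ∈ Finset.Ioc p q, (a : ℚ) * (w a - c) =
      ∑ a ∈ Finset.Ioc p q, a * w a - (q * (q + 1) - p * (p + 1)) / 2 * c := by
    simp only [mul_sub, Finset.sum_sub_distrib, ← Finset.sum_mul, sum_Ioc_cast hpq]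
  rw [Nat.cast_sub hpq] at htails
  linarith

variable {x y : ℚ}

lemma sum_floor_le (hw : HasDensity w c S) (hc : 0 ≤ c) (hx : 0 ≤ x) (hxy : x ≤ y) (n : ℕ) :
    ∑ a ∈ Finset.Ioc ⌊x * n⌋₊ ⌊y * n⌋₊, w a ≤ c * (y - x) * n + c + S := by
  have hle : ⌊x * n⌋₊ ≤ ⌊y * n⌋₊ := Nat.floor_mono (by gcongr)
  have hlower := Nat.lt_floor_add_one (x * n)
  have hupper := Nat.floor_le (mul_nonneg (hx.trans hxy) n.cast_nonneg)
  have hlen : c * ((⌊y * n⌋₊ : ℚ) - ⌊x * n⌋₊) ≤ c * ((y - x) * n + 1) := by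
    gcongr
    linarith
  linarith [(abs_le.mp (hw _ _ hle)).2]

lemma le_sum_mul_floor (hw : HasDensity w c S) (hc : 0 ≤ c) (hx : 0 ≤ x) (hxy : x ≤ y) (n : ℕ) :
    c / 2 * ((y ^ 2 - x ^ 2) * n ^ 2 - (x + y) * n) - S * y * n ≤
      ∑ a ∈ Finset.Ioc ⌊x * n⌋₊ ⌊y * n⌋₊, a * w a := by
  have hS : 0 ≤ S := (abs_nonneg _).trans (hw 0 0 le_rfl)
  have hy : 0 ≤ y * n := mul_nonneg (hx.trans hxy) n.cast_nonneg
  have hle : ⌊x * n⌋₊ ≤ ⌊y * n⌋₊ := Nat.floor_mono (by gcongr)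
  have hlower := Nat.floor_le (mul_nonneg hx n.cast_nonneg)
  have hupper := Nat.floor_le hy
  have hupper' := Nat.lt_floor_add_one (y * n)
  have hsq : (⌊x * n⌋₊ : ℚ) * (⌊x * n⌋₊ + 1) ≤ x * n * (x * n + 1) := by gcongr
  have hsq' : (y * n - 1) * (y * n) ≤ ⌊y * n⌋₊ * (⌊y * n⌋₊ + 1) := by
    nlinarith
  have hmain : c * (((y * n - 1) * (y * n) - x * n * (x * n + 1)) / 2) - S * (y * n) ≤
      c * ((⌊y * n⌋₊ * (⌊y * n⌋₊ + 1) - ⌊x * n⌋₊ * (⌊x * n⌋₊ + 1)) / 2) - S * ⌊y * n⌋₊ := by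
    gcongr
  linarith [hw.le_sum_mul hle]

end HasDensity

lemma moment_mul_sum_add_sum_le {w x : ℕ → ℚ} {s t : Finset ℕ} {C m d d' : ℚ} (hC : 0 ≤ C)
    (hw : ∀ a, 0 ≤ w a) (hx : ∀ a, 0 ≤ x a)
    (hpair : ∀ a ∈ s, ∀ b ∈ t, b * x a + a * x b ≤ C) (hs : m ≤ ∑ a ∈ s, a * w a)
    (ht : m ≤ ∑ b ∈ t, b * w b) (hd : ∑ a ∈ s, w a ≤ d) (hd' : ∑ b ∈ t, w b ≤ d') :
    m * (∑ a ∈ s, w a * x a + ∑ b ∈ t, w b * x b) ≤ C * (d * d') := by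
  have hwx (u : Finset ℕ) : 0 ≤ ∑ a ∈ u, w a * x a :=
    Finset.sum_nonneg fun a _ => mul_nonneg (hw a) (hx a)
  have hsum (u : Finset ℕ) : 0 ≤ ∑ a ∈ u, w a := Finset.sum_nonneg fun a _ => hw a
  calc m * (∑ a ∈ s, w a * x a + ∑ b ∈ t, w b * x b) =
        (∑ a ∈ s, w a * x a) * m + m * ∑ b ∈ t, w b * x b := by ring
    _ ≤ (∑ a ∈ s, w a * x a) * (∑ b ∈ t, b * w b) + (∑ a ∈ s, a * w a) * ∑ b ∈ t, w b * x b := by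
        gcongr
        exacts [hwx s, hwx t]
    _ = ∑ a ∈ s, ∑ b ∈ t, w a * w b * (b * x a + a * x b) := by
        rw [Finset.sum_mul_sum, Finset.sum_mul_sum, ← Finset.sum_add_distrib]
        refine Finset.sum_congr rfl fun a _ => ?_
        rw [← Finset.sum_add_distrib]
        exact Finset.sum_congr rfl fun b _ => by ring
    _ ≤ ∑ a ∈ s, ∑ b ∈ t, w a * w b * C := by
        gcongr with a ha b hb
        exacts [mul_nonneg (hw a) (hw b), hpair a ha b hb]
    _ = C * ((∑ a ∈ s, w a) * ∑ b ∈ t, w b) := by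
        rw [Finset.sum_mul_sum, Finset.mul_sum]
        refine Finset.sum_congr rfl fun a _ => ?_
        rw [Finset.mul_sum]
        exact Finset.sum_congr rfl fun b _ => by ring
    _ ≤ C * (d * d') := by
        gcongr
        exacts [hsum t, (hsum s).trans hd]

/-- Checks that the sums of `sieveWeight` up to `r, …, r + m` stay close to their mean, which is
`3317760 / 2310 = 110592 / 77` per term, and that the last of them is the sum over a full period;
`D` is the sum up to `r`. -/
def checkDiscrepancy (m : ℕ) : ℕ → ℕ → Bool :=
  Nat.rec (fun _ D => Nat.beq D 3317760) (fun _ ih r D =>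
    and (and (Nat.ble (Nat.mul 110592 r) (Nat.add (Nat.mul 77 D) 14342))
      (Nat.ble (Nat.mul 77 D) (Nat.add (Nat.mul 110592 r) 87974)))
    (evalThen (Nat.succ r) fun r' => evalThen (Nat.add D (sieveWeight r')) fun D' => ih r' D')) m

lemma checkDiscrepancy_succ (m r D : ℕ) : checkDiscrepancy (m + 1) r D =
    ((Nat.ble (110592 * r) (77 * D + 14342) && Nat.ble (77 * D) (110592 * r + 87974)) &&
      checkDiscrepancy m (r + 1) (D + sieveWeight (r + 1))) := by
  simp only [checkDiscrepancy, evalThen_eq]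
  rfl

lemma sum_sieveWeight_of_checkDiscrepancy (m : ℕ) : ∀ r : ℕ,
    checkDiscrepancy m r (∑ a ∈ Finset.Ioc 0 r, sieveWeight a) = true →
    (∀ A, r ≤ A → A < r + m → 110592 * A ≤ 77 * ∑ a ∈ Finset.Ioc 0 A, sieveWeight a + 14342 ∧
      77 * ∑ a ∈ Finset.Ioc 0 A, sieveWeight a ≤ 110592 * A + 87974) ∧
    ∑ a ∈ Finset.Ioc 0 (r + m), sieveWeight a = 3317760 := by
  induction m with
  | zero => exact fun r hcheck => ⟨fun A _ _ => by omega, Nat.eq_of_beq_eq_true hcheck⟩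
  | succ m ih =>
    intro r hcheck
    rw [checkDiscrepancy_succ, Bool.and_eq_true, Bool.and_eq_true, Nat.ble_eq, Nat.ble_eq,
      ← Finset.sum_Ioc_succ_top r.zero_le] at hcheck
    obtain ⟨hbounds, hperiod⟩ := ih (r + 1) hcheck.2
    refine ⟨fun A hA hA' => ?_, by rwa [add_right_comm] at hperiod⟩
    rcases hA.eq_or_lt with rfl | hlt
    · exact hcheck.1
    · exact hbounds A hlt (by omega)

set_option maxRecDepth 100000 in
lemma checkDiscrepancy_sieveWeight : checkDiscrepancy 2310 0 0 = true := by decide +kernel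

lemma sum_sieveWeight_add (A : ℕ) : ∑ a ∈ Finset.Ioc 0 (A + 2310), sieveWeight a =
    ∑ a ∈ Finset.Ioc 0 A, sieveWeight a + 3317760 := by
  induction A with
  | zero => simpa using (sum_sieveWeight_of_checkDiscrepancy 2310 0 checkDiscrepancy_sieveWeight).2
  | succ A ih =>
    rw [add_right_comm, Finset.sum_Ioc_succ_top (Nat.zero_le _), ih,
      Finset.sum_Ioc_succ_top (Nat.zero_le _), add_right_comm A, sieveWeight_add, add_right_comm]

lemma sum_sieveWeight_bounds (A : ℕ) :
    110592 * A ≤ 77 * ∑ a ∈ Finset.Ioc 0 A, sieveWeight a + 14342 ∧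
      77 * ∑ a ∈ Finset.Ioc 0 A, sieveWeight a ≤ 110592 * A + 87974 := by
  induction A using Nat.strong_induction_on with
  | _ A ih =>
    rcases Nat.lt_or_ge A 2310 with hlt | hge
    · exact (sum_sieveWeight_of_checkDiscrepancy 2310 0 checkDiscrepancy_sieveWeight).1 A
        A.zero_le (by omega)
    · obtain ⟨B, rfl⟩ := Nat.exists_eq_add_of_le' hge
      have := ih B (by omega)
      rw [sum_sieveWeight_add]
      omega

lemma hasDensity_sieveWeight :
    HasDensity (fun a => sieveWeight a) (110592 / 77) (102316 / 77) := by
  intro p q hpq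
  have hsplit := Finset.sum_Ioc_consecutive (fun a => (sieveWeight a : ℚ)) p.zero_le hpq
  have hbounds (A : ℕ) : (110592 * A : ℚ) ≤ 77 * ∑ a ∈ Finset.Ioc 0 A, (sieveWeight a : ℚ) + 14342 ∧
      77 * ∑ a ∈ Finset.Ioc 0 A, (sieveWeight a : ℚ) ≤ 110592 * A + 87974 := by
    exact_mod_cast sum_sieveWeight_bounds A
  have hp := hbounds p
  have hq := hbounds q
  rw [abs_le]
  constructor <;> linarith

lemma levelError_gcd_le (a : ℕ) : levelError (a.gcd 2310) ≤ 11641 := by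
  have hdivisors : ∀ g ∈ Nat.divisors 2310, levelError g ≤ 11641 := by decide +kernel
  exact hdivisors _ (Nat.mem_divisors.mpr ⟨Nat.gcd_dvd_right a 2310, by norm_num⟩)

/-- The block of the levels between `x * h` and `y * h`: the sum of their lengths, weighted by
`sieveWeight`. -/
def blockLength (h : ℕ) (right left : ℕ → ℤ) (x y : ℚ) : ℚ :=
  ∑ a ∈ Finset.Ioc ⌊x * h⌋₊ ⌊y * h⌋₊, sieveWeight a * levelLength h right left a

lemma blockLength_add_blockLength (h : ℕ) (right left : ℕ → ℤ) {x y z : ℚ} (hxy : x ≤ y)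
    (hyz : y ≤ z) : blockLength h right left x y + blockLength h right left y z =
      blockLength h right left x z :=
  Finset.sum_Ioc_consecutive _ (Nat.floor_mono (by gcongr)) (Nat.floor_mono (by gcongr))

/-- Bounds which imply that, at heights `h ≥ 4700`, the block of the levels between `x * h` and
`y * h` has total weight at most `d * h` and first moment at least `m * h ^ 2`. -/
structure BlockBounds (x y m d : ℚ) : Prop where
  nonneg : 0 ≤ x
  le : x ≤ y
  le_one : y ≤ 1
  weight : 110592 / 77 * (y - x) + 212908 / 77 / 4700 ≤ d
  moment : m ≤ 55296 / 77 * (y ^ 2 - x ^ 2) - (55296 * (x + y) + 102316 * y) / 77 / 4700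

namespace BlockBounds

variable {x y m d : ℚ} {h : ℕ}

lemma sum_sieveWeight_le (hB : BlockBounds x y m d) (hh : 4700 ≤ h) :
    ∑ a ∈ Finset.Ioc ⌊x * h⌋₊ ⌊y * h⌋₊, (sieveWeight a : ℚ) ≤ d * h := by
  have hh₀ : (4700 : ℚ) ≤ h := by exact_mod_cast hh
  have hsum := hasDensity_sieveWeight.sum_floor_le (by norm_num) hB.nonneg hB.le h
  have hweight := mul_le_mul_of_nonneg_right hB.weight (by positivity : (0 : ℚ) ≤ h)
  linarith

lemma le_sum_mul_sieveWeight (hB : BlockBounds x y m d) (hh : 4700 ≤ h) :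
    m * h ^ 2 ≤ ∑ a ∈ Finset.Ioc ⌊x * h⌋₊ ⌊y * h⌋₊, a * (sieveWeight a : ℚ) := by
  have hh₀ : (0 : ℚ) ≤ h - 4700 := sub_nonneg.mpr (by exact_mod_cast hh)
  have hx := hB.nonneg
  have hy := hx.trans hB.le
  have hmoment := mul_le_mul_of_nonneg_right hB.moment (sq_nonneg (h : ℚ))
  have hlinear : 0 ≤ (55296 * (x + y) + 102316 * y) / 77 / 4700 * h * (h - 4700) := by positivity
  linarith [hasDensity_sieveWeight.le_sum_mul_floor (by norm_num) hx hB.le h]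

lemma one_le_and_le_of_mem (hB : BlockBounds x y m d) {a : ℕ}
    (ha : a ∈ Finset.Ioc ⌊x * h⌋₊ ⌊y * h⌋₊) : 1 ≤ a ∧ a ≤ h := by
  obtain ⟨hlower, hupper⟩ := Finset.mem_Ioc.mp ha
  have hfloor := Nat.floor_le_of_le (mul_le_of_le_one_left h.cast_nonneg hB.le_one)
  exact ⟨by omega, hupper.trans hfloor⟩

end BlockBounds

namespace LevelBounds

variable {k h : ℕ} {right left : ℕ → ℤ}

lemma sum_levelCount_le_blockLength (hb : LevelBounds k h right left) :
    2310 * ∑ a ∈ Finset.Icc 1 h, (levelCount a (right a) (left a) : ℚ) ≤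
      blockLength h right left 0 1 + 11641 * h := by
  have hlevel : ∀ a ∈ Finset.Ioc 0 h, (2310 * levelCount a (right a) (left a) : ℚ) ≤
      sieveWeight a * levelLength h right left a + 11641 := by
    intro a ha
    obtain ⟨ha, hah⟩ := Finset.mem_Ioc.mp ha
    have hcount := levelCount_le_sieveWeight ha (hb.neg_one_le a ha hah)
    have hlen : sieveWeight a * (right a + left a) ≤ sieveWeight a * levelLength h right left a :=
      mul_le_mul_of_nonneg_left (le_levelLength hah) (Nat.cast_nonneg _)
    have herror : (levelError (a.gcd 2310) : ℤ) ≤ 11641 := by exact_mod_cast levelError_gcd_le a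
    exact_mod_cast hcount.trans (add_le_add hlen herror)
  calc 2310 * ∑ a ∈ Finset.Icc 1 h, (levelCount a (right a) (left a) : ℚ) =
        ∑ a ∈ Finset.Ioc 0 h, (2310 * levelCount a (right a) (left a) : ℚ) := by
        rw [Finset.mul_sum]
        rfl
    _ ≤ ∑ a ∈ Finset.Ioc 0 h, (sieveWeight a * levelLength h right left a + 11641 : ℚ) :=
        Finset.sum_le_sum hlevel
    _ = blockLength h right left 0 1 + 11641 * h := by
        rw [Finset.sum_add_distrib, Finset.sum_const, Nat.card_Ioc, nsmul_eq_mul, Nat.sub_zero,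
          mul_comm (h : ℚ), blockLength, zero_mul, Nat.floor_zero, one_mul, Nat.floor_natCast]

lemma blockLength_add_le (hb : LevelBounds k h right left) (hh : 4700 ≤ h)
    {x y x' y' m d d' : ℚ} (hm : 0 < m) (hB : BlockBounds x y m d)
    (hB' : BlockBounds x' y' m d') :
    blockLength h right left x y + blockLength h right left x' y' ≤ 2 * k * (d * d' / m) := by
  have hpos : (0 : ℚ) < h := by exact_mod_cast hb.pos
  have hlen (a : ℕ) : (0 : ℚ) ≤ levelLength h right left a := by
    exact_mod_cast levelLength_nonneg h right left a
  have hpair : ∀ a ∈ Finset.Ioc ⌊x * h⌋₊ ⌊y * h⌋₊, ∀ b ∈ Finset.Ioc ⌊x' * h⌋₊ ⌊y' * h⌋₊,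
      (b * levelLength h right left a + a * levelLength h right left b : ℚ) ≤ 2 * k := by
    intro a ha b hb'
    obtain ⟨ha, hah⟩ := hB.one_le_and_le_of_mem ha
    obtain ⟨hb', hbh⟩ := hB'.one_le_and_le_of_mem hb'
    refine le_of_mul_le_mul_left ?_ hpos
    rw [mul_comm (h : ℚ) (2 * k)]
    exact_mod_cast hb.height_mul_levelLength_add_le le_rfl ha hah hb' hbh
  have hblocks := moment_mul_sum_add_sum_le (by positivity) (fun a => Nat.cast_nonneg _) hlen hpair
    (hB.le_sum_mul_sieveWeight hh) (hB'.le_sum_mul_sieveWeight hh) (hB.sum_sieveWeight_le hh)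
    (hB'.sum_sieveWeight_le hh)
  refine le_of_mul_le_mul_left (hblocks.trans_eq ?_) (by positivity : 0 < m * (h : ℚ) ^ 2)
  field_simp

/-- The first block is paired with the last one, and the second with the third; the cuts make the
two moments of each pair nearly equal. -/
lemma one_add_sum_levelCount_le_of_large (hb : LevelBounds k h right left) (hh : 4700 ≤ h)
    (hsq : 3 * h ^ 2 ≤ 4 * k) :
    1 + ∑ a ∈ Finset.Icc 1 h, levelCount a (right a) (left a) ≤ k + 2 := by
  have houter := hb.blockLength_add_le (x := 0) (y := 0.383) (x' := 0.924) (y' := 1) (m := 104.43)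
    (d := 550.7) (d' := 109.75) hh (by norm_num) (by constructor <;> norm_num)
    (by constructor <;> norm_num)
  have hinner := hb.blockLength_add_le (x := 0.383) (y := 0.707) (x' := 0.707) (y' := 0.924)
    (m := 253.24) (d := 465.95) (d' := 312.26) hh (by norm_num) (by constructor <;> norm_num)
    (by constructor <;> norm_num)
  rw [blockLength_add_blockLength _ _ _ (by norm_num) (by norm_num)] at hinner
  have hsplit : blockLength h right left 0 0.383 + blockLength h right left 0.383 0.924 +
      blockLength h right left 0.924 1 = blockLength h right left 0 1 := by
    rw [blockLength_add_blockLength _ _ _ (by norm_num) (by norm_num),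
      blockLength_add_blockLength _ _ _ (by norm_num) (by norm_num)]
  have hsum := hb.sum_levelCount_le_blockLength
  have hheight : 4700 * h * 3 ≤ 4 * k := by nlinarith
  have hheight' : (4700 * h * 3 : ℚ) ≤ 4 * k := by exact_mod_cast hheight
  have hle : (∑ a ∈ Finset.Icc 1 h, levelCount a (right a) (left a) : ℚ) ≤ k := by
    linarith
  have hle' : ∑ a ∈ Finset.Icc 1 h, levelCount a (right a) (left a) ≤ k := by exact_mod_cast hle
  omega

end LevelBounds

/-! ### Extremal sets -/

/-- The set consisting of `(1, 0)`, the pairs `(m, 1)` with `|m| ≤ a`, the pairs `(m, 2)` with `m`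
odd and `|m| < 2 * b`, and the pairs `(m, 3)` with `m` prime to three and `|m| < 3 * c`. It has the
maximal size among `k`-nice sets for suitable parameters. -/
noncomputable def lowSet (a b c : ℕ) : Finset (ℤ × ℤ) :=
  {1} ×ˢ {0} ∪ Finset.Icc (-a : ℤ) a ×ˢ {1} ∪
    (Finset.Ico (-b : ℤ) b).image (fun i => 2 * i + 1) ×ˢ {2} ∪
    ((Finset.Ico (-c : ℤ) c).image (fun i => 3 * i + 1) ∪
      (Finset.Ico (-c : ℤ) c).image (fun i => 3 * i + 2)) ×ˢ {3}

section

variable {k a b c : ℕ}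

lemma mem_lowSet {p : ℤ × ℤ} : p ∈ lowSet a b c ↔ (p.1 = 1 ∧ p.2 = 0) ∨
    ((-a ≤ p.1 ∧ p.1 ≤ a) ∧ p.2 = 1) ∨
    ((∃ i : ℤ, (-b ≤ i ∧ i < b) ∧ 2 * i + 1 = p.1) ∧ p.2 = 2) ∨
    ((∃ i : ℤ, (-c ≤ i ∧ i < c) ∧ (3 * i + 1 = p.1 ∨ 3 * i + 2 = p.1)) ∧ p.2 = 3) := by
  simp only [lowSet, Finset.mem_union, Finset.mem_product, Finset.mem_singleton, Finset.mem_image,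
    Finset.mem_Icc, Finset.mem_Ico, ← exists_or, ← and_or_left, or_assoc]

lemma card_lowSet (a b c : ℕ) : (lowSet a b c).card = 2 * a + 2 * b + 4 * c + 2 := by
  have hdisj : Disjoint ((Finset.Ico (-c : ℤ) c).image (fun i => 3 * i + 1))
      ((Finset.Ico (-c : ℤ) c).image (fun i => 3 * i + 2)) := by
    simp only [Finset.disjoint_left, Finset.mem_image]
    rintro _ ⟨i, -, rfl⟩ ⟨j, -, hij⟩
    omega
  have hrow {s t : Finset ℤ} {m n : ℤ} (hmn : m ≠ n) : Disjoint (s ×ˢ {m}) (t ×ˢ {n}) :=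
    Finset.disjoint_product.mpr (.inr (Finset.disjoint_singleton.mpr hmn))
  have hcard (d : ℕ) {f : ℤ → ℤ} (hf : Function.Injective f) :
      ((Finset.Ico (-d : ℤ) d).image f).card = 2 * d := by
    rw [Finset.card_image_of_injective _ hf, Int.card_Ico]
    omega
  rw [lowSet, Finset.card_union_of_disjoint, Finset.card_union_of_disjoint,
    Finset.card_union_of_disjoint (hrow (by decide))]
  · simp only [Finset.card_product, Finset.card_singleton, Finset.card_union_of_disjoint hdisj,
      Int.card_Icc, mul_one]
    rw [hcard b, hcard c, hcard c]
    · omega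
    all_goals exact fun i j hij => by simpa using hij
  · exact Finset.disjoint_union_left.mpr ⟨hrow (by decide), hrow (by decide)⟩
  · exact Finset.disjoint_union_left.mpr
      ⟨Finset.disjoint_union_left.mpr ⟨hrow (by decide), hrow (by decide)⟩, hrow (by decide)⟩

lemma isCoprime_of_mem_lowSet {p : ℤ × ℤ} (hp : p ∈ lowSet a b c) : IsCoprime p.1 p.2 := by
  rcases mem_lowSet.mp hp with ⟨hx, -⟩ | ⟨-, hy⟩ | ⟨⟨i, -, hx⟩, hy⟩ | ⟨⟨i, -, hx | hx⟩, hy⟩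
  · exact hx ▸ isCoprime_one_left
  · exact hy ▸ isCoprime_one_right
  · exact ⟨1, -i, by rw [← hx, hy]; ring⟩
  · exact ⟨1, -i, by rw [← hx, hy]; ring⟩
  · exact ⟨-1, i + 1, by rw [← hx, hy]; ring⟩

lemma neg_notMem_lowSet {p : ℤ × ℤ} (hp : p ∈ lowSet a b c) : -p ∉ lowSet a b c := by
  have hupper {q : ℤ × ℤ} (hq : q ∈ lowSet a b c) : (q.1 = 1 ∧ q.2 = 0) ∨ 0 < q.2 := by
    rcases mem_lowSet.mp hq with h | h | h | h <;> omega
  intro hneg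
  have hnonneg := hupper hneg
  rw [Prod.fst_neg, Prod.snd_neg] at hnonneg
  have := hupper hp
  omega

lemma isKNice_lowSet (hk : 3 ≤ k) (h₁₁ : 2 * a ≤ k) (h₁₂ : b = 0 ∨ 2 * a + 2 * b ≤ k + 1)
    (h₂₂ : b = 0 ∨ 8 * b ≤ k + 4) (h₁₃ : c = 0 ∨ 3 * a + 3 * c ≤ k + 1)
    (h₂₃ : b = 0 ∨ c = 0 ∨ 6 * b + 6 * c ≤ k + 5) (h₃₃ : c = 0 ∨ 18 * c ≤ k + 6) :
    IsKNice k (lowSet a b c : Set (ℤ × ℤ)) := by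
  refine .of_isCoprime (fun p hp => isCoprime_of_mem_lowSet hp) (fun p hp => neg_notMem_lowSet hp)
    fun p hp q hq => ?_
  rw [crossDet, abs_le]
  rcases mem_lowSet.mp hp with ⟨hx, hy⟩ | ⟨hx, hy⟩ | ⟨⟨i, hi, hx⟩, hy⟩ | ⟨⟨i, hi, hx⟩, hy⟩ <;>
    obtain ⟨hx', hy'⟩ | ⟨hx', hy'⟩ | ⟨⟨j, hj, hx'⟩, hy'⟩ | ⟨⟨j, hj, hx'⟩, hy'⟩ :=
      mem_lowSet.mp hq <;>
    rw [hy, hy'] <;> constructor <;> omega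

end

/-- For `k ≡ 2 (mod 6)` the sets have height three, for odd `k` height two and otherwise height
one. -/
lemma exists_isKNice_lowSet {k : ℕ} (hk : 385 ≤ k) : ∃ a b c : ℕ,
    IsKNice k (lowSet a b c : Set (ℤ × ℤ)) ∧ (lowSet a b c).card = targetSize k := by
  simp only [card_lowSet]
  rcases targetSize_cases k with ⟨hmod, htarget⟩ | ⟨hmod, htarget⟩ | ⟨hmod, htarget⟩
  · exact ⟨2 * (k / 6) - k / 24, k / 6 - k / 24, k / 24 + 1, by apply isKNice_lowSet <;> omega,
      by omega⟩
  · exact ⟨k / 2, 1, 0, by apply isKNice_lowSet <;> omega, by omega⟩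
  · exact ⟨k / 2, 0, 0, by apply isKNice_lowSet <;> omega, by omega⟩

/-! ### The upper bound -/

lemma LevelBounds.one_add_sum_levelCount_le_add_two {k h : ℕ} {right left : ℕ → ℤ}
    (hb : LevelBounds k h right left) (hk : 385 ≤ k) (hsq : 3 * h ^ 2 ≤ 4 * k) (hh : 4 ≤ h) :
    1 + ∑ a ∈ Finset.Icc 1 h, levelCount a (right a) (left a) ≤ k + 2 := by
  rcases Nat.lt_or_ge h 4700 with htop | hlarge
  · by_cases htable : h ≤ 51 ∧ k ≤ maxTableK h
    · exact hb.one_add_sum_levelCount_le_of_le_maxTableK hk hsq hh htable.1 htable.2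
    · refine hb.one_add_sum_levelCount_le_of_minLinearK_le hh htop (max_le ?_ ?_)
      · exact max_le hk (by omega)
      · rcases Nat.lt_or_ge 51 h with h52 | h51
        · rw [maxTableK_eq_zero h52]
          omega
        · omega
  · exact hb.one_add_sum_levelCount_le_of_large hlarge hsq

lemma IsKNice.ncard_le_targetSize {k : ℕ} {Q : Set (ℤ × ℤ)} (hQ : IsKNice k Q) (hk : 385 ≤ k) :
    Q.ncard ≤ targetSize k := by
  have htarget := targetSize_cases k
  rcases hQ.exists_levelBounds with hone | ⟨h, right, left, hb, hsq, hcard⟩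
  · omega
  · refine hcard.trans ?_
    rcases Nat.lt_or_ge 3 h with hlarge | hsmall
    · exact (hb.one_add_sum_levelCount_le_add_two hk hsq hlarge).trans (by omega)
    · exact hb.one_add_sum_levelCount_le_targetSize hsmall

theorem max_size_of_kNice_large (k : ℕ) (hk : 385 ≤ k) :
    (∀ Q : Set (ℤ × ℤ), IsKNice k Q → Q.Finite ∧ Q.ncard ≤ targetSize k) ∧
    (∃ Q : Set (ℤ × ℤ), IsKNice k Q ∧ Q.Finite ∧ Q.ncard = targetSize k) := by
  obtain ⟨a, b, c, hnice, hcard⟩ := exists_isKNice_lowSet hk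
  exact ⟨fun Q hQ => ⟨hQ.finite, hQ.ncard_le_targetSize hk⟩, lowSet a b c, hnice,
    Finset.finite_toSet _, (Set.ncard_coe_finset _).trans hcard⟩
end

section
/- Let k ∈ ℕ and let Q be an inclusion-wise maximal k-nice y-non-negative subset of ℤ². If (m,n) ∈ ℤ² lies in the convex hull of Q (viewed as a subset of ℝ²) and the integers m and n are coprime, then (m,n) ∈ Q. -/
/-!
It suffices to show that `Q ∪ {p}` is still `k`-nice and y-non-negative for every coprime integer
point `p` of the hull of `Q`. For `q ∈ Q` the function `x ↦ |det (x, q)|` is convex, so its bound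
`k` on `Q` persists on the hull, and so does non-negativity of the second coordinate. If `-p` were
in `Q`, then `p` and `-p` would both lie on the x-axis. As `Q` lies in the upper half-plane, `p` is
then in the hull of the points of `Q` on the x-axis; but `-p` is the only such point, so `p = -p`.
-/

section Convex

variable {𝕜 E β : Type*} [Field 𝕜] [LinearOrder 𝕜] [IsStrictOrderedRing 𝕜]
  [AddCommGroup E] [Module 𝕜 E] [AddCommGroup β] [PartialOrder β] [IsOrderedAddMonoid β]
  [Module 𝕜 β] [IsStrictOrderedModule 𝕜 β] {s D : Set E} {f : E → β} {c : β} {x : E}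

theorem mem_convexHull_setOf_eq_of_concaveOn (hf : ConcaveOn 𝕜 D f) (hsD : s ⊆ D)
    (hc : ∀ y ∈ s, c ≤ f y) (hx : x ∈ convexHull 𝕜 s) (hfx : f x = c) :
    x ∈ convexHull 𝕜 {y ∈ s | f y = c} := by
  classical
  rw [convexHull_eq] at hx
  obtain ⟨ι, t, w, z, hw₀, hw₁, hz, rfl⟩ := hx
  have hterm : ∀ i ∈ t, 0 ≤ w i • (f (z i) - c) := fun i hi =>
    smul_nonneg (hw₀ i hi) (sub_nonneg.2 (hc _ (hz i hi)))
  have hjensen : ∑ i ∈ t, w i • f (z i) ≤ c := by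
    rw [← hfx, t.centerMass_eq_of_sum_1 z hw₁]
    exact hf.le_map_sum hw₀ hw₁ fun i hi => hsD (hz i hi)
  have hsum : ∑ i ∈ t, w i • (f (z i) - c) = 0 := by
    refine le_antisymm ?_ (Finset.sum_nonneg hterm)
    simpa only [smul_sub, Finset.sum_sub_distrib, ← Finset.sum_smul, hw₁, one_smul, sub_nonpos]
      using hjensen
  rw [← t.centerMass_filter_ne_zero]
  refine Finset.centerMass_mem_convexHull _ (fun i hi => hw₀ i (Finset.mem_of_mem_filter i hi))
    (by rw [Finset.sum_filter_ne_zero, hw₁]; exact one_pos) fun i hi => ?_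
  obtain ⟨hit, hwi⟩ := Finset.mem_filter.1 hi
  have hzi : w i • (f (z i) - c) = 0 := (Finset.sum_eq_zero_iff_of_nonneg hterm).1 hsum i hit
  exact ⟨hz i hit, sub_eq_zero.1 ((smul_eq_zero.1 hzi).resolve_left hwi)⟩

end Convex

section LatticePoints

/-- The inclusion `ℤ² ⊆ ℝ²`, used to speak of integer points in the hull of a set of integer
points. -/
def toPlane (p : ℤ × ℤ) : ℝ × ℝ := (p.1, p.2)

theorem toPlane_injective : Function.Injective toPlane :=
  Int.cast_injective.prodMap Int.cast_injective

variable {k : ℕ} {Q : Set (ℤ × ℤ)} {p q : ℤ × ℤ}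

theorem abs_det_le_of_toPlane_mem_convexHull {c : ℤ}
    (hQ : ∀ r ∈ Q, |r.1 * q.2 - q.1 * r.2| ≤ c)
    (hp : toPlane p ∈ convexHull ℝ (toPlane '' Q)) : |p.1 * q.2 - q.1 * p.2| ≤ c := by
  let detWith : ℝ × ℝ →ₗ[ℝ] ℝ :=
    (q.2 : ℝ) • LinearMap.fst ℝ ℝ ℝ - (q.1 : ℝ) • LinearMap.snd ℝ ℝ ℝ
  have detWith_toPlane (r : ℤ × ℤ) :
      ‖detWith (toPlane r)‖ = (|r.1 * q.2 - q.1 * r.2| : ℤ) := by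
    simp [detWith, toPlane, mul_comm]
  obtain ⟨_, ⟨r, hr, rfl⟩, hle⟩ :=
    (convexOn_univ_norm.comp_linearMap detWith).exists_ge_of_mem_convexHull
      (Set.subset_univ _) hp
  simp only [Function.comp_apply, detWith_toPlane, Int.cast_le] at hle
  exact hle.trans (hQ r hr)

namespace YNonneg

theorem snd_nonneg_of_toPlane_mem_convexHull (hy : YNonneg Q)
    (hp : toPlane p ∈ convexHull ℝ (toPlane '' Q)) : 0 ≤ p.2 := by
  obtain ⟨_, ⟨r, hr, rfl⟩, hle⟩ :=
    ((LinearMap.snd ℝ ℝ ℝ).concaveOn convex_univ).exists_le_of_mem_convexHull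
      (Set.subset_univ _) hp
  exact (hy r hr).trans (Int.cast_le.1 hle)

theorem toPlane_mem_convexHull_of_snd_eq_zero (hy : YNonneg Q)
    (hp : toPlane p ∈ convexHull ℝ (toPlane '' Q)) (hp₀ : p.2 = 0) :
    toPlane p ∈ convexHull ℝ (toPlane '' {r ∈ Q | r.2 = 0}) := by
  have hface := mem_convexHull_setOf_eq_of_concaveOn (c := 0)
    ((LinearMap.snd ℝ ℝ ℝ).concaveOn convex_univ) (Set.subset_univ _)
    (Set.forall_mem_image.2 fun r hr => Int.cast_nonneg (hy r hr)) hp (by simp [toPlane, hp₀])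
  refine convexHull_mono ?_ hface
  rintro _ ⟨⟨r, hr, rfl⟩, hr₀⟩
  exact ⟨r, ⟨hr, Int.cast_eq_zero.1 hr₀⟩, rfl⟩

protected theorem insert (hy : YNonneg Q) (hp : 0 ≤ p.2) : YNonneg (insert p Q) :=
  Set.forall_mem_insert.2 ⟨hp, hy⟩

end YNonneg

namespace IsKNice

theorem eq_of_snd_eq_zero (hQ : IsKNice k Q) (hp : p ∈ Q) (hq : q ∈ Q) (hp₀ : p.2 = 0)
    (hq₀ : q.2 = 0) : p = q := by
  have hfst : p.1.natAbs = q.1.natAbs := by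
    have hpgcd := (hQ.1 p hp).2
    have hqgcd := (hQ.1 q hq).2
    rw [hp₀, Int.gcd_zero_right] at hpgcd
    rw [hq₀, Int.gcd_zero_right] at hqgcd
    rw [hpgcd, hqgcd]
  rcases Int.natAbs_eq_natAbs_iff.1 hfst with heq | hopp
  · exact Prod.ext heq (hp₀.trans hq₀.symm)
  · have hpq : p = -q := Prod.ext hopp (by simp [hp₀, hq₀])
    exact absurd (hpq ▸ hp) (hQ.2.1 q hq)

theorem eq_of_toPlane_mem_convexHull_of_snd_eq_zero (hQ : IsKNice k Q) (hy : YNonneg Q)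
    (hp : toPlane p ∈ convexHull ℝ (toPlane '' Q)) (hq : q ∈ Q) (hp₀ : p.2 = 0) (hq₀ : q.2 = 0) :
    p = q := by
  have haxis : toPlane '' {r ∈ Q | r.2 = 0} ⊆ {toPlane q} := by
    rintro _ ⟨r, ⟨hr, hr₀⟩, rfl⟩
    exact congrArg toPlane (hQ.eq_of_snd_eq_zero hr hq hr₀ hq₀)
  exact toPlane_injective <| convexHull_min haxis (convex_singleton _)
    (hy.toPlane_mem_convexHull_of_snd_eq_zero hp hp₀)

theorem neg_notMem_of_toPlane_mem_convexHull (hQ : IsKNice k Q) (hy : YNonneg Q)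
    (hp : toPlane p ∈ convexHull ℝ (toPlane '' Q)) : -p ∉ Q := by
  intro hneg
  have hp₀ : p.2 = 0 :=
    le_antisymm (neg_nonneg.1 (hy _ hneg)) (hy.snd_nonneg_of_toPlane_mem_convexHull hp)
  have hpneg : p = -p :=
    hQ.eq_of_toPlane_mem_convexHull_of_snd_eq_zero hy hp hneg hp₀ (neg_eq_zero.2 hp₀)
  have hpQ : p ∈ Q := hpneg ▸ hneg
  exact hQ.2.1 p hpQ hneg

protected theorem insert (hQ : IsKNice k Q) (hcop : Int.gcd p.1 p.2 = 1) (hneg : -p ∉ Q)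
    (hdet : ∀ q ∈ Q, |p.1 * q.2 - q.1 * p.2| ≤ k) : IsKNice k (insert p Q) := by
  have hp₀ : p ≠ 0 := by
    rintro rfl
    simp at hcop
  refine ⟨Set.forall_mem_insert.2 ⟨⟨hp₀, hcop⟩, hQ.1⟩, ?_, ?_⟩
  · rintro r (rfl | hr) (hrp | hrQ)
    · exact hp₀ (self_eq_neg.1 hrp.symm)
    · exact hneg hrQ
    · exact hneg (by rwa [← hrp, neg_neg])
    · exact hQ.2.1 r hr hrQ
  · rintro r (rfl | hr) q (rfl | hq)
    · simp
    · exact hdet q hq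
    · rw [abs_sub_comm]
      exact hdet r hr
    · exact hQ.2.2 r hr q hq

end IsKNice

end LatticePoints

theorem maximal_kNice_contains_coprime_hull_points (k : ℕ) (Q : Set (ℤ × ℤ))
    (hQ : IsKNice k Q) (hy : YNonneg Q)
    (hmax : ∀ Q' : Set (ℤ × ℤ), Q ⊆ Q' → IsKNice k Q' → YNonneg Q' → Q' = Q)
    (m n : ℤ) (hco : Int.gcd m n = 1)
    (hhull : ((m : ℝ), (n : ℝ)) ∈
      convexHull ℝ ((fun p : ℤ × ℤ => ((p.1 : ℝ), (p.2 : ℝ))) '' Q)) :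
    (m, n) ∈ Q := by
  have hp : toPlane (m, n) ∈ convexHull ℝ (toPlane '' Q) := hhull
  have hdet : ∀ q ∈ Q, |m * q.2 - q.1 * n| ≤ k := fun q hq =>
    abs_det_le_of_toPlane_mem_convexHull (fun r hr => hQ.2.2 r hr q hq) hp
  have hnice : IsKNice k (insert (m, n) Q) :=
    hQ.insert hco (hQ.neg_notMem_of_toPlane_mem_convexHull hy hp) hdet
  have hnonneg : YNonneg (insert (m, n) Q) :=
    hy.insert (hy.snd_nonneg_of_toPlane_mem_convexHull hp)
  exact Set.insert_eq_self.1 (hmax _ (Set.subset_insert _ _) hnice hnonneg)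
end

section
/- Let k ∈ ℕ. If S ⊆ ℝ² is a convex set such that y ≥ 0 for every (x,y) ∈ S, and |xy' - yx'| ≤ k for all (x,y), (x',y') ∈ S, then the Lebesgue measure (area) of S is at most πk/2. -/
/-!
In the coordinates `x = s y` the area of `S` is `∫ F`, where `F s` is the integral of `y` over the
points of `S` on the ray `x = s y`. The determinant of the points with coordinates `(s, y)` and
`(t, z)` is `(s - t) y z`, so the hypothesis gives `F s * F t * (s - t) ^ 2 ≤ (k / 2) ^ 2`.

It remains to see that `F s * F t * (s - t) ^ 2 ≤ K ^ 2` forces `∫ F ≤ K π` when `∫ F` is finite.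
Fix `c` and substitute `s = c + exp u`, `t = c - exp (-v)`. Then the product of the two integrands
is at most the square of `K exp w / (1 + exp (2 w))` at the midpoint `w = (u + v) / 2`, and the
Prékopa–Leindler inequality bounds the product of the integrals of `F` over the two half-lines
by `(K π / 2) ^ 2`. Choosing `c` to be a median of `F` finishes the proof. Finiteness of `∫ F` is
achieved by exhausting the closure of `S` by compact sets.
-/

open MeasureTheory Set Filter
open scoped ENNReal NNReal Pointwise Topology

theorem volume_add_volume_le_of_isCompact {A B : Set ℝ} (hA : IsCompact A) (hB : IsCompact B)
    (hA' : A.Nonempty) (hB' : B.Nonempty) : volume A + volume B ≤ volume (A + B) := by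
  obtain ⟨a, ha, haA⟩ := hA.exists_isGreatest hA'
  obtain ⟨b, hb, hbB⟩ := hB.exists_isLeast hB'
  -- The two translates lie in `A + B` and meet only in the point `max A + min B`.
  have inter_subset : (b +ᵥ A) ∩ (a +ᵥ B) ⊆ {a + b} := by
    rintro _ ⟨⟨x, hx, rfl⟩, ⟨y, hy, hxy⟩⟩
    simp only [vadd_eq_add, mem_singleton_iff] at hxy ⊢
    linarith [haA hx, hbB hy]
  have union_subset : (b +ᵥ A) ∪ (a +ᵥ B) ⊆ A + B := by
    rintro _ (⟨x, hx, rfl⟩ | ⟨y, hy, rfl⟩)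
    · exact ⟨x, hx, b, hb, add_comm x b⟩
    · exact ⟨a, ha, y, hy, rfl⟩
  calc volume A + volume B
      = volume (b +ᵥ A) + volume (a +ᵥ B) := by simp only [measure_vadd]
    _ = volume ((b +ᵥ A) ∪ (a +ᵥ B)) :=
        (measure_union₀ (hB.vadd a).measurableSet.nullMeasurableSet
          (measure_mono_null inter_subset (measure_singleton _))).symm
    _ ≤ volume (A + B) := measure_mono union_subset

theorem volume_add_volume_le_volume_add {A B : Set ℝ} (hA : MeasurableSet A)
    (hB : MeasurableSet B) (hA' : A.Nonempty) (hB' : B.Nonempty) :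
    volume A + volume B ≤ volume (A + B) := by
  obtain ⟨a, ha⟩ := hA'
  obtain ⟨b, hb⟩ := hB'
  rw [hA.measure_eq_iSup_isCompact volume, hB.measure_eq_iSup_isCompact volume]
  simp only [iSup_and']
  refine ENNReal.biSup_add_biSup_le' ⟨∅, empty_subset A, isCompact_empty⟩
    ⟨∅, empty_subset B, isCompact_empty⟩ fun K hK L hL ↦ ?_
  calc volume K + volume L
      ≤ volume (insert a K) + volume (insert b L) := by gcongr <;> exact subset_insert _ _
    _ ≤ volume (insert a K + insert b L) :=
        volume_add_volume_le_of_isCompact (hK.2.insert a) (hL.2.insert b)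
          (insert_nonempty a K) (insert_nonempty b L)
    _ ≤ volume (A + B) :=
        measure_mono (add_subset_add (insert_subset ha hK.1) (insert_subset hb hL.1))

theorem mul_volume_add_mul_volume_le {p q : ℝ} (hp : 0 ≤ p) (hq : 0 ≤ q) {A B : Set ℝ}
    (hA : MeasurableSet A) (hB : MeasurableSet B) (hA' : A.Nonempty) (hB' : B.Nonempty) :
    ENNReal.ofReal p * volume A + ENNReal.ofReal q * volume B ≤ volume (p • A + q • B) := by
  simpa only [Measure.addHaar_smul, Module.finrank_self, pow_one, abs_of_nonneg hp,
    abs_of_nonneg hq] using volume_add_volume_le_volume_add (hA.const_smul₀ p)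
      (hB.const_smul₀ q) (hA'.smul_set (a := p)) (hB'.smul_set (a := q))

theorem volume_Ioi_inter_ofReal_lt (c : ℝ≥0∞) :
    volume (Ioi (0 : ℝ) ∩ {t | ENNReal.ofReal t < c}) = c := by
  induction c with
  | top => simp
  | coe c =>
    have : Ioi (0 : ℝ) ∩ {t | ENNReal.ofReal t < c} = Ioo 0 (c : ℝ) := by
      ext t
      simp +contextual [ENNReal.ofReal_lt_coe_iff, le_of_lt]
    simp [this]

theorem lintegral_eq_lintegral_Ioi_measure_lt {α : Type*} [MeasurableSpace α] (μ : Measure α)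
    [SFinite μ] {f : α → ℝ≥0∞} (hf : Measurable f) :
    ∫⁻ x, f x ∂μ = ∫⁻ t in Ioi (0 : ℝ), μ {x | ENNReal.ofReal t < f x} := by
  have hm : MeasurableSet {z : α × ℝ | ENNReal.ofReal z.2 < f z.1} :=
    measurableSet_lt (by fun_prop) (by fun_prop)
  calc ∫⁻ x, f x ∂μ
      = ∫⁻ x, volume.restrict (Ioi (0 : ℝ)) {t | ENNReal.ofReal t < f x} ∂μ := by
        refine lintegral_congr fun x ↦ ?_
        rw [Measure.restrict_apply (measurableSet_lt (by fun_prop) measurable_const), inter_comm,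
          volume_Ioi_inter_ofReal_lt]
    _ = ∫⁻ t in Ioi (0 : ℝ), μ {x | ENNReal.ofReal t < f x} :=
        (Measure.prod_apply hm).symm.trans (Measure.prod_apply_symm hm)

theorem rpow_mul_rpow_le_add {p q : ℝ} (hp : 0 < p) (hq : 0 < q) (hpq : p + q = 1)
    (a b : ℝ≥0∞) : a ^ p * b ^ q ≤ ENNReal.ofReal p * a + ENNReal.ofReal q * b := by
  have conj : p⁻¹.HolderConjugate q⁻¹ :=
    Real.holderConjugate_iff.2 ⟨(one_lt_inv₀ hp).2 (by linarith), by simpa only [inv_inv]⟩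
  have := ENNReal.young_inequality (a ^ p) (b ^ q) conj
  simpa [ENNReal.rpow_rpow_inv hp.ne', ENNReal.rpow_rpow_inv hq.ne',
    ENNReal.ofReal_inv_of_pos, hp, hq, div_eq_mul_inv, mul_comm] using this

section PrekopaLeindler
variable {p q : ℝ} {f g h : ℝ → ℝ≥0∞}

-- Equal suprema make the superlevel sets of `f` and `g` nonempty at the same levels, so that the
-- Brunn–Minkowski inequality applies level by level.
theorem mul_lintegral_add_mul_lintegral_le_of_iSup_eq_one (hp : 0 < p) (hq : 0 < q)
    (hpq : p + q = 1) (hf : Measurable f) (hg : Measurable g) (hh : Measurable h)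
    (hf1 : ⨆ x, f x = 1) (hg1 : ⨆ x, g x = 1)
    (hfg : ∀ x y, f x ^ p * g y ^ q ≤ h (p * x + q * y)) :
    ENNReal.ofReal p * (∫⁻ x, f x) + ENNReal.ofReal q * (∫⁻ x, g x) ≤ ∫⁻ x, h x := by
  have level_le (t : ℝ) : ENNReal.ofReal p * volume {x | ENNReal.ofReal t < f x} +
      ENNReal.ofReal q * volume {x | ENNReal.ofReal t < g x} ≤
        volume {x | ENNReal.ofReal t < h x} := by
    rcases le_or_gt 1 (ENNReal.ofReal t) with ht | ht
    · have hft (x : ℝ) : ¬ ENNReal.ofReal t < f x :=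
        not_lt.2 ((le_iSup f x).trans (hf1.trans_le ht))
      have hgt (x : ℝ) : ¬ ENNReal.ofReal t < g x :=
        not_lt.2 ((le_iSup g x).trans (hg1.trans_le ht))
      simp [hft, hgt]
    refine (mul_volume_add_mul_volume_le hp.le hq.le (measurableSet_lt measurable_const hf)
      (measurableSet_lt measurable_const hg) (lt_iSup_iff.1 (ht.trans_eq hf1.symm))
      (lt_iSup_iff.1 (ht.trans_eq hg1.symm))).trans (measure_mono ?_)
    rintro _ ⟨_, ⟨x, hx, rfl⟩, _, ⟨y, hy, rfl⟩, rfl⟩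
    calc ENNReal.ofReal t = ENNReal.ofReal t ^ p * ENNReal.ofReal t ^ q := by
          rw [← ENNReal.rpow_add_of_nonneg _ _ hp.le hq.le, hpq, ENNReal.rpow_one]
      _ < f x ^ p * g y ^ q :=
          ENNReal.mul_lt_mul (ENNReal.rpow_lt_rpow hx hp) (ENNReal.rpow_lt_rpow hy hq)
      _ ≤ h (p * x + q * y) := hfg x y
  have measurable_level (f : ℝ → ℝ≥0∞) :
      Measurable fun t : ℝ ↦ volume {x | ENNReal.ofReal t < f x} := by
    refine Antitone.measurable fun s t hst ↦ measure_mono fun x hx ↦ ?_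
    exact (ENNReal.ofReal_le_ofReal hst).trans_lt hx
  rw [lintegral_eq_lintegral_Ioi_measure_lt volume hf,
    lintegral_eq_lintegral_Ioi_measure_lt volume hg,
    lintegral_eq_lintegral_Ioi_measure_lt volume hh,
    ← lintegral_const_mul _ (measurable_level f), ← lintegral_const_mul _ (measurable_level g),
    ← lintegral_add_left ((measurable_level f).const_mul _)]
  exact lintegral_mono level_le

theorem lintegral_rpow_mul_lintegral_rpow_le_of_iSup_ne_top (hp : 0 < p) (hq : 0 < q)
    (hpq : p + q = 1) (hf : Measurable f) (hg : Measurable g) (hh : Measurable h)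
    (hf' : ⨆ x, f x ≠ ∞) (hg' : ⨆ x, g x ≠ ∞)
    (hfg : ∀ x y, f x ^ p * g y ^ q ≤ h (p * x + q * y)) :
    (∫⁻ x, f x) ^ p * (∫⁻ x, g x) ^ q ≤ ∫⁻ x, h x := by
  set F := ⨆ x, f x
  set G := ⨆ x, g x
  rcases eq_or_ne F 0 with hF0 | hF0
  · have (x : ℝ) : f x = 0 := le_zero_iff.1 ((le_iSup f x).trans_eq hF0)
    simp [this, hp]
  rcases eq_or_ne G 0 with hG0 | hG0
  · have (x : ℝ) : g x = 0 := le_zero_iff.1 ((le_iSup g x).trans_eq hG0)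
    simp [this, hq]
  have scaled := mul_lintegral_add_mul_lintegral_le_of_iSup_eq_one hp hq hpq
    (f := fun x ↦ F⁻¹ * f x) (g := fun x ↦ G⁻¹ * g x) (h := fun x ↦ (F⁻¹ ^ p * G⁻¹ ^ q) * h x)
    (hf.const_mul _) (hg.const_mul _) (hh.const_mul _)
    (by rw [← ENNReal.mul_iSup, ENNReal.inv_mul_cancel hF0 hf'])
    (by rw [← ENNReal.mul_iSup, ENNReal.inv_mul_cancel hG0 hg'])
    (fun x y ↦ by
      rw [ENNReal.mul_rpow_of_nonneg _ _ hp.le, ENNReal.mul_rpow_of_nonneg _ _ hq.le,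
        mul_mul_mul_comm]
      gcongr
      exact hfg x y)
  rw [lintegral_const_mul _ hf, lintegral_const_mul _ hg, lintegral_const_mul _ hh] at scaled
  have key := (rpow_mul_rpow_le_add hp hq hpq _ _).trans scaled
  rw [ENNReal.mul_rpow_of_nonneg _ _ hp.le, ENNReal.mul_rpow_of_nonneg _ _ hq.le,
    mul_mul_mul_comm] at key
  have inv_rpow_ne_zero {a : ℝ≥0∞} (ha : a ≠ ∞) {r : ℝ} (hr : 0 < r) : a⁻¹ ^ r ≠ 0 := by
    simp [ha, hr.not_gt]
  have inv_rpow_ne_top {a : ℝ≥0∞} (ha : a ≠ 0) {r : ℝ} (hr : 0 < r) : a⁻¹ ^ r ≠ ∞ :=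
    ENNReal.rpow_ne_top_of_nonneg hr.le (ENNReal.inv_ne_top.2 ha)
  exact (ENNReal.mul_le_mul_iff_right
    (mul_ne_zero (inv_rpow_ne_zero hf' hp) (inv_rpow_ne_zero hg' hq))
    (ENNReal.mul_ne_top (inv_rpow_ne_top hF0 hp) (inv_rpow_ne_top hG0 hq))).1 key

theorem exists_simpleFunc_lt_lintegral {α : Type*} [MeasurableSpace α] {μ : Measure α}
    {f : α → ℝ≥0∞} {a : ℝ≥0∞} (ha : a < ∫⁻ x, f x ∂μ) :
    ∃ φ : SimpleFunc α ℝ≥0, (∀ x, ↑(φ x) ≤ f x) ∧ a < ∫⁻ x, φ x ∂μ := by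
  rw [lintegral_eq_nnreal] at ha
  simpa only [lt_iSup_iff, exists_prop, ← SimpleFunc.lintegral_eq_lintegral,
    SimpleFunc.map_apply] using ha

theorem iSup_coe_simpleFunc_ne_top {α : Type*} [MeasurableSpace α] (φ : SimpleFunc α ℝ≥0) :
    ⨆ x, (φ x : ℝ≥0∞) ≠ ∞ :=
  (ENNReal.iSup_coe_lt_top.2 φ.finite_range.bddAbove).ne

theorem prekopa_leindler (hp : 0 < p) (hq : 0 < q) (hpq : p + q = 1) (hh : Measurable h)
    (hfg : ∀ x y, f x ^ p * g y ^ q ≤ h (p * x + q * y)) :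
    (∫⁻ x, f x) ^ p * (∫⁻ x, g x) ^ q ≤ ∫⁻ x, h x := by
  refine ENNReal.mul_le_of_forall_lt fun a ha b hb ↦ ?_
  obtain ⟨φ, hφf, haφ⟩ := exists_simpleFunc_lt_lintegral ((ENNReal.rpow_inv_lt_iff hp).2 ha)
  obtain ⟨ψ, hψg, hbψ⟩ := exists_simpleFunc_lt_lintegral ((ENNReal.rpow_inv_lt_iff hq).2 hb)
  calc a * b ≤ (∫⁻ x, φ x) ^ p * (∫⁻ x, ψ x) ^ q :=
        mul_le_mul' ((ENNReal.rpow_inv_lt_iff hp).1 haφ).le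
          ((ENNReal.rpow_inv_lt_iff hq).1 hbψ).le
    _ ≤ ∫⁻ x, h x :=
        lintegral_rpow_mul_lintegral_rpow_le_of_iSup_ne_top hp hq hpq
          φ.measurable.coe_nnreal_ennreal ψ.measurable.coe_nnreal_ennreal hh
          (iSup_coe_simpleFunc_ne_top φ) (iSup_coe_simpleFunc_ne_top ψ) fun x y ↦
            (mul_le_mul' (ENNReal.rpow_le_rpow (hφf x) hp.le)
              (ENNReal.rpow_le_rpow (hψg y) hq.le)).trans (hfg x y)

end PrekopaLeindler

theorem lintegral_mul_lintegral_le_sq_of_midpoint {f g h : ℝ → ℝ≥0∞} (hh : Measurable h)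
    (hfg : ∀ x y, f x * g y ≤ h ((x + y) / 2) ^ 2) :
    (∫⁻ x, f x) * (∫⁻ x, g x) ≤ (∫⁻ x, h x) ^ 2 := by
  have sqrt_mul_sqrt_le_iff (a b c : ℝ≥0∞) :
      a ^ (1 / 2 : ℝ) * b ^ (1 / 2 : ℝ) ≤ c ↔ a * b ≤ c ^ 2 := by
    rw [← ENNReal.mul_rpow_of_nonneg _ _ (by norm_num), one_div, ENNReal.rpow_inv_le_iff two_pos,
      ENNReal.rpow_two]
  refine (sqrt_mul_sqrt_le_iff _ _ _).1
    (prekopa_leindler one_half_pos one_half_pos (add_halves 1) hh fun x y ↦ ?_)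
  rw [sqrt_mul_sqrt_le_iff, ← mul_add, one_div_mul_eq_div]
  exact hfg x y

theorem lintegral_Ioi_eq_lintegral_exp (c : ℝ) (F : ℝ → ℝ≥0∞) :
    ∫⁻ x in Ioi c, F x = ∫⁻ u, ENNReal.ofReal (Real.exp u) * F (c + Real.exp u) := by
  have image_eq : (fun u ↦ c + Real.exp u) '' univ = Ioi c := by
    rw [image_univ, ← Function.comp_def (c + ·) Real.exp, range_comp, Real.range_exp]
    simp
  rw [← image_eq, lintegral_image_eq_lintegral_abs_deriv_mul MeasurableSet.univ
    (fun u _ ↦ ((Real.hasDerivAt_exp u).const_add c).hasDerivWithinAt)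
    ((add_right_injective c).comp Real.exp_injective).injOn]
  simp only [Real.abs_exp, Measure.restrict_univ]

theorem lintegral_Iio_eq_lintegral_exp (c : ℝ) (F : ℝ → ℝ≥0∞) :
    ∫⁻ x in Iio c, F x = ∫⁻ u, ENNReal.ofReal (Real.exp (-u)) * F (c - Real.exp (-u)) := by
  have image_eq : (fun u ↦ c - Real.exp (-u)) '' univ = Iio c := by
    ext x
    refine ⟨?_, fun hx ↦ ⟨-Real.log (c - x), trivial, ?_⟩⟩
    · rintro ⟨u, -, rfl⟩
      exact sub_lt_self c (Real.exp_pos _)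
    · simp [Real.exp_log (sub_pos.2 hx)]
  rw [← image_eq, lintegral_image_eq_lintegral_abs_deriv_mul MeasurableSet.univ
    (fun u _ ↦ ((hasDerivAt_neg u).exp.const_sub c).hasDerivWithinAt)
    (((sub_right_injective (b := c)).comp Real.exp_injective).comp neg_injective).injOn]
  simp

theorem lintegral_ofReal_exp_div_one_add_exp_sq :
    ∫⁻ u, ENNReal.ofReal (Real.exp u / (1 + Real.exp u ^ 2)) = ENNReal.ofReal (Real.pi / 2) := by
  calc ∫⁻ u, ENNReal.ofReal (Real.exp u / (1 + Real.exp u ^ 2))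
      = ∫⁻ u, ENNReal.ofReal (Real.exp u) * ENNReal.ofReal (1 + (0 + Real.exp u) ^ 2)⁻¹ := by
        simp only [zero_add, div_eq_mul_inv, ENNReal.ofReal_mul (Real.exp_nonneg _)]
    _ = ∫⁻ x in Ioi (0 : ℝ), ENNReal.ofReal (1 + x ^ 2)⁻¹ :=
        (lintegral_Ioi_eq_lintegral_exp 0 fun x ↦ ENNReal.ofReal (1 + x ^ 2)⁻¹).symm
    _ = ENNReal.ofReal (∫ x in Ioi (0 : ℝ), (1 + x ^ 2)⁻¹) :=
        (ofReal_integral_eq_lintegral_ofReal integrable_inv_one_add_sq.integrableOn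
          (ae_of_all _ fun x ↦ by positivity)).symm
    _ = ENNReal.ofReal (Real.pi / 2) := by
        rw [integral_Ioi_inv_one_add_sq, Real.arctan_zero, sub_zero]

section Median
variable (ν : Measure ℝ) [IsFiniteMeasure ν] [NullSingletonClass ν]

theorem continuous_measureReal_Iic : Continuous fun c ↦ ν.real (Iic c) := by
  have eq_primitive (c : ℝ) :
      ν.real (Iic c) = (∫ _ in (0 : ℝ)..c, (1 : ℝ) ∂ν) + ν.real (Iic 0) := by
    rw [← intervalIntegral.integral_Iic_sub_Iic (integrable_const 1).integrableOn
      (integrable_const 1).integrableOn]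
    simp only [setIntegral_const, smul_eq_mul, mul_one, sub_add_cancel]
  exact (((integrable_const 1).continuous_primitive 0).add_const _).congr
    fun c ↦ (eq_primitive c).symm

theorem exists_measureReal_Iic_eq_half : ∃ c, ν.real (Iic c) = ν.real univ / 2 := by
  rcases (measureReal_nonneg (μ := ν) (s := univ)).eq_or_lt with h0 | hpos
  · refine ⟨0, ?_⟩
    rw [← h0, zero_div]
    exact le_antisymm ((measureReal_mono (subset_univ _)).trans h0.ge) measureReal_nonneg
  have half_lt : ν.real univ / 2 < ν.real univ := half_lt_self hpos
  have tendsto_real {s : ℝ → Set ℝ} {l : Filter ℝ}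
      (hs : Tendsto (fun c ↦ ν (s c)) l (𝓝 (ν univ))) :
      Tendsto (fun c ↦ ν.real (s c)) l (𝓝 (ν.real univ)) :=
    (ENNReal.tendsto_toReal (measure_ne_top ν univ)).comp hs
  obtain ⟨a, ha⟩ :=
    ((tendsto_real (tendsto_measure_Ici_atBot ν)).eventually_const_lt half_lt).exists
  obtain ⟨b, hb⟩ :=
    ((tendsto_real (tendsto_measure_Iic_atTop ν)).eventually_const_lt half_lt).exists
  refine mem_range_of_exists_le_of_exists_ge (continuous_measureReal_Iic ν) ⟨a, ?_⟩ ⟨b, hb.le⟩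
  have := measureReal_compl (μ := ν) (measurableSet_Ioi (a := a))
  rw [compl_Ioi, measureReal_congr Ioi_ae_eq_Ici] at this
  linarith

theorem measure_univ_le_two_mul_of_forall_mul_le_sq {M : ℝ≥0∞}
    (hM : ∀ c, ν (Ioi c) * ν (Iio c) ≤ M ^ 2) : ν univ ≤ 2 * M := by
  obtain ⟨c, hc⟩ := exists_measureReal_Iic_eq_half ν
  have Iio_eq : ν.real (Iio c) = ν.real univ / 2 := by rw [measureReal_congr Iio_ae_eq_Iic, hc]
  have Ioi_eq : ν.real (Ioi c) = ν.real univ / 2 := by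
    rw [← compl_Iic, measureReal_compl measurableSet_Iic, hc, sub_half]
  have Ioi_eq_Iio : ν (Ioi c) = ν (Iio c) :=
    (measureReal_eq_measureReal_iff).1 (Ioi_eq.trans Iio_eq.symm)
  have Iio_le : ν (Iio c) ≤ M :=
    (ENNReal.pow_le_pow_left_iff two_ne_zero).1 (by simpa only [Ioi_eq_Iio, ← sq] using hM c)
  calc ν univ = ν (Iic c) + ν (Ioi c) := by
        rw [← compl_Iic, measure_add_measure_compl measurableSet_Iic]
    _ = ν (Iio c) + ν (Iio c) := by rw [measure_congr Iio_ae_eq_Iic.symm, Ioi_eq_Iio]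
    _ ≤ 2 * M := by rw [← two_mul]; gcongr

end Median

section ProductBound
variable {F : ℝ → ℝ≥0∞} {K : ℝ≥0∞}

theorem lintegral_Ioi_mul_lintegral_Iio_le
    (hF : ∀ s t, F s * F t * ENNReal.ofReal ((s - t) ^ 2) ≤ K ^ 2) (c : ℝ) :
    (∫⁻ x in Ioi c, F x) * (∫⁻ x in Iio c, F x) ≤ (K * ENNReal.ofReal (Real.pi / 2)) ^ 2 := by
  have meas : Measurable fun u ↦ ENNReal.ofReal (Real.exp u / (1 + Real.exp u ^ 2)) := by fun_prop
  rw [lintegral_Ioi_eq_lintegral_exp, lintegral_Iio_eq_lintegral_exp,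
    ← lintegral_ofReal_exp_div_one_add_exp_sq, ← lintegral_const_mul K meas]
  refine lintegral_mul_lintegral_le_sq_of_midpoint (meas.const_mul K) fun u v ↦ ?_
  set r := Real.exp ((u + v) / 2) / (1 + Real.exp ((u + v) / 2) ^ 2) with hr
  have hr0 : 0 ≤ r := by positivity
  have exp_mul_exp : Real.exp u * Real.exp (-v) = (Real.exp u + Real.exp (-v)) ^ 2 * r ^ 2 := by
    have hu : Real.exp ((u + v) / 2) ^ 2 = Real.exp u * Real.exp v := by
      rw [← Real.exp_nat_mul, ← Real.exp_add]
      congr 1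
      push_cast
      ring
    rw [hr, div_pow, hu, Real.exp_neg]
    field_simp
    ring
  calc ENNReal.ofReal (Real.exp u) * F (c + Real.exp u) *
        (ENNReal.ofReal (Real.exp (-v)) * F (c - Real.exp (-v)))
      = F (c + Real.exp u) * F (c - Real.exp (-v)) *
          ENNReal.ofReal (Real.exp u * Real.exp (-v)) := by
        rw [ENNReal.ofReal_mul (Real.exp_nonneg u)]
        ring
    _ = F (c + Real.exp u) * F (c - Real.exp (-v)) *
          ENNReal.ofReal ((c + Real.exp u - (c - Real.exp (-v))) ^ 2) *
          ENNReal.ofReal r ^ 2 := by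
        rw [exp_mul_exp, ENNReal.ofReal_mul (sq_nonneg _), ENNReal.ofReal_pow hr0, ← mul_assoc,
          show c + Real.exp u - (c - Real.exp (-v)) = Real.exp u + Real.exp (-v) by ring]
    _ ≤ K ^ 2 * ENNReal.ofReal r ^ 2 := by
        gcongr
        exact hF _ _
    _ = (K * ENNReal.ofReal r) ^ 2 := (mul_pow _ _ _).symm

theorem lintegral_le_mul_pi
    (hF : ∀ s t, F s * F t * ENNReal.ofReal ((s - t) ^ 2) ≤ K ^ 2) (hfin : ∫⁻ x, F x ≠ ∞) :
    ∫⁻ x, F x ≤ K * ENNReal.ofReal Real.pi := by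
  have : IsFiniteMeasure (volume.withDensity F) := isFiniteMeasure_withDensity hfin
  have key := measure_univ_le_two_mul_of_forall_mul_le_sq (volume.withDensity F) fun c ↦ by
    rw [withDensity_apply _ measurableSet_Ioi, withDensity_apply _ measurableSet_Iio]
    exact lintegral_Ioi_mul_lintegral_Iio_le hF c
  rw [withDensity_apply _ MeasurableSet.univ, Measure.restrict_univ] at key
  refine key.trans_eq ?_
  rw [mul_left_comm, ← ENNReal.ofReal_ofNat, ← ENNReal.ofReal_mul zero_le_two,
    mul_div_cancel₀ _ two_ne_zero]

end ProductBound

theorem lintegral_eq_ofReal_abs_mul_lintegral_comp_mul_right {y : ℝ} (hy : y ≠ 0) {g : ℝ → ℝ≥0∞}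
    (hg : Measurable g) : ∫⁻ x, g x = ENNReal.ofReal |y| * ∫⁻ s, g (s * y) := by
  conv_lhs => rw [← Real.smul_map_volume_mul_right hy, lintegral_smul_measure,
    lintegral_map hg (measurable_mul_const y), smul_eq_mul]

theorem setLIntegral_upperHalfPlane_eq {g : ℝ × ℝ → ℝ≥0∞} (hg : Measurable g) :
    ∫⁻ p in {p : ℝ × ℝ | 0 < p.2}, g p =
      ∫⁻ s, ∫⁻ y in Ioi (0 : ℝ), ENNReal.ofReal y * g (s * y, y) := by
  have halfPlane_eq : {p : ℝ × ℝ | 0 < p.2} = univ ×ˢ Ioi (0 : ℝ) := by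
    ext p
    simp
  calc ∫⁻ p in {p : ℝ × ℝ | 0 < p.2}, g p
      = ∫⁻ y in Ioi (0 : ℝ), ∫⁻ x, g (x, y) := by
        rw [halfPlane_eq, Measure.volume_eq_prod, ← Measure.prod_restrict, Measure.restrict_univ,
          lintegral_prod_symm _ hg.aemeasurable]
    _ = ∫⁻ y in Ioi (0 : ℝ), ∫⁻ s, ENNReal.ofReal y * g (s * y, y) := by
        refine setLIntegral_congr_fun measurableSet_Ioi fun y (hy : 0 < y) ↦ ?_
        rw [lintegral_eq_ofReal_abs_mul_lintegral_comp_mul_right hy.ne' (by fun_prop),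
          abs_of_pos hy, ← lintegral_const_mul _ (by fun_prop)]
    _ = ∫⁻ s, ∫⁻ y in Ioi (0 : ℝ), ENNReal.ofReal y * g (s * y, y) :=
        lintegral_lintegral_swap (by fun_prop)

/-- The heights `y > 0` of the points of `S` on the ray `x = s * y`, so that `(s, y)` are the
coordinates on the upper half-plane in which `|x y' - y x'|` becomes `y y' |s - s'|`. The ray is
parametrised by height, and `s` is the reciprocal of its usual slope. -/
def slopeFiber (S : Set (ℝ × ℝ)) (s : ℝ) : Set ℝ :=
  {y | 0 < y ∧ (s * y, y) ∈ S}

theorem volume_eq_lintegral_slopeFiber {S : Set (ℝ × ℝ)} (hS : MeasurableSet S)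
    (hy : ∀ p ∈ S, 0 ≤ p.2) :
    volume S = ∫⁻ s, ∫⁻ y in slopeFiber S s, ENNReal.ofReal y := by
  have ae_ne_zero : ∀ᵐ p : ℝ × ℝ, p.2 ≠ 0 :=
    Measure.quasiMeasurePreserving_snd.ae (Measure.ae_ne volume 0)
  calc volume S = volume (S ∩ {p | 0 < p.2}) := by
        refine measure_congr ?_
        filter_upwards [ae_ne_zero] with p hp
        exact propext ⟨fun hpS ↦ ⟨hpS, (hy p hpS).lt_of_ne' hp⟩, And.left⟩
    _ = ∫⁻ p in {p : ℝ × ℝ | 0 < p.2}, S.indicator 1 p := by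
        rw [lintegral_indicator_one hS, Measure.restrict_apply hS]
    _ = ∫⁻ s, ∫⁻ y in Ioi (0 : ℝ), ENNReal.ofReal y * S.indicator 1 (s * y, y) :=
        setLIntegral_upperHalfPlane_eq (measurable_one.indicator hS)
    _ = ∫⁻ s, ∫⁻ y in slopeFiber S s, ENNReal.ofReal y := by
        refine lintegral_congr fun s ↦ ?_
        have hm : MeasurableSet ((fun y ↦ (s * y, y)) ⁻¹' S) :=
          measurableSet_preimage (by fun_prop) hS
        rw [show slopeFiber S s = (fun y ↦ (s * y, y)) ⁻¹' S ∩ Ioi 0 from inter_comm _ _,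
          ← Measure.restrict_restrict hm, ← lintegral_indicator hm]
        refine lintegral_congr fun y ↦ ?_
        by_cases hyS : (s * y, y) ∈ S <;> simp [hyS, indicator]

theorem setLIntegral_ofReal_le_of_subset_Ioc {A : Set ℝ} {a : ℝ} (ha : 0 ≤ a) (hA : A ⊆ Ioc 0 a) :
    ∫⁻ y in A, ENNReal.ofReal y ≤ ENNReal.ofReal (a ^ 2 / 2) := by
  calc ∫⁻ y in A, ENNReal.ofReal y ≤ ∫⁻ y in Ioc 0 a, ENNReal.ofReal y := lintegral_mono_set hA
    _ = ENNReal.ofReal (∫ y in Ioc 0 a, y) :=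
        (ofReal_integral_eq_lintegral_ofReal
          ((intervalIntegrable_iff_integrableOn_Ioc_of_le ha).1
            intervalIntegral.intervalIntegrable_id)
          ((ae_restrict_iff' measurableSet_Ioc).2 (ae_of_all _ fun y hy ↦ hy.1.le))).symm
    _ = ENNReal.ofReal (a ^ 2 / 2) := by
        rw [← intervalIntegral.integral_of_le ha, integral_id, zero_pow two_ne_zero, sub_zero]

theorem setLIntegral_ofReal_mul_setLIntegral_ofReal_le {A B : Set ℝ} {r : ℝ}
    (hA : ∀ a ∈ A, 0 < a) (hB : ∀ b ∈ B, 0 < b) (hAB : ∀ a ∈ A, ∀ b ∈ B, a * b ≤ r) :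
    (∫⁻ y in A, ENNReal.ofReal y) * (∫⁻ y in B, ENNReal.ofReal y) ≤
      ENNReal.ofReal (r / 2) ^ 2 := by
  rcases A.eq_empty_or_nonempty with rfl | ⟨a₀, ha₀⟩
  · simp
  rcases B.eq_empty_or_nonempty with rfl | ⟨b₀, hb₀⟩
  · simp
  have le_div (b : ℝ) (hb : b ∈ B) : ∀ a ∈ A, a ≤ r / b := fun a ha ↦
    (le_div_iff₀ (hB b hb)).2 (hAB a ha b hb)
  set m := sSup A
  have le_m : ∀ a ∈ A, a ≤ m := fun a ha ↦ le_csSup ⟨r / b₀, le_div b₀ hb₀⟩ ha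
  have m_pos : 0 < m := (hA a₀ ha₀).trans_le (le_m a₀ ha₀)
  have le_div_m : ∀ b ∈ B, b ≤ r / m := fun b hb ↦
    (le_div_comm₀ m_pos (hB b hb)).1 (csSup_le ⟨a₀, ha₀⟩ (le_div b hb))
  have r_div_m_pos : 0 < r / m := (hB b₀ hb₀).trans_le (le_div_m b₀ hb₀)
  calc (∫⁻ y in A, ENNReal.ofReal y) * (∫⁻ y in B, ENNReal.ofReal y)
      ≤ ENNReal.ofReal (m ^ 2 / 2) * ENNReal.ofReal ((r / m) ^ 2 / 2) :=
        mul_le_mul'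
          (setLIntegral_ofReal_le_of_subset_Ioc m_pos.le fun a ha ↦ ⟨hA a ha, le_m a ha⟩)
          (setLIntegral_ofReal_le_of_subset_Ioc r_div_m_pos.le fun b hb ↦ ⟨hB b hb, le_div_m b hb⟩)
    _ = ENNReal.ofReal (r / 2) ^ 2 := by
        rw [← ENNReal.ofReal_mul (by positivity),
          ← ENNReal.ofReal_pow (by linarith [(div_pos_iff_of_pos_right m_pos).1 r_div_m_pos])]
        congr 1
        field_simp

theorem slopeFiber_moment_mul_moment_le {S : Set (ℝ × ℝ)} {k : ℝ}
    (hk : ∀ p ∈ S, ∀ q ∈ S, |p.1 * q.2 - p.2 * q.1| ≤ k) (s t : ℝ) :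
    (∫⁻ y in slopeFiber S s, ENNReal.ofReal y) * (∫⁻ y in slopeFiber S t, ENNReal.ofReal y) *
      ENNReal.ofReal ((s - t) ^ 2) ≤ ENNReal.ofReal (k / 2) ^ 2 := by
  rcases eq_or_ne s t with rfl | hst
  · simp
  have hd : 0 < |s - t| := abs_pos.2 (sub_ne_zero.2 hst)
  have mul_le (y : ℝ) (hy : y ∈ slopeFiber S s) (z : ℝ) (hz : z ∈ slopeFiber S t) :
      y * z ≤ k / |s - t| := by
    rw [le_div_iff₀ hd]
    calc y * z * |s - t| = |s * y * z - y * (t * z)| := by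
          rw [← abs_of_pos (mul_pos hy.1 hz.1), ← abs_mul]
          ring_nf
      _ ≤ k := hk _ hy.2 _ hz.2
  calc (∫⁻ y in slopeFiber S s, ENNReal.ofReal y) * (∫⁻ y in slopeFiber S t, ENNReal.ofReal y) *
        ENNReal.ofReal ((s - t) ^ 2)
      ≤ ENNReal.ofReal (k / |s - t| / 2) ^ 2 * ENNReal.ofReal |s - t| ^ 2 := by
        rw [← sq_abs, ENNReal.ofReal_pow (abs_nonneg _)]
        gcongr
        exact setLIntegral_ofReal_mul_setLIntegral_ofReal_le (fun y hy ↦ hy.1) (fun z hz ↦ hz.1)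
          mul_le
    _ = ENNReal.ofReal (k / 2) ^ 2 := by
        rw [← mul_pow, ← ENNReal.ofReal_mul' hd.le]
        congr 2
        field_simp

theorem volume_le_of_abs_det_le_of_ne_top {S : Set (ℝ × ℝ)} {k : ℝ} (hS : MeasurableSet S)
    (hfin : volume S ≠ ∞) (hy : ∀ p ∈ S, 0 ≤ p.2)
    (hk : ∀ p ∈ S, ∀ q ∈ S, |p.1 * q.2 - p.2 * q.1| ≤ k) :
    volume S ≤ ENNReal.ofReal (Real.pi * k / 2) := by
  rw [volume_eq_lintegral_slopeFiber hS hy] at hfin ⊢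
  refine (lintegral_le_mul_pi (slopeFiber_moment_mul_moment_le hk) hfin).trans_eq ?_
  rw [← ENNReal.ofReal_mul' Real.pi_nonneg]
  congr 1
  ring

theorem abs_det_le_of_mem_closure {S : Set (ℝ × ℝ)} {k : ℝ}
    (hk : ∀ p ∈ S, ∀ q ∈ S, |p.1 * q.2 - p.2 * q.1| ≤ k) :
    ∀ p ∈ closure S, ∀ q ∈ closure S, |p.1 * q.2 - p.2 * q.1| ≤ k := fun _ hp _ hq ↦
  isClosed_Iic.closure_subset (map_mem_closure₂
    (f := fun p q : ℝ × ℝ ↦ |p.1 * q.2 - p.2 * q.1|) (u := Iic k) (by fun_prop) hp hq hk)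

theorem area_le_pi_k_div_two_general (k : ℝ) (S : Set (ℝ × ℝ)) (hy : ∀ p ∈ S, 0 ≤ p.2)
    (hk : ∀ p ∈ S, ∀ q ∈ S, |p.1 * q.2 - p.2 * q.1| ≤ k) :
    volume S ≤ ENNReal.ofReal (Real.pi * k / 2) := by
  have hy' : closure S ⊆ {p | 0 ≤ p.2} :=
    closure_minimal hy (isClosed_le continuous_const continuous_snd)
  have hk' := abs_det_le_of_mem_closure hk
  calc volume S ≤ volume (closure S) := measure_mono subset_closure
    _ = ⨆ (C) (_ : C ⊆ closure S) (_ : IsCompact C), volume C :=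
        isClosed_closure.measurableSet.measure_eq_iSup_isCompact volume
    _ ≤ ENNReal.ofReal (Real.pi * k / 2) := iSup₂_le fun C hCS ↦ iSup_le fun hC ↦
        volume_le_of_abs_det_le_of_ne_top hC.measurableSet hC.measure_lt_top.ne
          (fun p hp ↦ hy' (hCS hp)) fun p hp q hq ↦ hk' p (hCS hp) q (hCS hq)

theorem area_le_pi_k_div_two (k : ℕ) (S : Set (ℝ × ℝ)) (hconv : Convex ℝ S)
    (hy : ∀ p ∈ S, 0 ≤ p.2)
    (hk : ∀ p ∈ S, ∀ q ∈ S, |p.1 * q.2 - p.2 * q.1| ≤ (k : ℝ)) :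
    MeasureTheory.volume S ≤ ENNReal.ofReal (Real.pi * k / 2) :=
  area_le_pi_k_div_two_general k S hy hk
end
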